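/- arXiv:1504.07506 — 2 statements merged into one kernel-verified Lean document; each statement's English description precedes it below -/
import Mathlib

section
/- Let G be a finite group, H a subgroup of G of index n ≥ 2, F a field of characteristic p > 0, and V an H-module of finite dimension a over F. Then for every submodule S of the induced module V↑G = F[G] ⊗_{F[H]} V, d_G(S) ≤ a·E(n,p). -/
/-- `dMod G S` is `d_G(S)`: the minimal number of elements required to generate the
(`G`-stable) submodule `S` as a `G`-module. -/
noncomputable def dMod (G : Type*) [Group G] {F W : Type*} [Field F] [AddCommGroup W]
    [Module F W] [DistribMulAction G W] (S : Submodule F W) : ℕ :=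
  sInf {m : ℕ | ∃ T : Finset W, T.card = m ∧ (T : Set W) ⊆ (S : Set W) ∧
    Submodule.span F {w : W | ∃ g : G, ∃ t ∈ T, w = g • t} = S}

/-- `lpp n` is the largest prime power dividing `n` (with `lpp 1 = 1`). -/
def lpp (n : ℕ) : ℕ :=
  max 1 (n.primeFactors.sup fun q => q ^ n.factorization q)

/-- `E(n,p) = min{⌊b·n/√((p−1)·log_p(n_p))⌋, n/lpp(n/n_p)}` with `b = √(2/π)`, the first term
of the minimum being `+∞` (i.e. omitted) when `n_p = 1`. -/
noncomputable def Efun (n p : ℕ) : ℕ :=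
  if n.factorization p = 0 then n / lpp (n / p ^ n.factorization p)
  else
    min
      ⌊Real.sqrt (2 / Real.pi) * n /
        Real.sqrt (((p : ℝ) - 1) * Real.logb p (p ^ n.factorization p))⌋₊
      (n / lpp (n / p ^ n.factorization p))


/-- The number of chains in the iterated hook decomposition of a product of one chain with `l`
elements and `m` chains with `p` elements. -/
def chainCount (p : ℕ) : ℕ → ℕ → ℕ
  | 0, _ => 1
  | m + 1, l => ∑ t ∈ Finset.range (min l p), chainCount p m (l + p - 1 - 2 * t)

/-- Convolution of a function on `ℤ` with the symmetric chain of `k` points at distance two. -/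
def chainConv (k : ℕ) (f : ℤ → ℝ) (l : ℤ) : ℝ :=
  ∑ i ∈ Finset.range k, f (l + k - 1 - 2 * i)

/-- Odd functions on `ℤ` which are nonnegative on the positive integers. -/
def IsOddNonneg (f : ℤ → ℝ) : Prop :=
  (∀ l, f (-l) = - f l) ∧ ∀ l, 0 < l → 0 ≤ f l

theorem chainConv_comm (j k : ℕ) (f : ℤ → ℝ) :
    chainConv j (chainConv k f) = chainConv k (chainConv j f) := by
  funext l
  simp only [chainConv]
  rw [Finset.sum_comm]
  refine Finset.sum_congr rfl fun i _ => Finset.sum_congr rfl fun i' _ => ?_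
  congr 1
  ring

theorem chainConv_two (f : ℤ → ℝ) (l : ℤ) : chainConv 2 f l = f (l + 1) + f (l - 1) := by
  simp only [chainConv, Finset.sum_range_succ, Finset.sum_range_zero, zero_add]
  congr 2 <;> push_cast <;> ring

theorem chainConv_two_chainConv (k : ℕ) (f : ℤ → ℝ) :
    chainConv 2 (chainConv (k + 1) f) = chainConv (k + 2) f + chainConv k f := by
  funext l
  rw [chainConv_two, Pi.add_apply]
  simp only [chainConv]
  rw [Finset.sum_range_succ _ (k + 1), Finset.sum_range_succ _ k, add_right_comm,
    Finset.sum_range_succ _ k, Finset.sum_range_succ _ k, ← sub_eq_zero]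
  push_cast
  have h1 : ∀ i : ℕ, l + 1 + ((k : ℤ) + 1) - 1 - 2 * i = l + (k + 2) - 1 - 2 * i := by
    intro i; ring
  have h2 : ∀ i : ℕ, l - 1 + ((k : ℤ) + 1) - 1 - 2 * i = l + k - 1 - 2 * i := by
    intro i; ring
  have h3 : l + ((k : ℤ) + 2) - 1 - 2 * (k + 1) = l + k - 1 - 2 * k := by ring
  simp only [h1, h2, h3]
  ring

theorem chainConv_sub (k : ℕ) (f g : ℤ → ℝ) :
    chainConv k (f - g) = chainConv k f - chainConv k g := by
  funext l; simp [chainConv]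

theorem chainConv_smul (k : ℕ) (c : ℝ) (f : ℤ → ℝ) :
    chainConv k (c • f) = c • chainConv k f := by
  funext l; simp [chainConv, Finset.mul_sum]

theorem chainConv_neg {f : ℤ → ℝ} (hf : ∀ l, f (-l) = - f l) (k : ℕ) (l : ℤ) :
    chainConv k f (-l) = - chainConv k f l := by
  simp only [chainConv]
  rw [← Finset.sum_range_reflect, ← Finset.sum_neg_distrib]
  refine Finset.sum_congr rfl fun i hi => ?_
  rw [← hf]
  congr 1
  have := Finset.mem_range.1 hi
  omega

/-- Terms cancelling in pairs do not contribute to the convolution of an odd function. -/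
theorem chainConv_swap {f : ℤ → ℝ} (hf : ∀ l, f (-l) = - f l) (k l : ℕ) :
    chainConv k f l = chainConv l f k := by
  wlog h : k ≤ l generalizing k l
  · exact (this l k (by omega)).symm
  obtain ⟨d, rfl⟩ := Nat.exists_eq_add_of_le h
  simp only [chainConv]
  rw [Finset.sum_range_add]
  have h0 : ∑ x ∈ Finset.range d, f ((k : ℤ) + ((k + d : ℕ) : ℤ) - 1 - 2 * ((k + x : ℕ) : ℤ)) = 0 := by
    have h1 : ∑ x ∈ Finset.range d, f ((k : ℤ) + ((k + d : ℕ) : ℤ) - 1 - 2 * ((k + x : ℕ) : ℤ))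
        = - ∑ x ∈ Finset.range d, f ((k : ℤ) + ((k + d : ℕ) : ℤ) - 1 - 2 * ((k + x : ℕ) : ℤ)) := by
      conv_lhs => rw [← Finset.sum_range_reflect]
      rw [← Finset.sum_neg_distrib]
      refine Finset.sum_congr rfl fun i hi => ?_
      rw [← hf]
      congr 1
      have := Finset.mem_range.1 hi
      omega
    linarith
  rw [h0, add_zero]
  refine Finset.sum_congr rfl fun i _ => ?_
  congr 1
  ring

theorem chainConv_eq_sum_min {f : ℤ → ℝ} (hf : ∀ l, f (-l) = - f l) (k l : ℕ) :
    chainConv k f l = ∑ t ∈ Finset.range (min l k), f ((l + k - 1 - 2 * t : ℕ) : ℤ) := by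
  rcases le_total l k with h | h
  · rw [chainConv_swap hf, min_eq_left h]
    refine Finset.sum_congr rfl fun i hi => ?_
    have := Finset.mem_range.1 hi
    congr 1
    omega
  · rw [min_eq_right h]
    refine Finset.sum_congr rfl fun i hi => ?_
    have := Finset.mem_range.1 hi
    congr 1
    omega

theorem IsOddNonneg.chainConv {f : ℤ → ℝ} (hf : IsOddNonneg f) (k : ℕ) :
    IsOddNonneg (chainConv k f) := by
  refine ⟨chainConv_neg hf.1 k, fun l hl => ?_⟩
  lift l to ℕ using hl.le
  rw [chainConv_eq_sum_min hf.1]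
  refine Finset.sum_nonneg fun t ht => hf.2 _ ?_
  have := Finset.mem_range.1 ht
  omega

theorem IsOddNonneg.smul {f : ℤ → ℝ} (hf : IsOddNonneg f) {c : ℝ} (hc : 0 ≤ c) :
    IsOddNonneg (c • f) :=
  ⟨fun l => by simp [hf.1], fun l hl => mul_nonneg hc (hf.2 l hl)⟩

theorem IsOddNonneg.add {f g : ℤ → ℝ} (hf : IsOddNonneg f) (hg : IsOddNonneg g) :
    IsOddNonneg (f + g) :=
  ⟨fun l => by simp [hf.1, hg.1]; ring, fun l hl => add_nonneg (hf.2 l hl) (hg.2 l hl)⟩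

/-- The sign function on `ℤ` with real values. -/
def realSign (l : ℤ) : ℝ := (l.sign : ℝ)

theorem realSign_neg (l : ℤ) : realSign (-l) = - realSign l := by
  simp [realSign]

theorem realSign_of_pos {l : ℤ} (hl : 0 < l) : realSign l = 1 := by
  simp [realSign, Int.sign_eq_one_of_pos hl]

theorem chainConv_realSign (k l : ℕ) : chainConv k realSign l = min (l : ℝ) k := by
  rw [chainConv_eq_sum_min realSign_neg, Finset.sum_congr rfl (g := fun _ => (1 : ℝ))]
  · simp
  · intro t ht
    have := Finset.mem_range.1 ht
    exact realSign_of_pos (by omega)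

theorem chainCount_eq (p m l : ℕ) (hl : 0 < l) :
    (chainCount p m l : ℝ) = (chainConv p)^[m] realSign l := by
  have hodd : ∀ m l, (chainConv p)^[m] realSign (-l) = - (chainConv p)^[m] realSign l := by
    intro m
    induction m with
    | zero => exact realSign_neg
    | succ m ih => rw [Function.iterate_succ_apply']; exact chainConv_neg ih p
  induction m generalizing l with
  | zero => simp [chainCount, realSign_of_pos (Int.natCast_pos.2 hl)]
  | succ m ih =>
    rw [Function.iterate_succ_apply', chainConv_eq_sum_min (hodd m), chainCount, Nat.cast_sum]
    refine Finset.sum_congr rfl fun t ht => ih _ ?_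
    have := Finset.mem_range.1 ht
    omega

/-- The normalised convolution with a chain of `k + 1` points. -/
noncomputable def avgConv (k : ℕ) (f : ℤ → ℝ) : ℤ → ℝ := ((k + 1 : ℕ) : ℝ)⁻¹ • chainConv (k + 1) f

theorem avgConv_sub (k : ℕ) (f g : ℤ → ℝ) : avgConv k (f - g) = avgConv k f - avgConv k g := by
  simp only [avgConv, chainConv_sub, smul_sub]

theorem avgConv_comm (j k : ℕ) : Function.Commute (avgConv j) (avgConv k) := by
  intro f
  simp only [avgConv, chainConv_smul, chainConv_comm (j + 1) (k + 1)]
  rw [smul_comm]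

theorem IsOddNonneg.avgConv {f : ℤ → ℝ} (hf : IsOddNonneg f) (k : ℕ) :
    IsOddNonneg (avgConv k f) :=
  (hf.chainConv _).smul (by positivity)

theorem isOddNonneg_iterate_avgConv_sub {f g : ℤ → ℝ} (h : IsOddNonneg (f - g)) (k m : ℕ) :
    IsOddNonneg ((avgConv k)^[m] f - (avgConv k)^[m] g) := by
  induction m with
  | zero => exact h
  | succ m ih =>
    rw [Function.iterate_succ_apply', Function.iterate_succ_apply', ← avgConv_sub]
    exact ih.avgConv k

theorem isOddNonneg_avgConv_one_sub (k : ℕ) :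
    IsOddNonneg (avgConv 1 (avgConv k realSign) - avgConv (k + 1) realSign) := by
  have hs := realSign_neg
  refine ⟨fun l => ?_, fun l hl => ?_⟩
  · simp only [avgConv, chainConv_smul, Pi.sub_apply, Pi.smul_apply, smul_eq_mul,
      chainConv_neg hs, chainConv_neg (chainConv_neg hs _)]
    ring
  · lift l to ℕ using hl.le
    simp only [avgConv, chainConv_smul, one_add_one_eq_two, chainConv_two_chainConv, Pi.sub_apply,
      Pi.smul_apply, Pi.add_apply, smul_eq_mul, chainConv_realSign, add_assoc]
    have hl' : (0 : ℝ) < l := by exact_mod_cast hl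
    have hk : (0 : ℝ) ≤ k := by positivity
    push_cast
    have key : (k : ℝ) * min (l : ℝ) (k + 2) ≤ (k + 2) * min (l : ℝ) k := by
      rcases le_total (l : ℝ) k with h | h
      · rw [min_eq_left h, min_eq_left (by linarith)]; nlinarith
      · rw [min_eq_right h]
        nlinarith [min_le_right (l : ℝ) (k + 2)]
    rw [sub_nonneg, ← mul_assoc, ← mul_inv, inv_mul_le_iff₀ (by positivity), ← mul_assoc,
      ← div_eq_mul_inv, div_mul_eq_mul_div, le_div_iff₀ (by positivity)]
    nlinarith

theorem isOddNonneg_iterate_avgConv_one_sub (k : ℕ) :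
    IsOddNonneg ((avgConv 1)^[k] realSign - avgConv k realSign) := by
  induction k with
  | zero =>
    have : avgConv 0 realSign = realSign := by funext l; simp [avgConv, chainConv]
    rw [this]
    exact ⟨by simp, by simp⟩
  | succ k ih =>
    have h := (ih.avgConv 1).add (isOddNonneg_avgConv_one_sub k)
    rw [avgConv_sub, sub_add_sub_cancel, ← Function.iterate_succ_apply' (avgConv 1)] at h
    exact h

theorem isOddNonneg_iterate_avgConv_one_mul_sub (k m : ℕ) :
    IsOddNonneg ((avgConv 1)^[k * m] realSign - (avgConv k)^[m] realSign) := by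
  induction m with
  | zero => exact ⟨by simp, by simp⟩
  | succ m ih =>
    have h1 := ih.avgConv k
    rw [avgConv_sub, ← Function.iterate_succ_apply' (avgConv k),
      ((avgConv_comm k 1).iterate_right (k * m)).eq] at h1
    have h2 := isOddNonneg_iterate_avgConv_sub (isOddNonneg_iterate_avgConv_one_sub k) 1 (k * m)
    have h := h2.add h1
    rwa [sub_add_sub_cancel, ← Function.iterate_add_apply] at h

theorem iterate_avgConv (k m : ℕ) (f : ℤ → ℝ) :
    (avgConv k)^[m] f = (((k + 1 : ℕ) : ℝ) ^ m)⁻¹ • (chainConv (k + 1))^[m] f := by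
  induction m with
  | zero => simp
  | succ m ih =>
    rw [Function.iterate_succ_apply', Function.iterate_succ_apply', ih, avgConv, chainConv_smul,
      smul_smul, pow_succ', mul_inv]

theorem iterate_chainConv_two (s : ℕ) (f : ℤ → ℝ) (l : ℤ) :
    (chainConv 2)^[s] f l = ∑ j ∈ Finset.range (s + 1), (s.choose j : ℝ) * f (l + s - 2 * j) := by
  induction s generalizing l with
  | zero => simp
  | succ s ih =>
    rw [Function.iterate_succ_apply', chainConv_two, ih, ih,
      Finset.sum_choose_succ_mul (fun j _ => f (l + (s + 1 : ℕ) - 2 * j))]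
    congr 1 <;>
    · refine Finset.sum_congr rfl fun j _ => ?_
      congr 2
      push_cast
      ring

theorem iterate_chainConv_two_realSign (s : ℕ) :
    (chainConv 2)^[s] realSign 1 = (s.choose (s / 2) : ℝ) := by
  have h1 := iterate_chainConv_two s realSign 1
  have h2 : (chainConv 2)^[s] realSign 1 =
      ∑ j ∈ Finset.range (s + 1), (s.choose j : ℝ) * realSign (1 - s + 2 * j) := by
    rw [h1, ← Finset.sum_range_reflect]
    refine Finset.sum_congr rfl fun j hj => ?_
    have hj' := Finset.mem_range.1 hj
    rw [show s + 1 - 1 - j = s - j by omega, Nat.choose_symm (by omega)]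
    congr 2
    omega
  have h3 : 2 * (chainConv 2)^[s] realSign 1 = ∑ j ∈ Finset.range (s + 1),
      (s.choose j : ℝ) * (realSign (1 + s - 2 * j) + realSign (1 - s + 2 * j)) := by
    simp only [mul_add, Finset.sum_add_distrib, ← h1, ← h2]
    ring
  have h4 : ∀ j : ℕ, 2 * j + 1 < s ∨ s + 1 < 2 * j →
      realSign (1 + s - 2 * j) + realSign (1 - s + 2 * j) = 0 := by
    rintro j (h | h)
    · rw [realSign_of_pos (by omega), ← neg_neg (1 - (s : ℤ) + 2 * j), realSign_neg,
        realSign_of_pos (by omega)]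
      ring
    · rw [realSign_of_pos (l := 1 - (s : ℤ) + 2 * j) (by omega),
        ← neg_neg (1 + (s : ℤ) - 2 * j), realSign_neg, realSign_of_pos (by omega)]
      ring
  have hs0 : realSign 0 = 0 := by simp [realSign]
  obtain ⟨r, rfl | rfl⟩ := Nat.even_or_odd' s
  · rw [Finset.sum_eq_single r] at h3
    · rw [realSign_of_pos (by omega), realSign_of_pos (by omega)] at h3
      rw [Nat.mul_div_cancel_left r two_pos]
      linarith
    · intro j _ hj
      rw [h4 j (by omega), mul_zero]
    · intro h
      exact absurd (Finset.mem_range.2 (by omega)) h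
  · rw [Finset.sum_eq_add r (r + 1) (by omega)] at h3
    · rw [realSign_of_pos (by push_cast; omega),
        show (1 : ℤ) - (2 * r + 1 : ℕ) + 2 * r = 0 by push_cast; ring, hs0,
        show (1 : ℤ) + (2 * r + 1 : ℕ) - 2 * (r + 1 : ℕ) = 0 by push_cast; ring, hs0,
        realSign_of_pos (by push_cast; omega), Nat.choose_symm_half] at h3
      rw [show (2 * r + 1) / 2 = r by omega]
      linarith
    · intro j _ hj
      rw [h4 j (by omega), mul_zero]
    · intro h
      exact absurd (Finset.mem_range.2 (by omega)) h
    · intro h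
      exact absurd (Finset.mem_range.2 (by omega)) h

theorem centralBinom_le_div_sqrt (n : ℕ) (hn : 0 < n) :
    (n.centralBinom : ℝ) ≤ 4 ^ n / √(Real.pi * n) := by
  have hW := Real.Wallis.le_W n
  have hn' : (0 : ℝ) < n := by exact_mod_cast hn
  have hpi := Real.pi_pos
  have hc : (n.centralBinom : ℝ) * (n.factorial : ℝ) ^ 2 = ((2 * n).factorial : ℝ) := by
    have := Nat.choose_mul_factorial_mul_factorial (n := 2 * n) (k := n) (by omega)
    rw [show 2 * n - n = n by omega] at this
    rw [Nat.centralBinom, ← this]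
    push_cast
    ring
  have hf : (0 : ℝ) < (n.factorial : ℝ) := by positivity
  have hb : (0 : ℝ) < n.centralBinom := by exact_mod_cast n.centralBinom_pos
  have hWeq : Real.Wallis.W n * ((n.centralBinom : ℝ) ^ 2 * (2 * n + 1)) = (4 ^ n) ^ 2 := by
    rw [Real.Wallis.W_eq_factorial_ratio, ← hc, show (4 : ℝ) = 2 ^ 2 by norm_num, ← pow_mul,
      ← pow_mul, show 2 * (n * 2) = 4 * n by ring]
    field_simp
  rw [le_div_iff₀ (by positivity)]
  refine le_of_sq_le_sq ?_ (by positivity)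
  rw [mul_pow, Real.sq_sqrt (by positivity), ← hWeq]
  have h1 : Real.pi * n ≤ (2 * (n : ℝ) + 1) / (2 * n + 2) * (Real.pi / 2) * (2 * n + 1) := by
    rw [div_mul_eq_mul_div, div_mul_eq_mul_div, le_div_iff₀ (by positivity)]
    nlinarith
  calc (n.centralBinom : ℝ) ^ 2 * (Real.pi * n)
      ≤ (n.centralBinom : ℝ) ^ 2 * (Real.Wallis.W n * (2 * n + 1)) := by
        refine mul_le_mul_of_nonneg_left (h1.trans ?_) (by positivity)
        exact mul_le_mul_of_nonneg_right hW (by positivity)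
    _ = _ := by ring

theorem choose_half_le (s : ℕ) (hs : 0 < s) :
    (s.choose (s / 2) : ℝ) ≤ 2 ^ s * √(2 / (Real.pi * s)) := by
  have hpi := Real.pi_pos
  obtain ⟨r, rfl | rfl⟩ := Nat.even_or_odd' s
  · have hr : (0 : ℝ) < r := by exact_mod_cast (show 0 < r by omega)
    have h := centralBinom_le_div_sqrt r (by omega)
    rw [Nat.mul_div_cancel_left r two_pos, ← Nat.centralBinom]
    convert h using 1
    rw [pow_mul, show (2 : ℝ) ^ 2 = 4 by norm_num, div_eq_mul_inv (4 ^ r), ← Real.sqrt_inv]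
    congr 2
    push_cast
    field_simp
  · have h := centralBinom_le_div_sqrt (r + 1) (by omega)
    have h2 : ((r + 1).centralBinom : ℝ) = 2 * ((2 * r + 1).choose r : ℝ) := by
      rw [Nat.centralBinom, show 2 * (r + 1) = (2 * r + 1) + 1 by ring, Nat.choose_succ_succ,
        Nat.choose_symm_half]
      push_cast
      ring
    rw [show (2 * r + 1) / 2 = r by omega]
    have h3 : (4 : ℝ) ^ (r + 1) / √(Real.pi * (r + 1 : ℕ)) =
        2 * (2 ^ (2 * r + 1) * √(1 / (Real.pi * (r + 1 : ℕ)))) := by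
      rw [one_div, Real.sqrt_inv, show (4 : ℝ) = 2 ^ 2 by norm_num, ← pow_mul]
      ring
    have h4 : √(1 / (Real.pi * (r + 1 : ℕ))) ≤ √(2 / (Real.pi * (2 * r + 1 : ℕ))) := by
      apply Real.sqrt_le_sqrt
      rw [div_le_div_iff₀ (by positivity) (by positivity)]
      push_cast
      nlinarith
    have h5 : (2 : ℝ) ^ (2 * r + 1) * √(1 / (Real.pi * (r + 1 : ℕ))) ≤
        2 ^ (2 * r + 1) * √(2 / (Real.pi * (2 * r + 1 : ℕ))) := by gcongr
    linarith

/-- The bound for the width of a product of `m` chains with `p` elements. -/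
theorem chainCount_le (p m : ℕ) (hp : 2 ≤ p) (hm : 0 < m) :
    (chainCount p m 1 : ℝ) ≤ √(2 / Real.pi) * p ^ m / √(((p : ℝ) - 1) * m) := by
  obtain ⟨k, rfl⟩ := Nat.exists_eq_add_of_le' (show 1 ≤ p by omega)
  have h := (isOddNonneg_iterate_avgConv_one_mul_sub k m).2 1 one_pos
  have hs := choose_half_le (k * m) (Nat.mul_pos (by omega) hm)
  rw [iterate_avgConv, iterate_avgConv, one_add_one_eq_two, Pi.sub_apply, Pi.smul_apply,
    Pi.smul_apply, iterate_chainConv_two_realSign, sub_nonneg, smul_eq_mul, smul_eq_mul] at h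
  have hc := chainCount_eq (k + 1) m 1 one_pos
  rw [Nat.cast_one] at hc
  rw [← hc, inv_mul_le_iff₀ (by positivity)] at h
  refine h.trans ?_
  have h2 : (((2 : ℕ) : ℝ) ^ (k * m))⁻¹ * ((k * m).choose (k * m / 2) : ℝ) ≤
      √(2 / (Real.pi * (k * m : ℕ))) := by
    rw [inv_mul_le_iff₀ (by positivity)]
    exact_mod_cast hs
  calc _ ≤ ((k + 1 : ℕ) : ℝ) ^ m * √(2 / (Real.pi * (k * m : ℕ))) := by gcongr
    _ = _ := by
      rw [← div_div, Real.sqrt_div (by positivity)]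
      push_cast
      rw [add_sub_cancel_right]
      ring

section RelGen

variable (F Q : Type*) {W : Type*} [Field F] [Group Q] [AddCommGroup W] [Module F W]
  [DistribMulAction Q W]

/-- The `Q`-submodule generated by a set. -/
def orbitSpan (X : Set W) : Submodule F W :=
  Submodule.span F {w : W | ∃ g : Q, ∃ t ∈ X, w = g • t}

/-- The minimal number of elements of `S` which together with `T` generate `S` under `Q`. -/
noncomputable def relGen (S T : Submodule F W) : ℕ :=
  sInf {m : ℕ | ∃ X : Finset W, X.card = m ∧ (X : Set W) ⊆ (S : Set W) ∧
    S ≤ T ⊔ orbitSpan F Q (X : Set W)}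

variable {F} {Q}

theorem subset_orbitSpan (X : Set W) : X ⊆ orbitSpan F Q X := fun x hx =>
  Submodule.subset_span ⟨1, x, hx, (one_smul Q x).symm⟩

theorem orbitSpan_mono {X Y : Set W} (h : X ⊆ Y) : orbitSpan F Q X ≤ orbitSpan F Q Y :=
  Submodule.span_mono fun _ ⟨g, t, ht, hw⟩ => ⟨g, t, h ht, hw⟩

theorem orbitSpan_le {X : Set W} {S : Submodule F W} (hS : ∀ (g : Q), ∀ w ∈ S, g • w ∈ S)
    (h : X ⊆ S) : orbitSpan F Q X ≤ S := by
  refine Submodule.span_le.2 ?_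
  rintro _ ⟨g, t, ht, rfl⟩
  exact hS g t (h ht)

theorem relGen_le_of_generates {S T : Submodule F W} {c : ℕ} (X : Finset W) (hc : X.card ≤ c)
    (hX : (X : Set W) ⊆ S) (h : S ≤ T ⊔ orbitSpan F Q (X : Set W)) : relGen F Q S T ≤ c :=
  le_trans (Nat.sInf_le (s := {m : ℕ | ∃ X : Finset W, X.card = m ∧ (X : Set W) ⊆ (S : Set W) ∧
    S ≤ T ⊔ orbitSpan F Q (X : Set W)}) ⟨X, rfl, hX, h⟩) hc

theorem exists_finset_span [FiniteDimensional F W] (S : Submodule F W) :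
    ∃ X : Finset W, X.card ≤ Module.finrank F S ∧ (X : Set W) ⊆ S ∧
      S ≤ Submodule.span F (X : Set W) := by
  classical
  let b := Module.finBasis F S
  refine ⟨Finset.univ.image fun i => (b i : W), ?_, ?_, ?_⟩
  · exact Finset.card_image_le.trans (by simp)
  · intro w hw
    obtain ⟨i, _, rfl⟩ := Finset.mem_image.1 (Finset.mem_coe.1 hw)
    exact (b i).2
  · have h : S = (⊤ : Submodule F S).map S.subtype := by simp
    conv_lhs => rw [h, ← b.span_eq, Submodule.map_span]
    refine Submodule.span_mono ?_
    rintro _ ⟨_, ⟨i, rfl⟩, rfl⟩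
    simp

theorem span_le_orbitSpan (X : Set W) : Submodule.span F X ≤ orbitSpan F Q X :=
  Submodule.span_le.2 (subset_orbitSpan X)

theorem exists_generates_relGen [FiniteDimensional F W] (S T : Submodule F W) :
    ∃ X : Finset W, X.card = relGen F Q S T ∧ (X : Set W) ⊆ S ∧
      S ≤ T ⊔ orbitSpan F Q (X : Set W) := by
  obtain ⟨X, -, hX, h⟩ := exists_finset_span S
  exact Nat.sInf_mem (s := {m : ℕ | ∃ X : Finset W, X.card = m ∧ (X : Set W) ⊆ (S : Set W) ∧
    S ≤ T ⊔ orbitSpan F Q (X : Set W)})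
    ⟨_, X, rfl, hX, h.trans ((span_le_orbitSpan _).trans le_sup_right)⟩

theorem relGen_anti [FiniteDimensional F W] (S : Submodule F W) {T T' : Submodule F W}
    (h : T ≤ T') : relGen F Q S T' ≤ relGen F Q S T := by
  obtain ⟨X, hc, hX, hS⟩ := exists_generates_relGen (Q := Q) S T
  exact relGen_le_of_generates X hc.le hX (hS.trans (sup_le_sup_right h _))

theorem relGen_le_add [FiniteDimensional F W] {S T : Submodule F W} (h : T ≤ S)
    (U : Submodule F W) : relGen F Q S U ≤ relGen F Q S T + relGen F Q T U := by
  classical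
  obtain ⟨X, hc, hX, hS⟩ := exists_generates_relGen (Q := Q) S T
  obtain ⟨Y, hd, hY, hT⟩ := exists_generates_relGen (Q := Q) T U
  refine relGen_le_of_generates (X ∪ Y) ((Finset.card_union_le X Y).trans (by omega)) ?_ ?_
  · rw [Finset.coe_union]
    exact Set.union_subset hX (hY.trans h)
  · rw [Finset.coe_union]
    refine hS.trans (sup_le (hT.trans (sup_le_sup_left (orbitSpan_mono ?_) _))
      ((orbitSpan_mono ?_).trans le_sup_right))
    · exact Set.subset_union_right
    · exact Set.subset_union_left

theorem relGen_add_finrank_le [FiniteDimensional F W] {S T : Submodule F W} (h : T ≤ S) :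
    relGen F Q S T + Module.finrank F T ≤ Module.finrank F S := by
  obtain ⟨C, hC⟩ := exists_isCompl T
  have hsup : T ⊔ C ⊓ S = S := by
    rw [← sup_inf_assoc_of_le C h, hC.sup_eq_top, top_inf_eq]
  have hinf : T ⊓ (C ⊓ S) = ⊥ := by
    rw [← inf_assoc, hC.inf_eq_bot, bot_inf_eq]
  obtain ⟨X, hc, hX, hspan⟩ := exists_finset_span (C ⊓ S)
  have hle : relGen F Q S T ≤ Module.finrank F ↥(C ⊓ S) := by
    refine relGen_le_of_generates X hc (hX.trans fun x hx => hx.2) ?_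
    conv_lhs => rw [← hsup]
    exact sup_le_sup_left (hspan.trans (span_le_orbitSpan _)) _
  have := Submodule.finrank_sup_add_finrank_inf_eq T (C ⊓ S)
  rw [hsup, hinf, finrank_bot] at this
  omega

theorem map_orbitSpan (f : W →ₗ[F] W) (hf : ∀ (g : Q) w, f (g • w) = g • f w) (X : Set W) :
    (orbitSpan F Q X).map f = orbitSpan F Q (f '' X) := by
  rw [orbitSpan, Submodule.map_span, orbitSpan]
  congr 1
  ext w
  constructor
  · rintro ⟨_, ⟨g, t, ht, rfl⟩, rfl⟩
    exact ⟨g, f t, ⟨t, ht, rfl⟩, hf g t⟩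
  · rintro ⟨g, _, ⟨t, ht, rfl⟩, rfl⟩
    exact ⟨g • t, ⟨g, t, ht, rfl⟩, hf g t⟩

theorem relGen_map_le [FiniteDimensional F W] (f : W →ₗ[F] W)
    (hf : ∀ (g : Q) w, f (g • w) = g • f w) (S : Submodule F W) :
    relGen F Q (S.map f) ⊥ ≤ relGen F Q S ⊥ := by
  classical
  obtain ⟨X, hc, hX, hS⟩ := exists_generates_relGen (Q := Q) S ⊥
  refine relGen_le_of_generates (X.image f) (Finset.card_image_le.trans hc.le) ?_ ?_
  · rw [Finset.coe_image]
    exact Set.image_mono hX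
  · rw [Finset.coe_image, ← map_orbitSpan f hf, bot_sup_eq]
    exact Submodule.map_mono (by simpa using hS)

theorem relGen_inf_ker_le [FiniteDimensional F W] [SMulCommClass Q F W] (f : W →ₗ[F] W)
    (hf : ∀ (g : Q) w, f (g • w) = g • f w) (S : Submodule F W)
    (hS : ∀ (g : Q), ∀ w ∈ S, g • w ∈ S) :
    relGen F Q S (S ⊓ LinearMap.ker f) ≤ relGen F Q (S.map f) ⊥ := by
  classical
  obtain ⟨X, hc, hX, hgen⟩ := exists_generates_relGen (Q := Q) (S.map f) ⊥
  choose! y hyS hy using fun x (hx : x ∈ X) => hX hx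
  have hYS : ((X.image y : Finset W) : Set W) ⊆ S := by
    intro w hw
    obtain ⟨x, hx, rfl⟩ := Finset.mem_image.1 (Finset.mem_coe.1 hw)
    exact hyS x hx
  refine relGen_le_of_generates (X.image y) (Finset.card_image_le.trans hc.le) hYS ?_
  intro s hs
  have himage : f '' ((X.image y : Finset W) : Set W) = X := by
    rw [Finset.coe_image, Set.image_image]
    ext w
    constructor
    · rintro ⟨x, hx, rfl⟩
      simpa only [hy x hx] using hx
    · intro hw
      exact ⟨w, hw, hy w hw⟩
  have h1 : f s ∈ (orbitSpan F Q ((X.image y : Finset W) : Set W)).map f := by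
    rw [map_orbitSpan f hf, himage]
    simpa using hgen (Submodule.mem_map_of_mem hs)
  obtain ⟨t, ht, hts⟩ := h1
  refine Submodule.mem_sup.2 ⟨s - t, ⟨S.sub_mem hs (orbitSpan_le hS hYS ht), ?_⟩, t, ht, by abel⟩
  simp [hts]

theorem smul_mem_orbitSpan [SMulCommClass Q F W] (X : Set W) (g : Q) {w : W}
    (hw : w ∈ orbitSpan F Q X) : g • w ∈ orbitSpan F Q X := by
  have h : orbitSpan F Q X ≤ (orbitSpan F Q X).comap (DistribSMul.toLinearMap F W g) := by
    refine Submodule.span_le.2 ?_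
    rintro _ ⟨g', t, ht, rfl⟩
    exact Submodule.subset_span ⟨g * g', t, ht, (mul_smul g g' t).symm⟩
  exact h hw


/-- The leading parts of those elements of `S` whose translates by `x, …, x ^ i` are killed by
`ρ`. -/
def leadSub [SMulCommClass Q F W] (ρ : W →ₗ[F] W) (x : Q) (S : Submodule F W) (i : ℕ) :
    Submodule F W :=
  (S ⊓ ⨅ k ∈ Finset.Icc 1 i, LinearMap.ker (ρ ∘ₗ DistribSMul.toLinearMap F W (x ^ k))).map ρ

theorem mem_leadSub [SMulCommClass Q F W] {ρ : W →ₗ[F] W} {x : Q} {S : Submodule F W} {i : ℕ}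
    {w : W} : w ∈ leadSub ρ x S i ↔
      ∃ s ∈ S, (∀ k, 1 ≤ k → k ≤ i → ρ (x ^ k • s) = 0) ∧ ρ s = w := by
  simp [leadSub, Submodule.mem_map, and_assoc]

theorem leadSub_mono [SMulCommClass Q F W] (ρ : W →ₗ[F] W) (x : Q) {S S' : Submodule F W}
    (h : S ≤ S') {i i' : ℕ} (hi : i' ≤ i) : leadSub ρ x S i ≤ leadSub ρ x S' i' := by
  intro w hw
  obtain ⟨s, hs, hk, rfl⟩ := mem_leadSub.1 hw
  exact mem_leadSub.2 ⟨s, h hs, fun k h1 h2 => hk k h1 (h2.trans hi), rfl⟩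

theorem smul_mem_leadSub [SMulCommClass Q F W] {R : Subgroup Q} [R.Normal] {ρ : W →ₗ[F] W}
    (hρ : ∀ r ∈ R, ∀ w, ρ (r • w) = r • ρ w) (x : Q) {S : Submodule F W}
    (hS : ∀ (g : Q), ∀ w ∈ S, g • w ∈ S) (i : ℕ) (r : R) {w : W} (hw : w ∈ leadSub ρ x S i) :
    r • w ∈ leadSub ρ x S i := by
  obtain ⟨s, hs, hk, rfl⟩ := mem_leadSub.1 hw
  refine mem_leadSub.2 ⟨(r : Q) • s, hS _ s hs, fun k h1 h2 => ?_, hρ r r.2 s⟩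
  have h : x ^ k • (r : Q) • s = (x ^ k * r * (x ^ k)⁻¹) • x ^ k • s := by
    simp [smul_smul]
  rw [h, hρ _ (Subgroup.Normal.conj_mem ‹_› _ r.2 _), hk k h1 h2, smul_zero]

theorem leadSub_eq_bot [SMulCommClass Q F W] {ρ : W →ₗ[F] W} {x : Q} {S : Submodule F W}
    (hS : ∀ (g : Q), ∀ w ∈ S, g • w ∈ S) {N : ℕ}
    (hinj : ∀ s ∈ S, (∀ k < N, ρ (x ^ k • s) = 0) → s = 0) : leadSub ρ x S N = ⊥ := by
  refine (Submodule.eq_bot_iff _).2 fun w hw => ?_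
  obtain ⟨s, hs, hk, rfl⟩ := mem_leadSub.1 hw
  have h := hinj (x • s) (hS x s hs) fun k hk' => by
    rw [smul_smul, ← pow_succ]
    exact hk (k + 1) (by omega) (by omega)
  rw [smul_eq_zero_iff_eq] at h
  rw [h, map_zero]

theorem relGen_le_sum_leadSub [FiniteDimensional F W] [SMulCommClass Q F W] {R : Subgroup Q}
    [R.Normal] {ρ : W →ₗ[F] W} (hρ : ∀ r ∈ R, ∀ w, ρ (r • w) = r • ρ w) (x : Q)
    {S S' : Submodule F W} (hS : ∀ (g : Q), ∀ w ∈ S, g • w ∈ S)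
    (hS' : ∀ (g : Q), ∀ w ∈ S', g • w ∈ S') (hle : S' ≤ S) {N : ℕ}
    (hinj : ∀ s ∈ S, (∀ k < N, ρ (x ^ k • s) = 0) → s = 0) :
    relGen F Q S S' ≤ ∑ i ∈ Finset.range N,
      relGen F R (leadSub ρ x S i) (leadSub ρ x S' i ⊔ leadSub ρ x S (i + 1)) := by
  classical
  choose X hc hX hgen using fun i => exists_generates_relGen (Q := R) (leadSub ρ x S i)
    (leadSub ρ x S' i ⊔ leadSub ρ x S (i + 1))
  choose! y hyS hyk hy using fun i w (hw : w ∈ X i) => mem_leadSub.1 (hX i hw)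
  let Y : Finset W := (Finset.range N).biUnion fun i => (X i).image (y i)
  have hYmem : ∀ {w}, w ∈ (Y : Set W) → ∃ i, ∃ u ∈ X i, y i u = w := by
    intro w hw
    obtain ⟨i, _, hi⟩ := Finset.mem_biUnion.1 (Finset.mem_coe.1 hw)
    obtain ⟨u, hu, rfl⟩ := Finset.mem_image.1 hi
    exact ⟨i, u, hu, rfl⟩
  refine relGen_le_of_generates Y ?_ ?_ ?_
  · refine Finset.card_biUnion_le.trans (Finset.sum_le_sum fun i _ => ?_)
    exact Finset.card_image_le.trans (hc i).le
  · intro w hw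
    obtain ⟨i, u, hu, rfl⟩ := hYmem hw
    exact hyS i u hu
  · set S'' := S' ⊔ orbitSpan F Q (Y : Set W) with hS''
    have hstab : ∀ (g : Q), ∀ w ∈ S'', g • w ∈ S'' := by
      intro g w hw
      obtain ⟨u, hu, v, hv, rfl⟩ := Submodule.mem_sup.1 hw
      rw [smul_add]
      exact add_mem (Submodule.mem_sup_left (hS' g u hu))
        (Submodule.mem_sup_right (smul_mem_orbitSpan _ g hv))
    have key : ∀ d i, i + d = N → ∀ s ∈ S, (∀ k, 1 ≤ k → k ≤ i → ρ (x ^ k • s) = 0) →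
        s ∈ S'' := by
      intro d
      induction d with
      | zero =>
        intro i hi s hs hk
        have h := hinj (x • s) (hS x s hs) fun k hk' => by
          rw [smul_smul, ← pow_succ]
          exact hk (k + 1) (by omega) (by omega)
        rw [smul_eq_zero_iff_eq] at h
        rw [h]
        exact zero_mem _
      | succ d ih =>
        intro i hi s hs hk
        have hlead : leadSub ρ x S i ≤ leadSub ρ x S'' i := by
          refine (hgen i).trans (sup_le (sup_le ?_ ?_) ?_)
          · exact leadSub_mono ρ x le_sup_left le_rfl
          · intro w hw
            obtain ⟨t, ht, htk, rfl⟩ := mem_leadSub.1 hw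
            exact mem_leadSub.2 ⟨t, ih (i + 1) (by omega) t ht htk,
              fun k h1 h2 => htk k h1 (by omega), rfl⟩
          · refine orbitSpan_le (fun r w hw => smul_mem_leadSub hρ x hstab i r hw) ?_
            intro u hu
            refine mem_leadSub.2 ⟨y i u, ?_, hyk i u hu, hy i u hu⟩
            refine Submodule.mem_sup_right (subset_orbitSpan _ (Finset.mem_coe.2 ?_))
            exact Finset.mem_biUnion.2 ⟨i, Finset.mem_range.2 (by omega),
              Finset.mem_image_of_mem _ hu⟩
        obtain ⟨t, ht, htk, hts⟩ :=
          mem_leadSub.1 (hlead (mem_leadSub.2 ⟨s, hs, hk, rfl⟩))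
        have htS : t ∈ S := by
          refine sup_le hle (orbitSpan_le hS fun w hw => ?_) ht
          obtain ⟨i, u, hu, rfl⟩ := hYmem hw
          exact hyS i u hu
        have hmem : x⁻¹ • (s - t) ∈ S'' := by
          refine ih (i + 1) (by omega) _ (hS _ _ (S.sub_mem hs htS)) fun k h1 h2 => ?_
          obtain ⟨k, rfl⟩ := Nat.exists_eq_add_of_le' h1
          rw [smul_smul, pow_succ, mul_inv_cancel_right, smul_sub, map_sub, sub_eq_zero]
          rcases Nat.eq_zero_or_pos k with rfl | hk0
          · simpa using hts.symm
          · rw [hk k hk0 (by omega), htk k hk0 (by omega)]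
        have := add_mem (hstab x _ hmem) ht
        rwa [smul_inv_smul, sub_add_cancel] at this
    exact fun s hs => key N 0 (by omega) s hs (by omega)

end RelGen

section Imprimitivity

variable (Q : Type*) {F W Ω : Type*} [Field F] [Group Q] [AddCommGroup W] [Module F W]
  [DistribMulAction Q W] [MulAction Q Ω] [Fintype Ω]

/-- The projections `π` decompose `W` into a direct sum of subspaces permuted by `Q` in the same
way as the points of `Ω`. -/
structure IsImprimitivitySystem (π : Ω → W →ₗ[F] W) : Prop where
  smul_proj : ∀ (g : Q) ω w, g • π ω w = π (g • ω) (g • w)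
  sum_proj : ∀ w, ∑ ω, π ω w = w
  proj_proj_self : ∀ ω w, π ω (π ω w) = π ω w
  proj_proj_ne : ∀ ω ω' w, ω ≠ ω' → π ω (π ω' w) = 0

open Classical in
/-- The projection onto the summands indexed by a subset of `Ω`. -/
noncomputable def projOn (π : Ω → W →ₗ[F] W) (A : Set Ω) : W →ₗ[F] W :=
  ∑ ω, if ω ∈ A then π ω else 0

variable {Q}

namespace IsImprimitivitySystem

variable {π : Ω → W →ₗ[F] W}

theorem subgroup (h : IsImprimitivitySystem Q π) (R : Subgroup Q) :
    IsImprimitivitySystem R π :=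
  ⟨fun g ω w => h.smul_proj (g : Q) ω w, h.sum_proj, h.proj_proj_self, h.proj_proj_ne⟩

theorem eq_zero (h : IsImprimitivitySystem Q π) {w : W} (hw : ∀ ω, π ω w = 0) : w = 0 := by
  rw [← h.sum_proj w]
  exact Finset.sum_eq_zero fun ω _ => hw ω

theorem proj_smul (h : IsImprimitivitySystem Q π) (g : Q) (ω : Ω) (w : W) :
    π ω (g • w) = g • π (g⁻¹ • ω) w := by
  rw [h.smul_proj, smul_inv_smul]

theorem proj_projOn_of_mem (h : IsImprimitivitySystem Q π) {A : Set Ω} {ω : Ω} (hω : ω ∈ A)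
    (w : W) : π ω (projOn π A w) = π ω w := by
  classical
  rw [projOn, LinearMap.sum_apply, map_sum, Finset.sum_eq_single ω]
  · rw [if_pos hω, h.proj_proj_self]
  · intro ω' _ hne
    split_ifs
    · exact h.proj_proj_ne _ _ _ hne.symm
    · simp
  · simp

theorem proj_projOn_of_notMem (h : IsImprimitivitySystem Q π) {A : Set Ω} {ω : Ω} (hω : ω ∉ A)
    (w : W) : π ω (projOn π A w) = 0 := by
  classical
  rw [projOn, LinearMap.sum_apply, map_sum]
  refine Finset.sum_eq_zero fun ω' _ => ?_
  split_ifs with hA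
  · exact h.proj_proj_ne _ _ _ fun he => hω (he ▸ hA)
  · simp

theorem ext (h : IsImprimitivitySystem Q π) {v w : W} (hvw : ∀ ω, π ω v = π ω w) : v = w :=
  sub_eq_zero.1 (h.eq_zero fun ω => by rw [map_sub, hvw, sub_self])

theorem projOn_smul (h : IsImprimitivitySystem Q π) {A : Set Ω} (g : Q)
    (hA : ∀ ω, g⁻¹ • ω ∈ A ↔ ω ∈ A) (w : W) : projOn π A (g • w) = g • projOn π A w := by
  refine h.ext fun ω => ?_
  rw [h.proj_smul g]
  by_cases hω : ω ∈ A
  · rw [h.proj_projOn_of_mem hω, h.proj_projOn_of_mem ((hA ω).2 hω), h.proj_smul]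
  · rw [h.proj_projOn_of_notMem hω, h.proj_projOn_of_notMem (fun h' => hω ((hA ω).1 h')),
      smul_zero]

theorem projOn_orbit_smul (h : IsImprimitivitySystem Q π) (ω : Ω) (g : Q) (w : W) :
    projOn π (MulAction.orbit Q ω) (g • w) = g • projOn π (MulAction.orbit Q ω) w :=
  h.projOn_smul g (fun ω' => by
    rw [← MulAction.orbit_eq_iff, ← MulAction.orbit_eq_iff, MulAction.orbit_smul]) w

/-- An element supported on a `Q`-orbit is determined by the `R`-orbit components of its
translates. -/
theorem eq_zero_of_projOn_orbit (h : IsImprimitivitySystem Q π) (R : Subgroup Q) (x : Q) (N : ℕ)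
    (hx : ∀ g : Q, ∃ r ∈ R, ∃ k < N, g = r * x ^ k) (ω : Ω) {w : W}
    (hw : ∀ ω' ∉ MulAction.orbit Q ω, π ω' w = 0)
    (hk : ∀ k < N, projOn π (MulAction.orbit R ω) (x ^ k • w) = 0) : w = 0 := by
  refine h.eq_zero fun ω' => ?_
  by_cases hω' : ω' ∈ MulAction.orbit Q ω
  · obtain ⟨g, rfl⟩ := hω'
    obtain ⟨r, hr, k, hkN, hg⟩ := hx g⁻¹
    have h1 := h.proj_projOn_of_mem (A := MulAction.orbit R ω) (ω := r⁻¹ • ω)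
      ⟨⟨r⁻¹, R.inv_mem hr⟩, rfl⟩ (x ^ k • w)
    rw [hk k hkN, map_zero, h.proj_smul, eq_comm, smul_eq_zero_iff_eq, smul_smul, ← mul_inv_rev,
      ← hg, inv_inv] at h1
    exact h1
  · exact hw ω' hω'

end IsImprimitivitySystem

/-- Decomposition of a rectangle into hooks. -/
theorem sum_rectangle_eq_sum_hooks (l p : ℕ) (f : ℕ → ℕ → ℕ) :
    ∑ j ∈ Finset.range l, ∑ i ∈ Finset.range p, f j i =
      ∑ t ∈ Finset.range (min l p), ∑ s ∈ Finset.range (l + p - 1 - 2 * t),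
        f (min s (l - 1 - t)) (t + s - min s (l - 1 - t)) := by
  rw [Finset.sum_sigma', Finset.sum_sigma']
  refine Finset.sum_bij' (fun q _ => ⟨min q.2 (l - 1 - q.1), q.1 + q.2 - min q.2 (l - 1 - q.1)⟩)
    (fun q _ => ⟨min q.2 (l - 1 - q.1), q.1 + q.2 - min q.2 (l - 1 - q.1)⟩) ?_ ?_ ?_ ?_ ?_
  · rintro ⟨j, i⟩ h
    simp only [Finset.mem_sigma, Finset.mem_range] at h ⊢
    omega
  · rintro ⟨t, s⟩ h
    simp only [Finset.mem_sigma, Finset.mem_range] at h ⊢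
    omega
  · rintro ⟨j, i⟩ h
    simp only [Finset.mem_sigma, Finset.mem_range] at h
    simp only [Sigma.mk.injEq, heq_eq_eq]
    omega
  · rintro ⟨t, s⟩ h
    simp only [Finset.mem_sigma, Finset.mem_range] at h
    simp only [Sigma.mk.injEq, heq_eq_eq]
    omega
  · rintro ⟨j, i⟩ h
    simp only [Finset.mem_sigma, Finset.mem_range] at h
    dsimp only
    congr 1 <;> omega

theorem card_orbit_mul_card_stabilizer (Q : Type*) {Ω : Type*} [Group Q] [MulAction Q Ω] (ω : Ω) :
    Nat.card (MulAction.orbit Q ω) * Nat.card (MulAction.stabilizer Q ω) = Nat.card Q := by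
  rw [← (MulAction.stabilizer Q ω).index_mul_card, MulAction.index_stabilizer,
    Nat.card_coe_set_eq]

theorem exists_normal_subgroup_of_card_orbit {Q Ω : Type*} [Group Q] [Finite Q] [MulAction Q Ω]
    {p : ℕ} [Fact p.Prime] (hQ : IsPGroup p Q) (ω : Ω) {m : ℕ}
    (horb : Nat.card (MulAction.orbit Q ω) = p ^ (m + 1)) :
    ∃ R : Subgroup Q, R.Normal ∧ Nat.card (MulAction.orbit R ω) = p ^ m ∧
      ∃ x : Q, ∀ g : Q, ∃ r ∈ R, ∃ k < p, g = r * x ^ k := by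
  have hp : p.Prime := Fact.out
  obtain ⟨N, hN⟩ := IsPGroup.iff_card.1 hQ
  obtain ⟨e, he⟩ := IsPGroup.iff_card.1 (hQ.to_subgroup (MulAction.stabilizer Q ω))
  have hcard := card_orbit_mul_card_stabilizer Q ω
  rw [horb, he, hN, ← pow_add] at hcard
  have hNe : m + 1 + e = N := Nat.pow_right_injective hp.two_le hcard
  obtain ⟨R, hR, hle⟩ := Sylow.exists_subgroup_card_pow_prime_le p (m := m + e)
    (hN ▸ pow_dvd_pow p (by omega)) (MulAction.stabilizer Q ω) he (by omega)
  have hindex : R.index = p := by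
    have h := R.index_mul_card
    rw [hR, hN, ← hNe, show m + 1 + e = (m + e) + 1 by ring, pow_succ'] at h
    exact Nat.eq_of_mul_eq_mul_right (pow_pos hp.pos _) h
  have hnormal : R.Normal := by
    refine Subgroup.normal_of_index_eq_minFac_card ?_
    rw [hindex, hN, hp.pow_minFac (by omega)]
  refine ⟨R, hnormal, ?_, ?_⟩
  · have h := card_orbit_mul_card_stabilizer R ω
    have hstab : MulAction.stabilizer R ω = (MulAction.stabilizer Q ω).subgroupOf R := rfl
    rw [hstab, Nat.card_congr (Subgroup.subgroupOfEquivOfLe hle).toEquiv, he, hR, pow_add] at h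
    exact Nat.eq_of_mul_eq_mul_right (pow_pos hp.pos _) h
  · have hq : Nat.card (Q ⧸ R) = p := hindex
    have hne : R ≠ ⊤ := by
      rintro rfl
      rw [Subgroup.index_top] at hindex
      exact hp.one_lt.ne hindex
    obtain ⟨x, hx⟩ : ∃ x, x ∉ R := by
      by_contra! h
      exact hne (Subgroup.eq_top_iff' R |>.2 h)
    refine ⟨x, fun g => ?_⟩
    obtain ⟨k, hk⟩ := (Submonoid.mem_powers_iff _ _).1 (mem_powers_of_prime_card hq
      (g := (x : Q ⧸ R)) (g' := (g : Q ⧸ R)) (by rwa [Ne, QuotientGroup.eq_one_iff]))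
    refine ⟨g * (x ^ (k % p))⁻¹, ?_, k % p, Nat.mod_lt _ hp.pos, by group⟩
    have hxp : (x : Q ⧸ R) ^ p = 1 := hq ▸ pow_card_eq_one'
    rw [← QuotientGroup.eq_one_iff, QuotientGroup.mk_mul, QuotientGroup.mk_inv,
      QuotientGroup.mk_pow, ← pow_eq_pow_mod k hxp, hk, mul_inv_cancel]

theorem sum_relGen_chain_le {p : ℕ} [Fact p.Prime] [FiniteDimensional F W] {π : Ω → W →ₗ[F] W}
    {a : ℕ} (ha : ∀ ω, Module.finrank F (LinearMap.range (π ω)) ≤ a) (m : ℕ) {Q : Type*}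
    [Group Q] [Finite Q] (hQ : IsPGroup p Q) [MulAction Q Ω] [DistribMulAction Q W]
    [SMulCommClass Q F W] (hπ : IsImprimitivitySystem Q π) (ω : Ω)
    (horb : Nat.card (MulAction.orbit Q ω) = p ^ m) (l : ℕ) (T : ℕ → Submodule F W)
    (hT : Antitone T) (hTl : T l = ⊥) (hstab : ∀ j, ∀ (g : Q), ∀ w ∈ T j, g • w ∈ T j)
    (hsupp : ∀ j, ∀ w ∈ T j, ∀ ω' ∉ MulAction.orbit Q ω, π ω' w = 0) :
    ∑ j ∈ Finset.range l, relGen F Q (T j) (T (j + 1)) ≤ a * chainCount p m l := by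
  induction m generalizing Q l T with
  | zero =>
    rw [pow_zero] at horb
    have hle : ∀ j, T j ≤ LinearMap.range (π ω) := by
      intro j w hw
      refine ⟨w, hπ.ext fun ω' => ?_⟩
      by_cases hω : ω' = ω
      · rw [hω, hπ.proj_proj_self]
      · rw [hπ.proj_proj_ne _ _ _ hω, hsupp j w hw]
        intro hmem
        have := (Nat.card_eq_one_iff_unique.1 horb).1
        exact hω (congrArg Subtype.val
          (Subsingleton.elim (⟨ω', hmem⟩ : MulAction.orbit Q ω) ⟨ω, MulAction.mem_orbit_self ω⟩))
    have hsum : ∀ k, ∑ j ∈ Finset.range k, relGen F Q (T j) (T (j + 1)) +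
        Module.finrank F (T k) ≤ Module.finrank F (T 0) := by
      intro k
      induction k with
      | zero => simp
      | succ k ih =>
        rw [Finset.sum_range_succ]
        have := relGen_add_finrank_le (Q := Q) (hT (Nat.le_add_right k 1))
        omega
    have h1 := hsum l
    have h2 := (Submodule.finrank_mono (hle 0)).trans (ha ω)
    rw [chainCount, mul_one]
    omega
  | succ m ih =>
    obtain ⟨R, hR, hRorb, x, hx⟩ := exists_normal_subgroup_of_card_orbit hQ ω horb
    set ρ := projOn π (MulAction.orbit R ω) with hρdef
    have hρ : ∀ r ∈ R, ∀ w, ρ (r • w) = r • ρ w := fun r hr w =>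
      (hπ.subgroup R).projOn_orbit_smul ω ⟨r, hr⟩ w
    have hinj : ∀ j, ∀ s ∈ T j, (∀ k < p, ρ (x ^ k • s) = 0) → s = 0 := fun j s hs hk =>
      hπ.eq_zero_of_projOn_orbit R x p hx ω (hsupp j s hs) hk
    have hbot : ∀ j i, p ≤ i → leadSub ρ x (T j) i = ⊥ := fun j i hi =>
      le_bot_iff.1 ((leadSub_mono ρ x le_rfl hi).trans
        (leadSub_eq_bot (hstab j) (hinj j)).le)
    calc ∑ j ∈ Finset.range l, relGen F Q (T j) (T (j + 1))
        ≤ ∑ j ∈ Finset.range l, ∑ i ∈ Finset.range p, relGen F R (leadSub ρ x (T j) i)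
            (leadSub ρ x (T (j + 1)) i ⊔ leadSub ρ x (T j) (i + 1)) :=
          Finset.sum_le_sum fun j _ => relGen_le_sum_leadSub hρ x (hstab j) (hstab (j + 1))
            (hT j.le_succ) (hinj j)
      _ = _ := sum_rectangle_eq_sum_hooks l p _
      _ ≤ ∑ t ∈ Finset.range (min l p), a * chainCount p m (l + p - 1 - 2 * t) := by
          refine Finset.sum_le_sum fun t ht => ?_
          have ht' := Finset.mem_range.1 ht
          let C : ℕ → Submodule F W := fun s =>
            leadSub ρ x (T (min s (l - 1 - t))) (t + s - min s (l - 1 - t))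
          have hC : Antitone C := fun s s' hs =>
            leadSub_mono ρ x (hT (by omega)) (by omega)
          refine le_trans (Finset.sum_le_sum fun s hs => ?_)
            (ih (hQ.to_subgroup R) (hπ.subgroup R) hRorb (l + p - 1 - 2 * t) C hC
              (hbot _ _ (by omega)) (fun s r w hw => smul_mem_leadSub hρ x (hstab _) _ r hw) ?_)
          · refine relGen_anti _ ?_
            rcases lt_or_ge s (l - 1 - t) with hs' | hs'
            · refine le_trans ?_ le_sup_left
              exact leadSub_mono ρ x (hT (by omega)) (by omega)
            · refine le_trans ?_ le_sup_right
              exact leadSub_mono ρ x (hT (by omega)) (by omega)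
          · intro s w hw ω' hω'
            obtain ⟨v, -, -, rfl⟩ := mem_leadSub.1 hw
            exact hπ.proj_projOn_of_notMem hω' v
      _ = a * chainCount p (m + 1) l := by rw [← Finset.mul_sum, chainCount]

theorem relGen_le_sum_orbits [FiniteDimensional F W] [SMulCommClass Q F W] {π : Ω → W →ₗ[F] W}
    (hπ : IsImprimitivitySystem Q π) (c : MulAction.orbitRel.Quotient Q Ω → ℕ)
    (hc : ∀ ω (S : Submodule F W), (∀ (g : Q), ∀ w ∈ S, g • w ∈ S) →
      (∀ w ∈ S, ∀ ω' ∉ MulAction.orbit Q ω, π ω' w = 0) →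
      relGen F Q S ⊥ ≤ c (Quotient.mk'' ω))
    (A : Finset (MulAction.orbitRel.Quotient Q Ω)) (S : Submodule F W)
    (hS : ∀ (g : Q), ∀ w ∈ S, g • w ∈ S)
    (hsupp : ∀ w ∈ S, ∀ ω, (Quotient.mk'' ω : MulAction.orbitRel.Quotient Q Ω) ∉ A → π ω w = 0) :
    relGen F Q S ⊥ ≤ ∑ o ∈ A, c o := by
  classical
  induction A using Finset.induction_on generalizing S with
  | empty =>
    have hbot : S = ⊥ := (Submodule.eq_bot_iff S).2 fun w hw =>
      hπ.eq_zero fun ω => hsupp w hw ω (Finset.notMem_empty _)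
    rw [hbot]
    exact relGen_le_of_generates ∅ (by simp) (by simp) bot_le
  | insert o A ho ih =>
    induction o using Quotient.inductionOn' with
    | h ω =>
    set ρ := projOn π (MulAction.orbit Q ω)
    have hρ : ∀ (g : Q) w, ρ (g • w) = g • ρ w := hπ.projOn_orbit_smul ω
    rw [Finset.sum_insert ho]
    refine (relGen_le_add (T := S ⊓ LinearMap.ker ρ) inf_le_left ⊥).trans (add_le_add ?_ ?_)
    · refine (relGen_inf_ker_le ρ hρ S hS).trans (hc ω _ ?_ ?_)
      · rintro g _ ⟨s, hs, rfl⟩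
        exact ⟨g • s, hS g s hs, hρ g s⟩
      · rintro _ ⟨s, hs, rfl⟩ ω' hω'
        exact hπ.proj_projOn_of_notMem hω' s
    · refine ih (S ⊓ LinearMap.ker ρ) (fun g w hw => ⟨hS g w hw.1, ?_⟩) fun w hw ω' hω' => ?_
      · have h0 : ρ w = 0 := hw.2
        simp [hρ, h0]
      · by_cases h : ω' ∈ MulAction.orbit Q ω
        · have h0 : ρ w = 0 := hw.2
          rw [← hπ.proj_projOn_of_mem h, h0, map_zero]
        · refine hsupp w hw.1 ω' ?_
          rw [Finset.mem_insert, not_or]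
          exact ⟨fun h' => h (MulAction.orbitRel_apply.1 (Quotient.eq''.1 h')), hω'⟩

theorem sum_card_orbits (Q Ω : Type*) [Group Q] [MulAction Q Ω] [Fintype Ω]
    [Fintype (MulAction.orbitRel.Quotient Q Ω)] :
    ∑ o : MulAction.orbitRel.Quotient Q Ω, Nat.card o.orbit = Nat.card Ω := by
  rw [Nat.card_congr (MulAction.selfEquivSigmaOrbits' Q Ω), Nat.card_sigma]

theorem relGen_le_of_isPGroup [FiniteDimensional F W] [SMulCommClass Q F W] [Finite Q]
    {π : Ω → W →ₗ[F] W} (hπ : IsImprimitivitySystem Q π) {p : ℕ} [Fact p.Prime]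
    (hQ : IsPGroup p Q) {a : ℕ} (ha : ∀ ω, Module.finrank F (LinearMap.range (π ω)) ≤ a) {k : ℕ}
    (hk : 0 < k) (horb : ∀ ω : Ω, ∃ m, k ≤ m ∧ Nat.card (MulAction.orbit Q ω) = p ^ m)
    (S : Submodule F W) (hS : ∀ (g : Q), ∀ w ∈ S, g • w ∈ S) :
    relGen F Q S ⊥ ≤ a * ⌊√(2 / Real.pi) * Nat.card Ω / √(((p : ℝ) - 1) * k)⌋₊ := by
  classical
  have hp : p.Prime := Fact.out
  have hp1 : (0 : ℝ) < (p : ℝ) - 1 := by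
    have : (1 : ℝ) < p := by exact_mod_cast hp.one_lt
    linarith
  have : Fintype (MulAction.orbitRel.Quotient Q Ω) := Fintype.ofFinite _
  have horb' : ∀ o : MulAction.orbitRel.Quotient Q Ω, ∃ m, k ≤ m ∧ Nat.card o.orbit = p ^ m := by
    intro o
    induction o using Quotient.inductionOn' with
    | h ω => exact horb ω
  choose m hkm hm using horb'
  have h1 : relGen F Q S ⊥ ≤
      ∑ o : MulAction.orbitRel.Quotient Q Ω, a * chainCount p (m o) 1 := by
    refine relGen_le_sum_orbits hπ _ (fun ω S' hS' hsupp => ?_) Finset.univ S hS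
      fun w _ ω hω => absurd (Finset.mem_univ _) hω
    have h := sum_relGen_chain_le ha (m (Quotient.mk'' ω)) hQ hπ ω (hm (Quotient.mk'' ω)) 1
      (fun j => if j = 0 then S' else ⊥) ?_ ?_ ?_ ?_
    · simpa using h
    · intro i j hij
      dsimp only
      split_ifs with h1 h2
      · exact le_rfl
      · omega
      · exact bot_le
      · exact le_rfl
    · simp
    · intro j g w hw
      split_ifs at hw ⊢
      · exact hS' g w hw
      · rw [(Submodule.mem_bot F).1 hw, smul_zero]
        exact zero_mem _
    · intro j w hw ω' hω'
      split_ifs at hw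
      · exact hsupp w hw ω' hω'
      · rw [(Submodule.mem_bot F).1 hw, map_zero]
  rw [← Finset.mul_sum] at h1
  refine h1.trans (Nat.mul_le_mul_left a (Nat.le_floor ?_))
  rw [← sum_card_orbits Q Ω]
  push_cast
  rw [Finset.mul_sum, Finset.sum_div]
  refine Finset.sum_le_sum fun o _ => ?_
  have hkm' : (k : ℝ) ≤ m o := by exact_mod_cast hkm o
  have hk' : (0 : ℝ) < k := by exact_mod_cast hk
  refine (chainCount_le p (m o) hp.two_le (hk.trans_le (hkm o))).trans ?_
  rw [hm o]
  push_cast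
  gcongr

theorem relGen_top_le [FiniteDimensional F W] [SMulCommClass Q F W] {π : Ω → W →ₗ[F] W}
    (hπ : IsImprimitivitySystem Q π) {a : ℕ}
    (ha : ∀ ω, Module.finrank F (LinearMap.range (π ω)) ≤ a) :
    relGen F Q (⊤ : Submodule F W) ⊥ ≤ a * Nat.card (MulAction.orbitRel.Quotient Q Ω) := by
  classical
  have : Fintype (MulAction.orbitRel.Quotient Q Ω) := Fintype.ofFinite _
  choose X hc _ hspan using fun o : MulAction.orbitRel.Quotient Q Ω =>
    exists_finset_span (LinearMap.range (π o.out))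
  refine relGen_le_of_generates (Finset.univ.biUnion X) ?_ (Set.subset_univ _) ?_
  · refine Finset.card_biUnion_le.trans ?_
    refine (Finset.sum_le_sum fun o _ => (hc o).trans (ha _)).trans ?_
    simp [mul_comm]
  · rw [bot_sup_eq]
    intro w _
    rw [← hπ.sum_proj w]
    refine Submodule.sum_mem _ fun ω _ => ?_
    set o : MulAction.orbitRel.Quotient Q Ω := Quotient.mk'' ω with ho
    have hω : ω ∈ MulAction.orbit Q o.out :=
      MulAction.orbitRel_apply.1 (Quotient.eq''.1 (by rw [Quotient.out_eq']))
    obtain ⟨g, hg⟩ := hω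
    have hg' : π ω w = g • π o.out (g⁻¹ • w) := by
      rw [hπ.smul_proj, smul_inv_smul]
      exact congrArg (fun ω => π ω w) hg.symm
    rw [hg']
    refine smul_mem_orbitSpan _ g ((span_le_orbitSpan _) ?_)
    refine Submodule.span_mono ?_ (hspan o ⟨_, rfl⟩)
    exact Finset.coe_subset.2 (Finset.subset_biUnion_of_mem X (Finset.mem_univ o))

end Imprimitivity

/-- Maschke's theorem: a stable subspace is the image of an equivariant projection. -/
theorem exists_equivariant_projection {F Q W : Type*} [Field F] [Group Q] [Finite Q]
    [AddCommGroup W] [Module F W] [DistribMulAction Q W] [SMulCommClass Q F W]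
    (hcard : (Nat.card Q : F) ≠ 0) (S : Submodule F W) (hS : ∀ (g : Q), ∀ w ∈ S, g • w ∈ S) :
    ∃ f : W →ₗ[F] W, (∀ (g : Q) w, f (g • w) = g • f w) ∧ (⊤ : Submodule F W).map f = S := by
  have : Fintype Q := Fintype.ofFinite Q
  obtain ⟨e, he⟩ := S.exists_isCompl
  let f₀ : W →ₗ[F] W := S.subtype ∘ₗ S.projectionOnto e he
  have hf₀mem : ∀ w, f₀ w ∈ S := fun w => Submodule.coe_mem _
  have hf₀ : ∀ w ∈ S, f₀ w = w := fun w hw =>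
    congrArg Subtype.val (Submodule.projectionOnto_apply_left he ⟨w, hw⟩)
  let f : W →ₗ[F] W := (Nat.card Q : F)⁻¹ • ∑ g : Q,
    DistribSMul.toLinearMap F W g ∘ₗ f₀ ∘ₗ DistribSMul.toLinearMap F W g⁻¹
  have hf : ∀ w, f w = (Nat.card Q : F)⁻¹ • ∑ g : Q, g • f₀ (g⁻¹ • w) := by
    intro w
    simp [f, LinearMap.sum_apply]
  refine ⟨f, fun h w => ?_, le_antisymm ?_ ?_⟩
  · rw [hf, hf, smul_comm h]
    congr 1
    rw [Finset.smul_sum, ← Equiv.sum_comp (Equiv.mulLeft h) fun g => g • f₀ (g⁻¹ • h • w)]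
    refine Finset.sum_congr rfl fun g _ => ?_
    simp [mul_smul]
  · rintro _ ⟨w, -, rfl⟩
    rw [hf]
    exact S.smul_mem _ (S.sum_mem fun g _ => hS g _ (hf₀mem _))
  · intro s hs
    refine ⟨s, trivial, ?_⟩
    rw [hf, Finset.sum_congr rfl fun g _ => by rw [hf₀ _ (hS g⁻¹ s hs), smul_inv_smul],
      Finset.sum_const, Finset.card_univ, ← Nat.card_eq_fintype_card, ← Nat.cast_smul_eq_nsmul F,
      smul_smul, inv_mul_cancel₀ hcard, one_smul]

theorem exists_card_orbit_sylow {G : Type*} [Group G] [Finite G] (H : Subgroup G) (q : ℕ)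
    [Fact q.Prime] (P : Sylow q G) (ω : G ⧸ H) :
    ∃ m, H.index.factorization q ≤ m ∧ Nat.card (MulAction.orbit P ω) = q ^ m := by
  have hq : q.Prime := Fact.out
  obtain ⟨m, hm⟩ := P.isPGroup'.card_orbit ω
  obtain ⟨e, he⟩ := IsPGroup.iff_card.1 (P.isPGroup'.to_subgroup (MulAction.stabilizer P ω))
  have h1 := card_orbit_mul_card_stabilizer P ω
  rw [hm, he, P.card_eq_multiplicity, ← pow_add] at h1
  have h2 := Nat.pow_right_injective hq.two_le h1
  have h3 := (MulAction.stabilizer G ω).index_mul_card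
  rw [MulAction.index_stabilizer_of_transitive, ← Subgroup.index] at h3
  have h4 : Nat.card (MulAction.stabilizer P ω) ∣ Nat.card (MulAction.stabilizer G ω) := by
    let f : MulAction.stabilizer P ω →* MulAction.stabilizer G ω :=
      { toFun := fun g => ⟨(g : P), g.2⟩
        map_one' := rfl
        map_mul' := fun _ _ => rfl }
    refine Subgroup.card_dvd_of_injective f fun g g' h => ?_
    exact Subtype.ext (Subtype.ext
      (congrArg (fun y : MulAction.stabilizer G ω => (y : G)) h))
  rw [he, hq.pow_dvd_iff_le_factorization Nat.card_pos.ne'] at h4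
  have h5 := congrArg (fun k => k.factorization q) h3
  rw [Nat.factorization_mul Subgroup.index_ne_zero_of_finite Nat.card_pos.ne',
    Finsupp.add_apply] at h5
  exact ⟨m, by omega, hm⟩

/-- The projections attached to the decomposition of an induced module. -/
theorem exists_isImprimitivitySystem {G F W : Type*} [Group G] [Finite G] (H : Subgroup G)
    [Fintype (G ⧸ H)] [Field F] [AddCommGroup W] [Module F W] [DistribMulAction G W]
    [SMulCommClass G F W] (V : Submodule F W) (φ : G ⧸ H → Submodule F W)
    (hφ : ∀ g : G, φ (g : G ⧸ H) = V.map (DistribSMul.toLinearMap F W g))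
    (hind : iSupIndep φ) (htop : iSup φ = ⊤) :
    ∃ π : G ⧸ H → W →ₗ[F] W, IsImprimitivitySystem G π ∧ ∀ ω, LinearMap.range (π ω) ≤ φ ω := by
  classical
  let _ : DirectSum.Decomposition φ :=
    (DirectSum.isInternal_submodule_of_iSupIndep_of_iSup_eq_top hind htop).chooseDecomposition
  let π : G ⧸ H → W →ₗ[F] W := fun ω => (φ ω).subtype ∘ₗ DirectSum.component F _ _ ω ∘ₗ
    (DirectSum.decomposeLinearEquiv φ).toLinearMap
  have hπ : ∀ ω w, π ω w = DirectSum.decompose φ w ω := fun ω w => rfl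
  have hmem : ∀ ω w, π ω w ∈ φ ω := fun ω w => SetLike.coe_mem _
  have hsame : ∀ ω, ∀ w ∈ φ ω, π ω w = w := fun ω w hw => DirectSum.decompose_of_mem_same φ hw
  have hne : ∀ ω ω', ω ≠ ω' → ∀ w ∈ φ ω', π ω w = 0 := fun ω ω' h w hw =>
    DirectSum.decompose_of_mem_ne φ hw h.symm
  have hsum : ∀ w, ∑ ω, π ω w = w := by
    intro w
    conv_rhs => rw [← DirectSum.sum_support_decompose φ w]
    refine (Finset.sum_subset (Finset.subset_univ _) fun ω _ hω => ?_).symm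
    rw [hπ, DFinsupp.notMem_support_iff.1 hω, ZeroMemClass.coe_zero]
  have hsmul : ∀ (g : G) ω, ∀ w ∈ φ ω, g • w ∈ φ (g • ω) := by
    intro g ω w hw
    induction ω using Quotient.inductionOn' with
    | h x =>
    change w ∈ φ (x : G ⧸ H) at hw
    change g • w ∈ φ ((g * x : G) : G ⧸ H)
    rw [hφ] at hw ⊢
    obtain ⟨v, hv, rfl⟩ := hw
    exact ⟨v, hv, mul_smul g x v⟩
  refine ⟨π, ⟨fun g ω w => ?_, hsum, fun ω w => hsame ω _ (hmem ω w),
    fun ω ω' w h => hne ω ω' h _ (hmem ω' w)⟩, ?_⟩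
  · conv_rhs => rw [← hsum w, Finset.smul_sum, map_sum]
    rw [Finset.sum_eq_single ω]
    · rw [hsame _ _ (hsmul g ω _ (hmem ω w))]
    · intro ω' _ h
      exact hne _ _ (fun h' => h (smul_left_cancel g h').symm) _ (hsmul g ω' _ (hmem ω' w))
    · simp
  · rintro ω _ ⟨w, rfl⟩
    exact hmem ω w


theorem dMod_le_relGen {G F W : Type*} [Group G] [Field F] [AddCommGroup W] [Module F W]
    [FiniteDimensional F W] [DistribMulAction G W] (P : Subgroup G) (S : Submodule F W)
    (hS : ∀ g : G, ∀ w ∈ S, g • w ∈ S) : dMod G S ≤ relGen F P S ⊥ := by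
  obtain ⟨X, hc, hX, h⟩ := exists_generates_relGen (Q := P) S ⊥
  refine Nat.sInf_le ⟨X, hc, hX, le_antisymm (orbitSpan_le hS hX) (h.trans ?_)⟩
  rw [bot_sup_eq]
  exact Submodule.span_mono fun w ⟨g, t, ht, hw⟩ => ⟨(g : G), t, ht, hw⟩

theorem card_orbits_sylow_le {G : Type*} [Group G] [Finite G] (H : Subgroup G) (q : ℕ)
    [Fact q.Prime] (P : Sylow q G) :
    Nat.card (MulAction.orbitRel.Quotient P (G ⧸ H)) ≤
      H.index / q ^ H.index.factorization q := by
  have hq : q.Prime := Fact.out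
  have : Fintype (MulAction.orbitRel.Quotient P (G ⧸ H)) := Fintype.ofFinite _
  have : Fintype (G ⧸ H) := Fintype.ofFinite _
  rw [Nat.le_div_iff_mul_le (pow_pos hq.pos _)]
  refine le_trans ?_ (sum_card_orbits P (G ⧸ H)).le
  rw [Nat.card_eq_fintype_card, ← smul_eq_mul, ← Finset.card_univ]
  refine Finset.card_nsmul_le_sum _ _ _ fun o _ => ?_
  induction o using Quotient.inductionOn' with
  | h ω =>
  obtain ⟨m, hm, hc⟩ := exists_card_orbit_sylow H q P ω
  exact (Nat.pow_le_pow_right hq.pos hm).trans hc.ge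

theorem relGen_sylow_le_of_ne {G F W : Type*} [Group G] [Finite G] (H : Subgroup G)
    [Fintype (G ⧸ H)] [Field F] [AddCommGroup W] [Module F W] [FiniteDimensional F W]
    [DistribMulAction G W] [SMulCommClass G F W] {π : G ⧸ H → W →ₗ[F] W}
    (hπ : IsImprimitivitySystem G π) {a : ℕ}
    (ha : ∀ ω, Module.finrank F (LinearMap.range (π ω)) ≤ a) {p q : ℕ} [CharP F p]
    (hp : p.Prime) [Fact q.Prime] (hqp : q ≠ p) (P : Sylow q G) (S : Submodule F W)
    (hS : ∀ g : G, ∀ w ∈ S, g • w ∈ S) :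
    relGen F P S ⊥ ≤ a * (H.index / q ^ H.index.factorization q) := by
  have hq : q.Prime := Fact.out
  have hcard : (Nat.card P : F) ≠ 0 := by
    rw [P.card_eq_multiplicity, Ne, CharP.cast_eq_zero_iff F p]
    exact fun h => hqp ((Nat.prime_dvd_prime_iff_eq hp hq).1 (hp.dvd_of_dvd_pow h)).symm
  obtain ⟨f, hf, hfS⟩ := exists_equivariant_projection (Q := P) hcard S fun g => hS g
  calc relGen F P S ⊥ = relGen F P ((⊤ : Submodule F W).map f) ⊥ := by rw [hfS]
    _ ≤ relGen F P (⊤ : Submodule F W) ⊥ := relGen_map_le f hf ⊤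
    _ ≤ a * Nat.card (MulAction.orbitRel.Quotient P (G ⧸ H)) :=
      relGen_top_le (hπ.subgroup P.toSubgroup) ha
    _ ≤ _ := Nat.mul_le_mul_left a (card_orbits_sylow_le H q P)

theorem exists_prime_ne_div_pow_factorization_le (n p : ℕ) :
    ∃ q, q.Prime ∧ q ≠ p ∧
      n / q ^ n.factorization q ≤ n / lpp (n / p ^ n.factorization p) := by
  set k := n / p ^ n.factorization p with hk
  rcases le_total (k.primeFactors.sup fun q => q ^ k.factorization q) 1 with h | h
  · obtain ⟨q, hpq, hq⟩ := Nat.exists_infinite_primes (p + 1)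
    refine ⟨q, hq, by omega, ?_⟩
    rw [lpp, max_eq_left h, Nat.div_one]
    exact Nat.div_le_self _ _
  · have hne : k.primeFactors.Nonempty := by
      by_contra h0
      rw [Finset.not_nonempty_iff_eq_empty] at h0
      simp [h0] at h
    obtain ⟨q, hq, hsup⟩ := Finset.exists_mem_eq_sup _ hne fun q => q ^ k.factorization q
    have hqprime := Nat.prime_of_mem_primeFactors hq
    have hqp : q ≠ p := by
      rintro rfl
      have hn : n ≠ 0 := by
        rintro rfl
        simp [hk] at hq
      exact Nat.not_dvd_ordCompl hqprime hn (Nat.dvd_of_mem_primeFactors hq)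
    refine ⟨q, hqprime, hqp, ?_⟩
    rw [lpp, max_eq_right h, hsup, hk, Nat.factorization_ordCompl, Finsupp.erase_ne hqp]

/-- Let `G` be a finite group, `H ≤ G` of index `n ≥ 2`, `F` a field of characteristic
`p > 0`, and `V` an `H`-module of finite dimension `a` over `F`.  The induced module `V↑G` is
presented internally: `W` is a `G`-module containing an `H`-stable subspace `V` of dimension
`a` such that `W` is the direct sum of the translates `g • V` over the cosets `g H ∈ G ⧸ H`.
Then for every (`G`-stable) submodule `S` of `W`, `d_G(S) ≤ a·E(n,p)`. -/
theorem stmt_15 (G : Type*) [Group G] [Fintype G]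
    (H : Subgroup G) (n : ℕ) (hn : 2 ≤ n) (hidx : H.index = n)
    (F W : Type*) [Field F] (p : ℕ) [Fact p.Prime] (hchar : CharP F p)
    [AddCommGroup W] [Module F W] [DistribMulAction G W] [SMulCommClass G F W]
    (V : Submodule F W) [FiniteDimensional F V] (a : ℕ) (ha : Module.finrank F V = a)
    (hVstable : ∀ g ∈ H, ∀ v ∈ V, g • v ∈ V)
    (hinduced : ∃ φ : G ⧸ H → Submodule F W,
      (∀ g : G, φ (g : G ⧸ H) = V.map (DistribMulAction.toLinearMap F W g)) ∧
        iSupIndep φ ∧ iSup φ = ⊤)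
    (S : Submodule F W) (hSstable : ∀ g : G, ∀ w ∈ S, g • w ∈ S) :
    dMod G S ≤ a * Efun n p := by
  subst hidx
  have hp : p.Prime := Fact.out
  have : Fintype (G ⧸ H) := Fintype.ofFinite _
  obtain ⟨φ, hφ, hind, htop⟩ := hinduced
  obtain ⟨π, hπ, hrange⟩ := exists_isImprimitivitySystem H V φ hφ hind htop
  have hφfin : ∀ ω, FiniteDimensional F (φ ω) ∧ Module.finrank F (φ ω) ≤ a := by
    intro ω
    induction ω using Quotient.inductionOn' with
    | h x =>
    change FiniteDimensional F (φ (x : G ⧸ H)) ∧ Module.finrank F (φ (x : G ⧸ H)) ≤ a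
    rw [hφ, ← ha]
    exact ⟨inferInstance, Submodule.finrank_map_le _ _⟩
  have := fun ω => (hφfin ω).1
  have : FiniteDimensional F W := by
    have h : FiniteDimensional F (⨆ ω, φ ω : Submodule F W) := inferInstance
    rw [htop] at h
    exact Module.finite_def.2 ((Submodule.fg_top _).1 (Module.finite_def.1 h))
  have hfin : ∀ ω, Module.finrank F (LinearMap.range (π ω)) ≤ a := fun ω =>
    (Submodule.finrank_mono (hrange ω)).trans (hφfin ω).2
  have hcompl : dMod G S ≤ a * (H.index / lpp (H.index / p ^ H.index.factorization p)) := by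
    obtain ⟨q, hq, hqp, hle⟩ := exists_prime_ne_div_pow_factorization_le H.index p
    have : Fact q.Prime := ⟨hq⟩
    let P : Sylow q G := default
    exact (dMod_le_relGen P.toSubgroup S hSstable).trans
      ((relGen_sylow_le_of_ne H hπ hfin hp hqp P S hSstable).trans (Nat.mul_le_mul_left a hle))
  rw [Efun]
  split_ifs with h0
  · exact hcompl
  · rw [← Nat.mul_min_mul_left, le_min_iff]
    refine ⟨?_, hcompl⟩
    let P : Sylow p G := default
    refine (dMod_le_relGen P.toSubgroup S hSstable).trans ?_
    have hlog : Real.logb p ((p : ℝ) ^ H.index.factorization p) = H.index.factorization p := by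
      rw [← Real.rpow_natCast, Real.logb_rpow (by exact_mod_cast hp.pos)
        (by exact_mod_cast hp.one_lt.ne')]
    rw [hlog]
    exact relGen_le_of_isPGroup (hπ.subgroup P.toSubgroup) P.isPGroup' hfin
      (Nat.pos_of_ne_zero h0) (exists_card_orbit_sylow H p P) S fun g => hSstable g
end

section
/- Let G be a finite group, H a subgroup of G of index n ≥ 2, F a field of characteristic p > 0, V an H-module of finite dimension a over F, and S a submodule of the induced module V↑G = F[G] ⊗_{F[H]} V. Then: (i) if n_p ≥ √n, then d_G(S) ≤ a·E(n,p) ≤ a·⌊b₁·n/√(log n)⌋, where b₁ := 2/√π; (ii) if n_p ≤ √n, then d_G(S) ≤ a·E(n,p) ≤ ⌊2an/(c'·log n)⌋, where c' := ln 2/1.25506. In particular, d_G(S) ≤ a·E(n,p) ≤ ⌊2an/(c'·log n)⌋ if 2 ≤ n ≤ 1260, and d_G(S) ≤ a·E(n,p) ≤ ⌊a·b₁·n/√(log n)⌋ if n ≥ 1261. -/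
theorem six_mul_carry {k q : ℕ} (h1 : k < q) (h2 : q ≤ 6 * k) :
    q ≤ 3 * k % q + 3 * k % q ∨ q ≤ k % q + 2 * k % q := by
  have hk : k % q = k := Nat.mod_eq_of_lt h1
  rw [hk]
  rcases lt_or_ge (3 * k) q with h | h
  · left; rw [Nat.mod_eq_of_lt h]; omega
  rcases lt_or_ge (2 * k) q with h' | h'
  · right; rw [Nat.mod_eq_of_lt h']; omega
  have e2 : 2 * k % q = 2 * k - q := by
    rw [Nat.mod_eq_sub_mod h', Nat.mod_eq_of_lt (by omega)]
  rcases le_or_gt (2 * q) (3 * k) with h'' | h''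
  · right; omega
  · left
    have : 3 * k % q = 3 * k - q := by
      rw [Nat.mod_eq_sub_mod h, Nat.mod_eq_of_lt (by omega)]
    omega

theorem lcmUpto_six_mul_dvd (k : ℕ) :
    Nat.lcmUpto (6 * k) ∣
      Nat.lcmUpto k * ((6 * k).choose (3 * k) * (3 * k).choose k) := by
  have hc1 : (6 * k).choose (3 * k) ≠ 0 := (Nat.choose_pos (by omega)).ne'
  have hc2 : (3 * k).choose k ≠ 0 := (Nat.choose_pos (by omega)).ne'
  have hl := Nat.lcmUpto_ne_zero k
  rw [← Nat.factorization_prime_le_iff_dvd (Nat.lcmUpto_ne_zero _)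
    (mul_ne_zero hl (mul_ne_zero hc1 hc2))]
  intro p hp
  rw [Nat.factorization_mul hl (mul_ne_zero hc1 hc2), Nat.factorization_mul hc1 hc2]
  simp only [Finsupp.add_apply]
  rw [Nat.factorization_lcmUpto _ hp, Nat.factorization_lcmUpto _ hp]
  have e1 : 6 * k = 3 * k + 3 * k := by ring
  have e2 : 3 * k = 2 * k + k := by ring
  have f1 := Nat.factorization_choose' (n := 3 * k) (k := 3 * k) (b := Nat.log p (6 * k) + 1) hp
    (by rw [← e1]; exact Nat.lt_succ_self _)
  have f2 := Nat.factorization_choose' (n := 2 * k) (k := k) (b := Nat.log p (6 * k) + 1) hp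
    (by rw [← e2]; exact Nat.lt_succ_of_le (Nat.log_mono_right (by omega)))
  rw [← e1] at f1
  rw [← e2] at f2
  rw [f1, f2]
  have hsub : Finset.Ioc (Nat.log p k) (Nat.log p (6 * k)) ⊆
      {i ∈ Finset.Ico 1 (Nat.log p (6 * k) + 1) | p ^ i ≤ 3 * k % p ^ i + 3 * k % p ^ i} ∪
      {i ∈ Finset.Ico 1 (Nat.log p (6 * k) + 1) | p ^ i ≤ k % p ^ i + 2 * k % p ^ i} := by
    intro i hi
    rw [Finset.mem_Ioc] at hi
    have h1 : k < p ^ i := Nat.lt_pow_of_log_lt hp.one_lt hi.1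
    have hk : 6 * k ≠ 0 := by rintro h; simp [h] at hi; omega
    have h2 : p ^ i ≤ 6 * k := Nat.pow_le_of_le_log hk hi.2
    rw [← Finset.filter_or, Finset.mem_filter, Finset.mem_Ico]
    exact ⟨by omega, six_mul_carry h1 h2⟩
  have := (Finset.card_le_card hsub).trans (Finset.card_union_le _ _)
  rw [Nat.card_Ioc] at this
  omega

theorem choose_three_mul_le (k : ℕ) : (3 * k).choose k * 4 ^ k ≤ 27 ^ k := by
  have h := add_pow (1 : ℕ) 2 (3 * k)
  simp only [Nat.cast_id] at h
  have h2 := Finset.single_le_sum (f := fun m => 1 ^ m * 2 ^ (3 * k - m) * (3 * k).choose m)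
    (s := Finset.range (3 * k + 1)) (fun _ _ => Nat.zero_le _)
    (show k ∈ Finset.range (3 * k + 1) by simp; omega)
  rw [← h] at h2
  have e : 3 * k - k = 2 * k := by omega
  simp only [one_pow, one_mul, e, pow_mul] at h2
  norm_num at h2
  linarith

theorem lcmUpto_six_mul_le (k : ℕ) :
    Nat.lcmUpto (6 * k) ≤ Nat.lcmUpto k * 432 ^ k := by
  refine (Nat.le_of_dvd ?_ (lcmUpto_six_mul_dvd k)).trans ?_
  · have hc1 : 0 < (6 * k).choose (3 * k) := Nat.choose_pos (by omega)
    have hc2 : 0 < (3 * k).choose k := Nat.choose_pos (by omega)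
    have := Nat.lcmUpto_pos k
    positivity
  · gcongr
    have h1 : (6 * k).choose (3 * k) ≤ 64 ^ k := by
      refine (Nat.choose_le_two_pow _ _).trans ?_
      rw [pow_mul]; norm_num
    have h2 := choose_three_mul_le k
    have : (432 : ℕ) ^ k * 4 ^ k = 64 ^ k * 27 ^ k := by
      rw [← mul_pow, ← mul_pow]; norm_num
    refine Nat.le_of_mul_le_mul_right (c := 4 ^ k) ?_ (by positivity)
    calc (6 * k).choose (3 * k) * (3 * k).choose k * 4 ^ k
        = (6 * k).choose (3 * k) * ((3 * k).choose k * 4 ^ k) := by ring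
      _ ≤ 64 ^ k * 27 ^ k := by gcongr
      _ = _ := this.symm

theorem lcmUpto_mono : Monotone Nat.lcmUpto := by
  intro m n h
  refine Nat.le_of_dvd (Nat.lcmUpto_pos n) ?_
  exact Finset.lcm_mono (Finset.Icc_subset_Icc_right h)

theorem lcmUpto_succ (n : ℕ) :
    Nat.lcmUpto (n + 1) = Nat.lcm (n + 1) (Nat.lcmUpto n) := by
  unfold Nat.lcmUpto
  rw [← Finset.insert_Icc_right_eq_Icc_add_one (by omega), Finset.lcm_insert]
  rfl

/-- Checks `lcm(1, …, i) * 2 ^ i ≤ 7 ^ i` for the next `fuel` values of `i`. -/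
def lcmCheck : ℕ → ℕ → ℕ → Bool
  | 0, _, _ => true
  | fuel + 1, i, l => decide (l * 2 ^ i ≤ 7 ^ i) && lcmCheck fuel (i + 1) (Nat.lcm (i + 1) l)

theorem lcmCheck_sound (fuel i : ℕ) (h : lcmCheck fuel i (Nat.lcmUpto i) = true)
    (j : ℕ) (hj : j < fuel) :
    Nat.lcmUpto (i + j) * 2 ^ (i + j) ≤ 7 ^ (i + j) := by
  induction fuel generalizing i j with
  | zero => omega
  | succ f ih =>
    rw [lcmCheck, Bool.and_eq_true, decide_eq_true_eq, ← lcmUpto_succ] at h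
    cases j with
    | zero => exact h.1
    | succ j =>
      have := ih (i + 1) h.2 j (by omega)
      rwa [show i + (j + 1) = i + 1 + j by ring]

theorem lcmUpto_mul_two_pow_le (n : ℕ) : Nat.lcmUpto n * 2 ^ n ≤ 7 ^ n := by
  induction n using Nat.strong_induction_on with
  | _ n ih =>
    rcases lt_or_ge n 300 with hn | hn
    · have h0 : Nat.lcmUpto 0 = 1 := by simp [Nat.lcmUpto]
      have := lcmCheck_sound 300 0 (by rw [h0]; decide +kernel) n hn
      simpa using this
    · obtain ⟨k, r, hr, rfl⟩ : ∃ k r, r < 6 ∧ n = 6 * k + r :=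
        ⟨n / 6, n % 6, Nat.mod_lt _ (by norm_num), (Nat.div_add_mod n 6).symm⟩
      have hk : 40 ≤ k := by omega
      have h1 := ih (k + 1) (by omega)
      have h2 := lcmUpto_six_mul_le (k + 1)
      have h3 : Nat.lcmUpto (6 * k + r) ≤ Nat.lcmUpto (6 * (k + 1)) :=
        lcmUpto_mono (by omega)
      have key : 3024 ^ (k + 1) * 2 ^ (6 * k) ≤ 2 ^ (k + 1) * 7 ^ (6 * k) := by
        obtain ⟨t, rfl⟩ := Nat.exists_eq_add_of_le hk
        have hb : (3024 : ℕ) ^ (40 + 1) * 2 ^ (6 * 40) ≤ 2 ^ (40 + 1) * 7 ^ (6 * 40) := by norm_num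
        calc 3024 ^ (40 + t + 1) * 2 ^ (6 * (40 + t))
            = 3024 ^ (40 + 1) * 2 ^ (6 * 40) * (3024 * 2 ^ 6) ^ t := by
              rw [mul_pow, ← pow_mul]; ring
          _ ≤ 2 ^ (40 + 1) * 7 ^ (6 * 40) * (2 * 7 ^ 6) ^ t := by
              gcongr ?_ * ?_ ^ _
              norm_num
          _ = _ := by
              rw [mul_pow, ← pow_mul]; ring
      have h4 : Nat.lcmUpto (6 * (k + 1)) * 2 ^ (6 * k) ≤ 7 ^ (6 * k) := by
        refine Nat.le_of_mul_le_mul_right (c := 2 ^ (k + 1)) ?_ (by positivity)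
        calc Nat.lcmUpto (6 * (k + 1)) * 2 ^ (6 * k) * 2 ^ (k + 1)
            ≤ Nat.lcmUpto (k + 1) * 432 ^ (k + 1) * 2 ^ (6 * k) * 2 ^ (k + 1) := by gcongr
          _ = (Nat.lcmUpto (k + 1) * 2 ^ (k + 1)) * 432 ^ (k + 1) * 2 ^ (6 * k) := by ring
          _ ≤ 7 ^ (k + 1) * 432 ^ (k + 1) * 2 ^ (6 * k) := by gcongr
          _ = 3024 ^ (k + 1) * 2 ^ (6 * k) := by rw [← mul_pow]; norm_num
          _ ≤ _ := key.trans_eq (mul_comm _ _)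
      calc Nat.lcmUpto (6 * k + r) * 2 ^ (6 * k + r)
          ≤ Nat.lcmUpto (6 * (k + 1)) * 2 ^ (6 * k) * 2 ^ r := by
            rw [pow_add, ← mul_assoc]; gcongr
        _ ≤ 7 ^ (6 * k) * 7 ^ r := by gcongr; norm_num
        _ = _ := by rw [pow_add]

theorem lpp_pos (m : ℕ) : 0 < lpp m := lt_of_lt_of_le one_pos (le_max_left _ _)

theorem pow_factorization_le_lpp {m q : ℕ} (hq : q ∈ m.primeFactors) :
    q ^ m.factorization q ≤ lpp m :=
  (Finset.le_sup (f := fun q => q ^ m.factorization q) hq).trans (le_max_right _ _)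

theorem dvd_lcmUpto_lpp {m : ℕ} (hm : m ≠ 0) : m ∣ Nat.lcmUpto (lpp m) := by
  rw [← Nat.factorization_prime_le_iff_dvd hm (Nat.lcmUpto_ne_zero _)]
  intro q hq
  rw [Nat.factorization_lcmUpto _ hq]
  by_cases h : q ∈ m.primeFactors
  · exact Nat.le_log_of_pow_le hq.one_lt (pow_factorization_le_lpp h)
  · rw [← Nat.support_factorization, Finsupp.notMem_support_iff] at h
    simp [h]

theorem log_seven_halves_le : Real.log (7 / 2) ≤ 1.25506 := by
  rw [Real.log_le_iff_le_exp (by norm_num)]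
  have h1 := Real.exp_one_gt_d9
  have h2 := Real.quadratic_le_exp_of_nonneg (x := 0.25506) (by norm_num)
  have h3 : Real.exp 1.25506 = Real.exp 1 * Real.exp 0.25506 := by
    rw [← Real.exp_add]; norm_num
  rw [h3]
  calc (7 / 2 : ℝ) ≤ 2.7182818283 * (1 + 0.25506 + 0.25506 ^ 2 / 2) := by norm_num
    _ ≤ _ := by gcongr

theorem log_le_lpp {m : ℕ} (hm : m ≠ 0) : Real.log m ≤ 1.25506 * lpp m := by
  have h1 : m * 2 ^ lpp m ≤ 7 ^ lpp m :=
    (Nat.mul_le_mul_right _ (Nat.le_of_dvd (Nat.lcmUpto_pos _) (dvd_lcmUpto_lpp hm))).trans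
      (lcmUpto_mul_two_pow_le _)
  have h2 : (m : ℝ) ≤ (7 / 2) ^ lpp m := by
    rw [div_pow, le_div_iff₀ (by positivity)]
    exact_mod_cast h1
  calc Real.log m ≤ Real.log ((7 / 2) ^ lpp m) :=
        Real.log_le_log (by positivity) h2
    _ = lpp m * Real.log (7 / 2) := by rw [Real.log_pow]
    _ ≤ lpp m * 1.25506 := by gcongr; exact log_seven_halves_le
    _ = _ := mul_comm _ _

theorem Efun_le_div (n p : ℕ) : Efun n p ≤ n / lpp (n / p ^ n.factorization p) := by
  unfold Efun
  split_ifs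
  · exact le_rfl
  · exact min_le_right _ _

/-- The bound on `E(n,p)` when the `p`-part of `n` is small. -/
theorem Efun_le_of_le_sqrt {n p : ℕ} (hn : 2 ≤ n)
    (h : ((p ^ n.factorization p : ℕ) : ℝ) ≤ Real.sqrt n) :
    (Efun n p : ℝ) ≤ 2 * n / (Real.log 2 / 1.25506 * Real.logb 2 n) := by
  have hlog2 : 0 < Real.log 2 := Real.log_pos (by norm_num)
  have hn0 : (0 : ℝ) < n := by positivity
  have hlogn : 0 < Real.log n := Real.log_pos (by exact_mod_cast hn)
  set k := p ^ n.factorization p with hk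
  have hkn : k ∣ n := Nat.ordProj_dvd n p
  obtain ⟨m, hm⟩ := hkn
  have hm0 : m ≠ 0 := by rintro rfl; omega
  have hk0 : 0 < k := by
    rcases Nat.eq_zero_or_pos k with h0 | h0
    · rw [h0] at hm; omega
    · exact h0
  have hdiv : n / k = m := by rw [hm]; exact Nat.mul_div_cancel_left _ hk0
  have hE := Efun_le_div n p
  rw [← hk, hdiv] at hE
  have hsq : Real.sqrt n ≤ m := by
    have h1 : Real.sqrt n * Real.sqrt n = k * m := by
      rw [Real.mul_self_sqrt hn0.le]; exact_mod_cast hm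
    have h2 : (0 : ℝ) < k := by exact_mod_cast hk0
    have h3 : 0 < Real.sqrt n := Real.sqrt_pos.2 hn0
    nlinarith
  have hL : Real.log n / 2 ≤ 1.25506 * lpp m := by
    rw [← Real.log_sqrt hn0.le]
    exact (Real.log_le_log (Real.sqrt_pos.2 hn0) hsq).trans (log_le_lpp hm0)
  have hLpos : (0 : ℝ) < lpp m := by exact_mod_cast lpp_pos m
  calc (Efun n p : ℝ) ≤ ((n / lpp m : ℕ) : ℝ) := by exact_mod_cast hE
    _ ≤ n / lpp m := Nat.cast_div_le
    _ ≤ 2 * n / (Real.log n / 1.25506) := by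
        rw [div_le_div_iff₀ hLpos (by positivity)]
        have : Real.log n / 1.25506 ≤ 2 * lpp m := by
          rw [div_le_iff₀ (by norm_num)]; linarith
        nlinarith
    _ = _ := by
        congr 1
        rw [Real.logb]
        field_simp

theorem logb_two_le_sub_one {p : ℕ} (hp : 2 ≤ p) : Real.logb 2 p ≤ (p : ℝ) - 1 := by
  rw [Real.logb_le_iff_le_rpow (by norm_num) (by positivity)]
  have h : p ≤ 2 ^ (p - 1) := by
    have := Nat.lt_two_pow_self (n := p - 1)
    omega
  have e : ((p : ℝ) - 1) = ((p - 1 : ℕ) : ℝ) := by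
    rw [Nat.cast_sub (by omega)]; simp
  rw [e, Real.rpow_natCast]
  exact_mod_cast h

theorem logb_self_pow {p : ℕ} (hp : 2 ≤ p) (k : ℕ) : Real.logb p ((p : ℝ) ^ k) = k := by
  rw [Real.logb_pow, Real.logb_self_eq_one (by exact_mod_cast hp), mul_one]

theorem two_div_sqrt_pi : 2 / Real.sqrt Real.pi = Real.sqrt (2 / Real.pi) * Real.sqrt 2 := by
  rw [← Real.sqrt_mul (by positivity),
    show (2 / Real.pi * 2 : ℝ) = 2 ^ 2 / Real.pi by ring, Real.sqrt_div (by positivity),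
    Real.sqrt_sq (by norm_num)]

/-- The bound on `E(n,p)` when the `p`-part of `n` is large. -/
theorem Efun_le_of_sqrt_le {n p : ℕ} (hn : 2 ≤ n) (hp : p.Prime)
    (h : Real.sqrt n ≤ (p ^ n.factorization p : ℕ)) :
    Efun n p ≤ ⌊(2 / Real.sqrt Real.pi) * n / Real.sqrt (Real.logb 2 n)⌋₊ := by
  have hn1 : (1 : ℝ) < n := by exact_mod_cast hn
  have hn0 : (0 : ℝ) < n := by positivity
  have hp2 := hp.two_le
  have hk : n.factorization p ≠ 0 := by
    intro h0
    rw [h0, pow_zero, Nat.cast_one] at h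
    have := (Real.lt_sqrt (y := n) zero_le_one).2 (by rw [one_pow]; exact hn1)
    linarith
  have hE : Efun n p ≤ ⌊Real.sqrt (2 / Real.pi) * n /
        Real.sqrt (((p : ℝ) - 1) * Real.logb p (p ^ n.factorization p))⌋₊ := by
    unfold Efun
    rw [if_neg hk]
    exact min_le_left _ _
  refine hE.trans (Nat.floor_le_floor ?_)
  rw [logb_self_pow hp2]
  set k := n.factorization p
  have hlog : Real.logb 2 n / 2 ≤ ((p : ℝ) - 1) * k := by
    have h1 : Real.logb 2 (Real.sqrt n) ≤ Real.logb 2 ((p : ℝ) ^ k) :=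
      Real.logb_le_logb_of_le (by norm_num) (Real.sqrt_pos.2 hn0) (by exact_mod_cast h)
    rw [Real.logb_pow, Real.logb, Real.log_sqrt hn0.le] at h1
    have h2 := logb_two_le_sub_one hp2
    have h3 : Real.logb 2 n / 2 = Real.log n / 2 / Real.log 2 := by rw [Real.logb]; ring
    rw [h3]
    refine h1.trans ?_
    rw [mul_comm]
    gcongr
  have hx : 0 < Real.logb 2 n := Real.logb_pos (by norm_num) hn1
  rw [two_div_sqrt_pi]
  have h4 : Real.sqrt (Real.logb 2 n) ≤ Real.sqrt 2 * Real.sqrt (((p : ℝ) - 1) * k) := by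
    rw [← Real.sqrt_mul (by norm_num)]
    exact Real.sqrt_le_sqrt (by linarith)
  have h5 : 0 < Real.sqrt (((p : ℝ) - 1) * k) := Real.sqrt_pos.2 (by linarith)
  rw [div_le_div_iff₀ h5 (Real.sqrt_pos.2 hx)]
  have h6 : 0 ≤ Real.sqrt (2 / Real.pi) * n := by positivity
  calc _ ≤ Real.sqrt (2 / Real.pi) * n * (Real.sqrt 2 * Real.sqrt (((p : ℝ) - 1) * k)) := by
        gcongr
    _ = _ := by ring

set_option exponentiation.threshold 2000 in
theorem logb_two_le_of_le_1260 {n : ℕ} (hn : 2 ≤ n) (h : n ≤ 1260) :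
    Real.logb 2 n ≤ (1308 / 127) := by
  have h1 : Real.logb 2 n ≤ Real.logb 2 1260 :=
    Real.logb_le_logb_of_le (by norm_num) (by positivity) (by exact_mod_cast h)
  have h2 : Real.logb 2 ((1260 : ℝ) ^ 127) ≤ Real.logb 2 ((2 : ℝ) ^ 1308) :=
    Real.logb_le_logb_of_le (by norm_num) (by positivity) (by norm_num)
  rw [Real.logb_pow, Real.logb_pow, Real.logb_self_eq_one (by norm_num)] at h2
  norm_num at h2
  rw [le_div_iff₀ (by norm_num)]
  linarith

theorem le_logb_two_of_1261_le {n : ℕ} (h : 1261 ≤ n) : 10.3 ≤ Real.logb 2 n := by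
  have h1 : Real.logb 2 1261 ≤ Real.logb 2 n :=
    Real.logb_le_logb_of_le (by norm_num) (by norm_num) (by exact_mod_cast h)
  have h2 : Real.logb 2 ((2 : ℝ) ^ 103) ≤ Real.logb 2 ((1261 : ℝ) ^ 10) :=
    Real.logb_le_logb_of_le (by norm_num) (by positivity) (by norm_num)
  rw [Real.logb_pow, Real.logb_pow, Real.logb_self_eq_one (by norm_num)] at h2
  norm_num at h2
  norm_num
  linarith

theorem sqrt_pi_mul_div_log_two_sq :
    ((1308 / 127) : ℝ) ≤ (1.25506 * Real.sqrt Real.pi / Real.log 2) ^ 2 ∧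
      (1.25506 * Real.sqrt Real.pi / Real.log 2) ^ 2 < 10.3 := by
  have h1 := Real.log_two_gt_d9
  have h2 := Real.log_two_lt_d9
  have h3 := Real.pi_gt_d6
  have h4 := Real.pi_lt_d6
  rw [div_pow, mul_pow, Real.sq_sqrt Real.pi_pos.le]
  constructor
  · rw [le_div_iff₀ (by positivity)]
    calc (1308 / 127) * Real.log 2 ^ 2 ≤ (1308 / 127) * 0.6931471808 ^ 2 := by gcongr
      _ ≤ 1.25506 ^ 2 * 3.141592 := by norm_num
      _ ≤ _ := by gcongr
  · rw [div_lt_iff₀ (by positivity)]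
    calc 1.25506 ^ 2 * Real.pi ≤ 1.25506 ^ 2 * 3.141593 := by gcongr
      _ < 10.3 * 0.6931471803 ^ 2 := by norm_num
      _ ≤ _ := by gcongr

theorem sqrt_bound_le_log_bound_iff {x N : ℝ} (hx : 0 < x) (hN : 0 < N) :
    (2 / Real.sqrt Real.pi) * N / Real.sqrt x ≤ 2 * N / (Real.log 2 / 1.25506 * x) ↔
      x ≤ (1.25506 * Real.sqrt Real.pi / Real.log 2) ^ 2 := by
  have hl : 0 < Real.log 2 := Real.log_pos (by norm_num)
  have hs : 0 < Real.sqrt x := Real.sqrt_pos.2 hx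
  have hpi : 0 < Real.sqrt Real.pi := Real.sqrt_pos.2 Real.pi_pos
  rw [← Real.sqrt_le_left (by positivity), le_div_iff₀ hl, div_le_div_iff₀ hs (by positivity)]
  have e : 2 / Real.sqrt Real.pi * N * (Real.log 2 / 1.25506 * x) =
      (2 * N * Real.sqrt x / (Real.sqrt Real.pi * 1.25506)) * (Real.sqrt x * Real.log 2) := by
    nth_rw 1 [← Real.mul_self_sqrt hx.le]
    field_simp
  have e' : 2 * N * Real.sqrt x = (2 * N * Real.sqrt x / (Real.sqrt Real.pi * 1.25506)) *
      (1.25506 * Real.sqrt Real.pi) := by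
    field_simp
  rw [e]
  nth_rw 2 [e']
  exact mul_le_mul_iff_right₀ (by positivity)


theorem Efun_le_of_le_1260 {n p : ℕ} (hn : 2 ≤ n) (hp : p.Prime) (h : n ≤ 1260) :
    (Efun n p : ℝ) ≤ 2 * n / (Real.log 2 / 1.25506 * Real.logb 2 n) := by
  rcases le_total (Real.sqrt n) (p ^ n.factorization p : ℕ) with h' | h'
  · have hx : 0 < Real.logb 2 n := Real.logb_pos (by norm_num) (by exact_mod_cast hn)
    refine le_trans ?_ ((sqrt_bound_le_log_bound_iff hx (by positivity)).2
      ((logb_two_le_of_le_1260 hn h).trans sqrt_pi_mul_div_log_two_sq.1))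
    exact (Nat.le_floor_iff (by positivity)).1 (Efun_le_of_sqrt_le hn hp h')
  · exact Efun_le_of_le_sqrt hn h'

theorem Efun_le_of_1261_le {n p : ℕ} (hp : p.Prime) (h : 1261 ≤ n) :
    (Efun n p : ℝ) ≤ (2 / Real.sqrt Real.pi) * n / Real.sqrt (Real.logb 2 n) := by
  have hn : 2 ≤ n := by omega
  have hx : 0 < Real.logb 2 n := Real.logb_pos (by norm_num) (by exact_mod_cast hn)
  rcases le_total (Real.sqrt n) (p ^ n.factorization p : ℕ) with h' | h'
  · exact (Nat.le_floor_iff (by positivity)).1 (Efun_le_of_sqrt_le hn hp h')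
  · refine (Efun_le_of_le_sqrt hn h').trans ?_
    by_contra! hlt
    have hle := (sqrt_bound_le_log_bound_iff hx (by positivity)).1 hlt.le
    have h1 := le_logb_two_of_1261_le h
    have h2 := sqrt_pi_mul_div_log_two_sq.2
    linarith

/-- `walkSum K x` is the central coefficient of `(1 + t + ⋯ + t ^ (x - 1)) * (1 + t) ^ K` for
`x ≥ 0`, extended to an odd function of `x`. -/
def walkSum : ℕ → ℤ → ℤ
  | 0, x => x.sign
  | K + 1, x => walkSum K (x + 1) + walkSum K (x - 1)

theorem walkSum_neg (K : ℕ) (x : ℤ) : walkSum K (-x) = -walkSum K x := by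
  induction K generalizing x with
  | zero => simp [walkSum]
  | succ K ih =>
    rw [walkSum, walkSum, show -x + 1 = -(x - 1) by ring, show -x - 1 = -(x + 1) by ring, ih, ih]
    ring

theorem walkSum_zero_right (K : ℕ) : walkSum K 0 = 0 := by
  have := walkSum_neg K 0
  rw [neg_zero] at this
  omega

theorem walkSum_concave (K : ℕ) {x : ℤ} (hx : 0 ≤ x) :
    walkSum K (x + 2) + walkSum K (x - 2) ≤ 2 * walkSum K x := by
  induction K generalizing x with
  | zero =>
    simp only [walkSum]
    rcases hx.eq_or_lt with rfl | hx
    · decide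
    · rw [Int.sign_eq_one_of_pos hx, Int.sign_eq_one_of_pos (show 0 < x + 2 by omega)]
      rcases lt_trichotomy (x - 2) 0 with h | h | h
      · rw [Int.sign_eq_neg_one_of_neg h]; norm_num
      · rw [h]; simp
      · rw [Int.sign_eq_one_of_pos h]; norm_num
  | succ K ih =>
    rcases hx.eq_or_lt with rfl | hx
    · have := walkSum_neg (K + 1) 2
      rw [walkSum_zero_right, zero_add, zero_sub, this]; simp
    · simp only [walkSum]
      have h1 := ih (x := x + 1) (by omega)
      have h2 := ih (x := x - 1) (by omega)
      rw [show x + 2 + 1 = x + 1 + 2 by ring, show x + 2 - 1 = x - 1 + 2 by ring,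
        show x - 2 + 1 = x + 1 - 2 by ring, show x - 2 - 1 = x - 1 - 2 by ring]
      linarith

theorem walkSum_diff_antitone (K k : ℕ) {t : ℤ} (ht : -2 ≤ t) :
    walkSum K (t + 2 * k + 2) - walkSum K (t + 2 * k) ≤ walkSum K (t + 2) - walkSum K t := by
  induction k with
  | zero => simp
  | succ k ih =>
    have h := walkSum_concave K (x := t + 2 * k + 2) (by omega)
    rw [show t + 2 * (k : ℤ) + 2 - 2 = t + 2 * k by ring] at h
    push_cast
    rw [show t + 2 * ((k : ℤ) + 1) = t + 2 * k + 2 by ring]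
    linarith

theorem walkSum_add_sub_le (K : ℕ) {x y : ℤ} (hx : 0 ≤ x) (hy : 0 ≤ y) :
    walkSum K (x + (y + 2)) + walkSum K (x - (y + 2)) ≤ walkSum K (x + y) + walkSum K (x - y) := by
  rcases le_or_gt y x with h | h
  · have := walkSum_diff_antitone K (y + 1).toNat (t := x - y - 2) (by omega)
    rw [Int.toNat_of_nonneg (by omega), show x - y - 2 + 2 * (y + 1) = x + y by ring,
      show x - y - 2 + 2 = x - y by ring] at this
    rw [show x + (y + 2) = x + y + 2 by ring, show x - (y + 2) = x - y - 2 by ring]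
    linarith
  · have := walkSum_diff_antitone K x.toNat (t := y - x) (by omega)
    rw [Int.toNat_of_nonneg hx, show y - x + 2 * x = x + y by ring] at this
    rw [show x - (y + 2) = -(y - x + 2) by ring, show x - y = -(y - x) by ring, walkSum_neg,
      walkSum_neg, show x + (y + 2) = x + y + 2 by ring]
    linarith

theorem walkSum_add (K j : ℕ) (x : ℤ) :
    walkSum (K + j) x = ∑ ij ∈ Finset.HasAntidiagonal.antidiagonal j,
      j.choose ij.1 • walkSum K (x + ij.2 - ij.1) := by
  induction j generalizing x with
  | zero => simp
  | succ j ih =>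
    rw [Finset.sum_antidiagonal_choose_succ_nsmul (fun a b => walkSum K (x + b - a)),
      ← add_assoc, walkSum, ih, ih]
    congr 1
    · refine Finset.sum_congr rfl fun ij _ => ?_
      congr 2; push_cast; ring
    · refine Finset.sum_congr rfl fun ij h => ?_
      rw [Finset.HasAntidiagonal.mem_antidiagonal] at h
      rw [Nat.choose_symm_of_eq_add h.symm]
      congr 2; push_cast; ring

theorem choose_mono_half {q i j : ℕ} (hij : i ≤ j) (hj : 2 * j ≤ q) :
    q.choose i ≤ q.choose j := by
  induction j, hij using Nat.le_induction with
  | base => exact le_rfl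
  | succ j _ ih =>
    exact (ih (by omega)).trans (Nat.choose_le_succ_of_lt_half_left (by omega))

/-- Replacing a uniform step by a binomial step increases the central coefficient. -/
theorem two_pow_mul_sum_walkSum_le (K q : ℕ) {x : ℤ} (hx : 0 ≤ x) :
    2 ^ q * ∑ i ∈ Finset.range (q + 1), walkSum K (x + q - 2 * i) ≤
      (q + 1) * walkSum (K + q) x := by
  set g : ℕ → ℤ := fun i => walkSum K (x + q - 2 * i) with hg
  set G : ℕ → ℤ := fun i => walkSum K (x + (q - 2 * i)) + walkSum K (x - (q - 2 * i)) with hG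
  have hgG : ∀ i ≤ q, G i = g i + g (q - i) := by
    intro i hi
    simp only [hG, hg, Nat.cast_sub hi]
    congr 2 <;> ring
  have hGsymm : ∀ i ≤ q, G (q - i) = G i := by
    intro i hi
    rw [hgG _ (Nat.sub_le _ _), hgG _ hi, Nat.sub_sub_self hi, add_comm]
  have hGmono : ∀ i j, i ≤ j → 2 * j ≤ q → G i ≤ G j := by
    intro i j hij hj
    induction j, hij using Nat.le_induction with
    | base => exact le_rfl
    | succ j _ ih =>
      refine (ih (by omega)).trans ?_
      have := walkSum_add_sub_le K (x := x) (y := q - 2 * (j + 1 : ℕ)) hx (by omega)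
      rw [show (q : ℤ) - 2 * (j + 1 : ℕ) + 2 = q - 2 * j by push_cast; ring] at this
      exact this
  have hmono : MonovaryOn G (fun i => (q.choose i : ℤ)) (Finset.range (q + 1)) := by
    intro i hi j hj h
    simp only [Finset.coe_range, Set.mem_Iio] at hi hj
    have key : ∀ i ≤ q, G (min i (q - i)) = G i ∧ q.choose (min i (q - i)) = q.choose i := by
      intro i hi
      rcases min_choice i (q - i) with h | h <;> rw [h]
      · simp
      · exact ⟨hGsymm i hi, Nat.choose_symm hi⟩
    rw [← (key i (by omega)).1, ← (key j (by omega)).1]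
    simp only [Nat.cast_lt] at h
    rw [← (key i (by omega)).2, ← (key j (by omega)).2] at h
    refine hGmono _ _ ?_ (by omega)
    by_contra! hlt
    have hle : q.choose (min j (q - j)) ≤ q.choose (min i (q - i)) :=
      choose_mono_half hlt.le (by omega)
    omega
  have hcheb := hmono.sum_mul_sum_le_card_mul_sum
  have hrefl : ∀ f : ℕ → ℤ, ∑ i ∈ Finset.range (q + 1), f (q - i) =
      ∑ i ∈ Finset.range (q + 1), f i := fun f => by
    have := Finset.sum_range_reflect f (q + 1)
    simpa using this
  have hsum1 : ∑ i ∈ Finset.range (q + 1), G i = 2 * ∑ i ∈ Finset.range (q + 1), g i := by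
    rw [Finset.sum_congr rfl fun i hi => hgG i (by rw [Finset.mem_range] at hi; omega),
      Finset.sum_add_distrib, hrefl]
    ring
  have hsum2 : ∑ i ∈ Finset.range (q + 1), G i * (q.choose i : ℤ) =
      2 * ∑ i ∈ Finset.range (q + 1), (q.choose i : ℤ) * g i := by
    have h1 : ∀ i ∈ Finset.range (q + 1), G i * (q.choose i : ℤ) =
        (q.choose i : ℤ) * g i + (q.choose (q - i) : ℤ) * g (q - i) := by
      intro i hi
      rw [Finset.mem_range] at hi
      rw [hgG i (by omega), Nat.choose_symm (by omega)]
      ring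
    rw [Finset.sum_congr rfl h1, Finset.sum_add_distrib,
      hrefl (fun i => (q.choose i : ℤ) * g i)]
    ring
  have hsum3 : ∑ i ∈ Finset.range (q + 1), (q.choose i : ℤ) = 2 ^ q := by
    exact_mod_cast Nat.sum_range_choose q
  have hwalk : walkSum (K + q) x = ∑ i ∈ Finset.range (q + 1), (q.choose i : ℤ) * g i := by
    rw [walkSum_add, Finset.Nat.sum_antidiagonal_eq_sum_range_succ_mk]
    refine Finset.sum_congr rfl fun i hi => ?_
    rw [Finset.mem_range] at hi
    simp only [hg, nsmul_eq_mul]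
    rw [Nat.cast_sub (by omega)]
    congr 2; ring
  rw [hsum1, hsum2, hsum3, Finset.card_range] at hcheb
  rw [hwalk]
  push_cast at hcheb ⊢
  linarith

theorem walkSum_one (K : ℕ) : walkSum K 1 = K.choose (K / 2) := by
  have h1 := walkSum_add 0 K 1
  have h2 := walkSum_add 0 K (-1)
  rw [zero_add] at h1 h2
  rw [walkSum_neg] at h2
  have h3 : 2 * walkSum K 1 = ∑ ij ∈ Finset.HasAntidiagonal.antidiagonal K, (K.choose ij.1 : ℤ) *
      ((1 + (ij.2 : ℤ) - ij.1).sign - (-1 + (ij.2 : ℤ) - ij.1).sign) := by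
    rw [two_mul]
    nth_rw 1 [h1]
    rw [← sub_neg_eq_add, h2, ← Finset.sum_sub_distrib]
    refine Finset.sum_congr rfl fun ij _ => ?_
    simp only [nsmul_eq_mul, walkSum]
    ring
  have hzero : ∀ a b : ℕ, a + 1 < b ∨ b + 1 < a →
      ((1 + (b : ℤ) - a).sign - (-1 + (b : ℤ) - a).sign) = 0 := by
    rintro a b (h | h)
    · rw [Int.sign_eq_one_of_pos (by omega), Int.sign_eq_one_of_pos (by omega), sub_self]
    · rw [Int.sign_eq_neg_one_of_neg (by omega), Int.sign_eq_neg_one_of_neg (by omega), sub_self]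
  obtain ⟨r, rfl | rfl⟩ := Nat.even_or_odd' K
  · rw [Finset.sum_eq_single (r, r)] at h3
    · simp at h3
      rw [Nat.mul_div_cancel_left _ (by norm_num)]
      linarith
    · rintro ⟨a, b⟩ hab hne
      rw [Finset.HasAntidiagonal.mem_antidiagonal] at hab
      simp only [ne_eq, Prod.mk.injEq] at hab hne
      rw [hzero a b (by omega), mul_zero]
    · intro h; simp at h; omega
  · rw [Finset.sum_eq_add (r, r + 1) (r + 1, r) (by simp)] at h3
    · have e : (2 * r + 1).choose (r + 1) = (2 * r + 1).choose r :=
        Nat.choose_symm_half r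
      have e1 : 1 + ((r : ℤ) + 1) - r = 2 := by ring
      have e2 : 1 + (r : ℤ) - (r + 1) = 0 := by ring
      have e3 : -1 + (r : ℤ) - (r + 1) = -2 := by ring
      have e4 : (2 : ℤ).sign = 1 := rfl
      have e5 : (-2 : ℤ).sign = -1 := rfl
      simp [e, e1, e2, e3, e4, e5] at h3
      rw [show (2 * r + 1) / 2 = r by omega]
      linarith
    · rintro ⟨a, b⟩ hab hne
      rw [Finset.HasAntidiagonal.mem_antidiagonal] at hab
      simp only [ne_eq, Prod.mk.injEq] at hab hne
      rw [hzero a b (by omega), mul_zero]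
    · intro h; simp at h; omega
    · intro h; simp at h; omega

theorem centralBinom_le {r : ℕ} (hr : r ≠ 0) :
    (r.centralBinom : ℝ) ≤ 4 ^ r / Real.sqrt (Real.pi * r) := by
  have hr0 : (0 : ℝ) < r := by positivity
  have hpi := Real.pi_pos
  have h := Real.Wallis.le_W r
  rw [Real.Wallis.W_eq_factorial_ratio] at h
  have hc : (r.centralBinom : ℝ) = (2 * r).factorial / (r.factorial ^ 2 : ℝ) := by
    rw [eq_div_iff (by positivity), pow_two]
    have := Nat.choose_mul_factorial_mul_factorial (n := 2 * r) (k := r) (by omega)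
    rw [show 2 * r - r = r by omega, mul_assoc] at this
    exact_mod_cast this
  have hcpos : (0 : ℝ) < r.centralBinom := by exact_mod_cast Nat.centralBinom_pos r
  have hW : (2 : ℝ) ^ (4 * r) * r.factorial ^ 4 / ((2 * r).factorial ^ 2 * (2 * r + 1)) =
      (4 ^ r) ^ 2 / ((r.centralBinom : ℝ) ^ 2 * (2 * r + 1)) := by
    rw [hc, show (2 : ℝ) ^ (4 * r) = (4 ^ r) ^ 2 by
      rw [← pow_mul, show (4 : ℝ) = 2 ^ 2 by norm_num, ← pow_mul]; congr 1; ring]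
    field_simp
  rw [hW] at h
  rw [le_div_iff₀ (Real.sqrt_pos.2 (by positivity))]
  refine (sq_le_sq₀ (by positivity) (by positivity)).1 ?_
  rw [mul_pow, Real.sq_sqrt (by positivity)]
  rw [div_mul_div_comm, div_le_div_iff₀ (by positivity) (by positivity)] at h
  have hcc : (0 : ℝ) < (r.centralBinom : ℝ) ^ 2 := by positivity
  set c := (r.centralBinom : ℝ) ^ 2
  set f := ((4 : ℝ) ^ r) ^ 2
  have h' : Real.pi * c * (2 * r + 1) ^ 2 ≤ f * (4 * (r + 1)) := by nlinarith
  have h'' : c * (Real.pi * r) * (4 * (r + 1)) ≤ f * (4 * (r + 1)) := by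
    refine le_trans ?_ h'
    have : 0 < Real.pi * c := by positivity
    nlinarith
  exact le_of_mul_le_mul_right h'' (by positivity)

theorem choose_half_le_s16 {K : ℕ} (hK : K ≠ 0) :
    (K.choose (K / 2) : ℝ) ≤ 2 ^ K * (Real.sqrt (2 / Real.pi) / Real.sqrt K) := by
  have hpi := Real.pi_pos
  have e : Real.sqrt (2 / Real.pi) / Real.sqrt K = 1 / Real.sqrt (Real.pi * (K / 2)) := by
    rw [← Real.sqrt_div (by positivity), one_div, ← Real.sqrt_inv]
    congr 1
    field_simp
  rw [e, mul_one_div]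
  obtain ⟨r, rfl | rfl⟩ := Nat.even_or_odd' K
  · have := centralBinom_le (r := r) (by omega)
    rw [Nat.mul_div_cancel_left _ (by norm_num), ← Nat.centralBinom_eq_two_mul_choose]
    rw [pow_mul, show ((2 * r : ℕ) : ℝ) / 2 = r by push_cast; ring]
    norm_num only at this ⊢
    exact this
  · have h1 := centralBinom_le (r := r + 1) (by omega)
    have h2 : (r + 1).centralBinom = 2 * (2 * r + 1).choose r := by
      rw [Nat.centralBinom_eq_two_mul_choose, show 2 * (r + 1) = 2 * r + 1 + 1 by ring,
        Nat.choose_succ_succ, Nat.choose_symm_half]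
      omega
    rw [show (2 * r + 1) / 2 = r by omega]
    rw [h2] at h1
    push_cast at h1 ⊢
    have h3 : Real.sqrt (Real.pi * ((2 * r + 1) / 2)) ≤ Real.sqrt (Real.pi * (r + 1)) := by
      apply Real.sqrt_le_sqrt
      gcongr
      linarith
    have h4 : (4 : ℝ) ^ (r + 1) = 2 * 2 ^ (2 * r + 1) := by
      rw [show (4 : ℝ) = 2 ^ 2 by norm_num, ← pow_mul]; ring
    rw [h4, mul_div_assoc] at h1
    refine (le_of_mul_le_mul_left h1 (by norm_num)).trans ?_
    gcongr

section GenRank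

variable {R M M' : Type*} [Ring R] [AddCommGroup M] [Module R M] [AddCommGroup M'] [Module R M']

/-- The minimal number of elements of `B` which generate `B` modulo `A`. -/
noncomputable def genRank (A B : Submodule R M) : ℕ :=
  sInf {k | ∃ T : Finset M, T.card = k ∧ (T : Set M) ⊆ B ∧ B ≤ A ⊔ Submodule.span R T}

theorem genRank_le {A B : Submodule R M} (T : Finset M) (hT : (T : Set M) ⊆ B)
    (h : B ≤ A ⊔ Submodule.span R T) : genRank A B ≤ T.card :=
  Nat.sInf_le ⟨T, rfl, hT, h⟩

theorem genRank_eq_zero {A B : Submodule R M} (h : B ≤ A) : genRank A B = 0 :=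
  Nat.le_zero.1 (genRank_le ∅ (by simp) (h.trans le_sup_left))

theorem exists_card_eq_genRank [IsNoetherian R M] (A B : Submodule R M) :
    ∃ T : Finset M, T.card = genRank A B ∧ (T : Set M) ⊆ B ∧ B ≤ A ⊔ Submodule.span R T := by
  refine Nat.sInf_mem (s := {k | ∃ T : Finset M, T.card = k ∧ (T : Set M) ⊆ B ∧
    B ≤ A ⊔ Submodule.span R T}) ?_
  obtain ⟨T, hT⟩ := IsNoetherian.noetherian B
  exact ⟨_, T, rfl, hT ▸ Submodule.subset_span, hT ▸ le_sup_right⟩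

theorem genRank_anti [IsNoetherian R M] {A A' : Submodule R M} (B : Submodule R M) (h : A ≤ A') :
    genRank A' B ≤ genRank A B := by
  obtain ⟨T, hc, hT, hB⟩ := exists_card_eq_genRank A B
  exact hc ▸ genRank_le T hT (hB.trans (sup_le_sup_right h _))

theorem genRank_map_le [IsNoetherian R M] (f : M →ₗ[R] M') (A B : Submodule R M) :
    genRank (A.map f) (B.map f) ≤ genRank A B := by
  classical
  obtain ⟨T, hc, hT, hB⟩ := exists_card_eq_genRank A B
  rw [← hc]
  refine (genRank_le (T.image f) ?_ ?_).trans Finset.card_image_le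
  · rw [Finset.coe_image, Submodule.map_coe]
    exact Set.image_mono hT
  · rw [Finset.coe_image, ← Submodule.map_span, ← Submodule.map_sup]
    exact Submodule.map_mono hB

theorem exists_lift_genRank [IsNoetherian R M'] (f : M →ₗ[R] M') (A : Submodule R M')
    (B : Submodule R M) : ∃ T : Finset M, T.card ≤ genRank A (B.map f) ∧ (T : Set M) ⊆ B ∧
      B.map f ≤ A ⊔ (Submodule.span R (T : Set M)).map f := by
  classical
  obtain ⟨T, hc, hT, hB⟩ := exists_card_eq_genRank A (B.map f)
  rw [Submodule.map_coe, Finset.subset_set_image_iff] at hT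
  obtain ⟨T', hT', rfl⟩ := hT
  obtain ⟨T'', hsub, hinj, himg⟩ : ∃ T'' ⊆ T', Set.InjOn f T'' ∧ T''.image f = T'.image f := by
    obtain ⟨u, hu, hbij⟩ := (T' : Set M).exists_subset_bijOn f
    have hfin : u.Finite := T'.finite_toSet.subset hu
    refine ⟨hfin.toFinset, fun x hx => hu (by simpa using hx), by simpa using hbij.injOn, ?_⟩
    apply Finset.coe_injective
    simpa using hbij.image_eq
  refine ⟨T'', ?_, fun x hx => hT' (hsub hx), ?_⟩
  · rw [← hc, ← himg]
    exact (Finset.card_image_of_injOn hinj).ge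
  · rwa [Submodule.map_span, ← Finset.coe_image, himg]

theorem genRank_bot_le_add [IsNoetherian R M] (A S : Submodule R M) :
    genRank ⊥ S ≤ genRank ⊥ (S ⊓ A) + genRank ⊥ (S.map A.mkQ) := by
  classical
  obtain ⟨T, hc, hT, hB⟩ := exists_card_eq_genRank ⊥ (S ⊓ A)
  obtain ⟨T', hc', hT', hB'⟩ := exists_lift_genRank A.mkQ ⊥ S
  have hle : genRank ⊥ S ≤ (T ∪ T').card := by
    refine genRank_le _ ?_ fun x hx => ?_
    · rw [Finset.coe_union]
      exact Set.union_subset (fun x hx => (hT hx).1) hT'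
    · rw [bot_sup_eq] at hB hB' ⊢
      obtain ⟨y, hy, hxy⟩ := hB' (Submodule.mem_map_of_mem hx)
      have hyS : y ∈ S := Submodule.span_le.2 hT' hy
      rw [← sub_add_cancel x y, Finset.coe_union, Submodule.span_union]
      refine add_mem (Submodule.mem_sup_left (hB ⟨sub_mem hx hyS, ?_⟩))
        (Submodule.mem_sup_right hy)
      exact (Submodule.Quotient.eq A).1 hxy.symm
  exact hle.trans ((Finset.card_union_le _ _).trans (by omega))

/-- The layers of a submodule `B` along the filtration by the ranges of the powers of `ζ`, seen in
the quotient by the range of `ζ`. -/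
def layerChain (ζ : Module.End R M) (B : Submodule R M) :
    ℕ → Submodule R (M ⧸ LinearMap.range ζ)
  | 0 => ⊥
  | j + 1 => (B.comap (ζ ^ j)).map (LinearMap.range ζ).mkQ

theorem layerChain_mono_left (ζ : Module.End R M) {A B : Submodule R M} (h : A ≤ B) (j : ℕ) :
    layerChain ζ A j ≤ layerChain ζ B j := by
  cases j with
  | zero => exact le_rfl
  | succ j => exact Submodule.map_mono (Submodule.comap_mono h)

theorem layerChain_monotone {ζ : Module.End R M} (c : R) (hζ : ∀ x, ζ x = c • x)
    (B : Submodule R M) : Monotone (layerChain ζ B) := by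
  refine monotone_nat_of_le_succ fun j => ?_
  cases j with
  | zero => exact bot_le
  | succ j =>
    refine Submodule.map_mono fun x hx => ?_
    rw [Submodule.mem_comap, pow_succ', Module.End.mul_apply, hζ]
    exact B.smul_mem c hx

theorem genRank_le_sum_layerChain [IsNoetherian R M] {ζ : Module.End R M} (c : R)
    (hζ : ∀ x, ζ x = c • x) {p : ℕ} (hp : ζ ^ p = 0) {A B : Submodule R M} (hAB : A ≤ B) :
    genRank A B ≤ ∑ j ∈ Finset.range p,
      genRank (layerChain ζ A (j + 1) ⊔ layerChain ζ B j) (layerChain ζ B (j + 1)) := by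
  classical
  choose T hcard hTB hT using fun j : ℕ => exists_lift_genRank (LinearMap.range ζ).mkQ
    (layerChain ζ A (j + 1) ⊔ layerChain ζ B j) (B.comap (ζ ^ j))
  set D : Finset M := (Finset.range p).biUnion fun j => (T j).image ⇑(ζ ^ j) with hD
  have hDB : (D : Set M) ⊆ B := by
    intro x hx
    simp only [hD, Finset.coe_biUnion, Set.mem_iUnion, Finset.coe_image] at hx
    obtain ⟨j, -, y, hy, rfl⟩ := hx
    exact hTB j hy
  set C := A ⊔ Submodule.span R (D : Set M) with hC
  have hCB : C ≤ B := sup_le hAB (Submodule.span_le.2 hDB)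
  have hstable : ∀ E : Submodule R M, E.map ζ ≤ E := by
    rintro E _ ⟨x, hx, rfl⟩
    rw [hζ]
    exact E.smul_mem c hx
  have hlow : ∀ j, ∃ L : Submodule R M, layerChain ζ B j ≤ L.map (LinearMap.range ζ).mkQ ∧
      L.map (ζ ^ j) ≤ B.map ζ := by
    rintro (_ | j)
    · exact ⟨⊥, bot_le, by simp⟩
    · refine ⟨B.comap (ζ ^ j), le_rfl, ?_⟩
      rintro _ ⟨x, hx, rfl⟩
      rw [pow_succ', Module.End.mul_apply]
      exact Submodule.mem_map_of_mem hx
  have hmain : ∀ k ≤ p, B ⊓ LinearMap.range (ζ ^ (p - k)) ≤ C ⊔ B.map ζ := by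
    intro k
    induction k with
    | zero => simp [hp]
    | succ k ih =>
      intro hk
      obtain ⟨j, hj⟩ : ∃ j, p = j + (k + 1) := ⟨p - (k + 1), by omega⟩
      have ih' := ih (by omega)
      rw [show p - k = j + 1 by omega] at ih'
      rw [show p - (k + 1) = j by omega]
      obtain ⟨L, hL, hLB⟩ := hlow j
      rintro x ⟨hxB, y, rfl⟩
      have hy : (LinearMap.range ζ).mkQ y ∈ ((A.comap (ζ ^ j) ⊔ L) ⊔
          Submodule.span R (T j : Set M)).map (LinearMap.range ζ).mkQ := by
        rw [Submodule.map_sup, Submodule.map_sup]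
        refine (hT j).trans (sup_le_sup_right (sup_le_sup_left hL _) _) ?_
        exact Submodule.mem_map_of_mem hxB
      obtain ⟨y', hy', hyy⟩ := hy
      obtain ⟨u, hu⟩ := (Submodule.Quotient.eq (LinearMap.range ζ)).1 hyy.symm
      have hy'2 : (ζ ^ j) y' ∈ C ⊔ B.map ζ := by
        have := Submodule.mem_map_of_mem (f := ζ ^ j) hy'
        rw [Submodule.map_sup, Submodule.map_sup] at this
        refine SetLike.le_def.1 (sup_le (sup_le ?_ ?_) ?_) this
        · exact (Submodule.map_comap_le _ _).trans (le_sup_left.trans le_sup_left)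
        · exact hLB.trans le_sup_right
        · rw [Submodule.map_span, Submodule.span_le]
          rintro _ ⟨t, ht, rfl⟩
          refine Submodule.mem_sup_left (Submodule.mem_sup_right (Submodule.subset_span ?_))
          simp only [hD, Finset.coe_biUnion, Set.mem_iUnion, Finset.coe_image]
          exact ⟨j, by simp; omega, t, ht, rfl⟩
      have hsum : (ζ ^ j) y = (ζ ^ j) y' + (ζ ^ (j + 1)) u := by
        rw [pow_succ, Module.End.mul_apply, hu, map_sub]; abel
      rw [hsum]
      refine add_mem hy'2 (ih' ⟨?_, u, rfl⟩)
      have : (ζ ^ (j + 1)) u = (ζ ^ j) y - (ζ ^ j) y' := by rw [hsum]; abel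
      rw [this]
      exact sub_mem hxB ((sup_le hCB (hstable B)) hy'2)
  have hB1 : B ≤ C ⊔ B.map ζ := by
    have := hmain p le_rfl
    simpa [Module.End.one_eq_id] using this
  have hBk : ∀ k, B ≤ C ⊔ B.map (ζ ^ k) := by
    intro k
    induction k with
    | zero => simp [Module.End.one_eq_id]
    | succ k ih =>
      refine ih.trans (sup_le le_sup_left ?_)
      have h := Submodule.map_mono (f := ζ ^ k) hB1
      rw [Submodule.map_sup, ← Submodule.map_comp] at h
      refine h.trans (sup_le_sup ?_ ?_)
      · clear h ih
        induction k with
        | zero => simp [Module.End.one_eq_id]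
        | succ k ih =>
          rw [pow_succ', Module.End.mul_eq_comp, Submodule.map_comp]
          exact (Submodule.map_mono ih).trans (hstable C)
      · rw [pow_succ, Module.End.mul_eq_comp]
  have hBC : B ≤ C := by simpa [hp] using hBk p
  refine (genRank_le D hDB hBC).trans ?_
  refine Finset.card_biUnion_le.trans (Finset.sum_le_sum fun j _ => ?_)
  exact Finset.card_image_le.trans (hcard j)

end GenRank

theorem sum_odd_eq_zero {f : ℤ → ℤ} (hodd : ∀ x, f (-x) = -f x) (q : ℕ) :
    ∑ k ∈ Finset.range q, f (q - 1 - 2 * k) = 0 := by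
  have h := Finset.sum_range_reflect (fun k : ℕ => f (q - 1 - 2 * k)) q
  have h' : ∑ k ∈ Finset.range q, f (q - 1 - 2 * (q - 1 - k : ℕ)) =
      -∑ k ∈ Finset.range q, f (q - 1 - 2 * k) := by
    rw [← Finset.sum_neg_distrib]
    refine Finset.sum_congr rfl fun k hk => ?_
    rw [Finset.mem_range] at hk
    rw [← hodd]
    congr 1
    omega
  omega

/-- A bound for sums along chains gives a bound for sums over grids, by cutting the grid into
hooks. -/
theorem sum_grid_le {L : Type*} [Lattice L] (r : L → L → ℤ)
    (hr : ∀ A A' B, A ≤ A' → r A' B ≤ r A B) (f : ℤ → ℤ) (hodd : ∀ x, f (-x) = -f x)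
    (hf : ∀ Y : ℕ → L, Monotone Y → ∀ l : ℕ, ∑ i ∈ Finset.range l, r (Y i) (Y (i + 1)) ≤ f l)
    (l q : ℕ) (X : ℕ → ℕ → L) (hX₁ : ∀ j, Monotone fun i => X i j) (hX₂ : ∀ i, Monotone (X i)) :
    ∑ i ∈ Finset.range l, ∑ j ∈ Finset.range q,
      r (X i (j + 1) ⊔ X (i + 1) j) (X (i + 1) (j + 1)) ≤
        ∑ k ∈ Finset.range q, f (l + q - 1 - 2 * k) := by
  induction q generalizing l X with
  | zero => simp
  | succ q ih =>
    rcases l with _ | l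
    · have h := sum_odd_eq_zero hodd (q + 1)
      rw [Finset.sum_range_zero, ← h]
      refine (Finset.sum_congr rfl fun k _ => ?_).le
      congr 1
      push_cast
      ring
    · have hhook := hf (fun t => X (min t (l + 1)) (max 1 (t - l))) (by
        intro s t hst
        exact (hX₁ _ (by omega)).trans (hX₂ _ (by omega))) (l + 1 + q)
      rw [Finset.sum_range_add] at hhook
      have hrow : ∑ i ∈ Finset.range (l + 1), r (X i 1 ⊔ X (i + 1) 0) (X (i + 1) 1) ≤
          ∑ t ∈ Finset.range (l + 1), r (X (min t (l + 1)) (max 1 (t - l)))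
            (X (min (t + 1) (l + 1)) (max 1 (t + 1 - l))) := by
        refine Finset.sum_le_sum fun t ht => ?_
        rw [Finset.mem_range] at ht
        rw [show min t (l + 1) = t by omega, show max 1 (t - l) = 1 by omega,
          show min (t + 1) (l + 1) = t + 1 by omega, show max 1 (t + 1 - l) = 1 by omega]
        exact hr _ _ _ le_sup_left
      have hcol : ∑ j ∈ Finset.range q, r (X l (j + 2) ⊔ X (l + 1) (j + 1)) (X (l + 1) (j + 2)) ≤
          ∑ t ∈ Finset.range q, r (X (min (l + 1 + t) (l + 1)) (max 1 (l + 1 + t - l)))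
            (X (min (l + 1 + t + 1) (l + 1)) (max 1 (l + 1 + t + 1 - l))) := by
        refine Finset.sum_le_sum fun t _ => ?_
        rw [show min (l + 1 + t) (l + 1) = l + 1 by omega,
          show max 1 (l + 1 + t - l) = t + 1 by omega,
          show min (l + 1 + t + 1) (l + 1) = l + 1 by omega,
          show max 1 (l + 1 + t + 1 - l) = t + 2 by omega]
        exact hr _ _ _ le_sup_right
      have hrest := ih l (fun i j => X i (j + 1)) (fun j => hX₁ _)
        (fun i a b hab => hX₂ i (by omega))
      simp_rw [Finset.sum_range_succ' _ q]
      rw [Finset.sum_add_distrib, Finset.sum_range_succ]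
      have e1 : ∑ k ∈ Finset.range q, f (((l + 1 : ℕ) : ℤ) + ((q + 1 : ℕ) : ℤ) - 1 -
          2 * ((k + 1 : ℕ) : ℤ)) = ∑ k ∈ Finset.range q, f (l + q - 1 - 2 * k) :=
        Finset.sum_congr rfl fun k _ => by congr 1; push_cast; ring
      have e2 : ((l + 1 : ℕ) : ℤ) + ((q + 1 : ℕ) : ℤ) - 1 - 2 * ((0 : ℕ) : ℤ) =
          ((l + 1 + q : ℕ) : ℤ) := by push_cast; ring
      rw [e1, e2]
      simp only [zero_add] at *
      simp only [add_assoc, Nat.reduceAdd] at *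
      linarith

section GroupAlgebra

variable {F P : Type*} [Field F] [Group P]

theorem MonoidAlgebra.isNoetherianRing_of_finite (F P : Type*) [Field F] [Group P] [Finite P] :
    IsNoetherianRing (MonoidAlgebra F P) :=
  isNoetherian_of_tower F (inferInstanceAs (IsNoetherian F (MonoidAlgebra F P)))

section

variable {M : Type*} [AddCommGroup M] [Module (MonoidAlgebra F P) M]

/-- The subgroup of elements fixing a vector. -/
def fixer (F P : Type*) {M : Type*} [Field F] [Group P] [AddCommGroup M]
    [Module (MonoidAlgebra F P) M] (v : M) : Subgroup P where
  carrier := {g | MonoidAlgebra.of F P g • v = v}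
  one_mem' := by rw [Set.mem_ofPred_eq, map_one, one_smul]
  mul_mem' {a b} ha hb := by
    rw [Set.mem_ofPred_eq] at *
    rw [map_mul, mul_smul, hb, ha]
  inv_mem' {a} ha := by
    rw [Set.mem_ofPred_eq] at *
    conv_lhs => rw [← ha]
    rw [← mul_smul, ← map_mul, inv_mul_cancel, map_one, one_smul]

theorem mem_fixer {v : M} {g : P} : g ∈ fixer F P v ↔ MonoidAlgebra.of F P g • v = v := Iff.rfl

theorem smul_eq_smul_of_smul_of {c : MonoidAlgebra F P}
    (h : ∀ g, ∀ x : M, MonoidAlgebra.of F P g • c • x = c • MonoidAlgebra.of F P g • x)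
    (d : MonoidAlgebra F P) (x : M) : d • c • x = c • d • x := by
  induction d using MonoidAlgebra.induction_on generalizing x with
  | of g => exact h g x
  | add f g hf hg => rw [add_smul, add_smul, smul_add, hf, hg]
  | smul r f hf =>
    rw [Algebra.smul_def, mul_smul, mul_smul, hf, ← mul_smul, Algebra.commutes, mul_smul]

/-- The normal core of a subgroup fixing a generator acts trivially. -/
theorem of_smul_eq_of_mem_normalCore {R : Subgroup P} {v : M}
    (hv : Submodule.span (MonoidAlgebra F P) {v} = ⊤) (hfix : R ≤ fixer F P v) {g : P}
    (hg : g ∈ R.normalCore) (x : M) : MonoidAlgebra.of F P g • x = x := by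
  obtain ⟨d, rfl⟩ := Submodule.mem_span_singleton.1 (hv ▸ Submodule.mem_top : x ∈ _)
  induction d using MonoidAlgebra.induction_on with
  | of h =>
    have h1 : h⁻¹ * g * h ∈ fixer F P v := by
      have := hg h⁻¹
      rw [inv_inv] at this
      exact hfix this
    rw [← mul_smul, ← map_mul]
    conv_rhs => rw [← mem_fixer.1 h1]
    rw [← mul_smul, ← map_mul]
    congr 2
    group
  | add a b ha hb => rw [add_smul, smul_add, ha, hb]
  | smul r a ha =>
    rw [Algebra.smul_def, mul_smul, ← mul_smul, ← Algebra.commutes, mul_smul, ha]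

theorem eq_bot_or_eq_top_of_fixer_eq_top {v : M}
    (hv : Submodule.span (MonoidAlgebra F P) {v} = ⊤) (hfix : fixer F P v = ⊤)
    (B : Submodule (MonoidAlgebra F P) M) : B = ⊥ ∨ B = ⊤ := by
  have hsc : ∀ d : MonoidAlgebra F P, ∃ c : F, d • v = algebraMap F (MonoidAlgebra F P) c • v := by
    intro d
    induction d using MonoidAlgebra.induction_on with
    | of g =>
      refine ⟨1, ?_⟩
      rw [map_one, one_smul]
      exact mem_fixer.1 (hfix ▸ Subgroup.mem_top g)
    | add a b ha hb =>
      obtain ⟨c, hc⟩ := ha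
      obtain ⟨c', hc'⟩ := hb
      exact ⟨c + c', by rw [add_smul, hc, hc', map_add, add_smul]⟩
    | smul r a ha =>
      obtain ⟨c, hc⟩ := ha
      exact ⟨r * c, by rw [Algebra.smul_def, mul_smul, hc, map_mul, mul_smul]⟩
  refine or_iff_not_imp_left.2 fun hB => ?_
  obtain ⟨x, hx, hx0⟩ := Submodule.exists_mem_ne_zero_of_ne_bot hB
  obtain ⟨d, rfl⟩ := Submodule.mem_span_singleton.1 (hv ▸ Submodule.mem_top : x ∈ _)
  obtain ⟨c, hc⟩ := hsc d
  rw [hc] at hx hx0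
  have hc0 : c ≠ 0 := by
    rintro rfl
    simp at hx0
  rw [eq_top_iff, ← hv, Submodule.span_singleton_le_iff_mem]
  have := B.smul_mem (algebraMap F (MonoidAlgebra F P) c⁻¹) hx
  rwa [← mul_smul, ← map_mul, inv_mul_cancel₀ hc0, map_one, one_smul] at this

theorem sum_genRank_le_sign {v : M}
    (hv : Submodule.span (MonoidAlgebra F P) {v} = ⊤) (hfix : fixer F P v = ⊤)
    {Y : ℕ → Submodule (MonoidAlgebra F P) M} (hY : Monotone Y) (l : ℕ) :
    ∑ i ∈ Finset.range l, (genRank (Y i) (Y (i + 1)) : ℤ) ≤ (l : ℤ).sign := by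
  classical
  have key : ∑ i ∈ Finset.range l, (genRank (Y i) (Y (i + 1)) : ℤ) ≤
      if Y l = ⊥ then 0 else 1 := by
    induction l with
    | zero => rw [Finset.sum_range_zero]; split_ifs <;> norm_num
    | succ l ih =>
      rw [Finset.sum_range_succ]
      have hle := hY (Nat.le_succ l)
      rcases eq_bot_or_eq_top_of_fixer_eq_top hv hfix (Y l) with h | h
      · rw [if_pos h] at ih
        split_ifs with h'
        · rw [genRank_eq_zero (h'.le.trans bot_le)]
          simpa using ih
        · have : genRank (Y l) (Y (l + 1)) ≤ 1 := by
            refine (genRank_le {v} ?_ ?_).trans (Finset.card_singleton v).le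
            · rw [(eq_bot_or_eq_top_of_fixer_eq_top hv hfix _).resolve_left h']
              simp
            · rw [Finset.coe_singleton, hv, sup_top_eq]
              exact le_top
          have : (genRank (Y l) (Y (l + 1)) : ℤ) ≤ 1 := by exact_mod_cast this
          linarith
      · rw [genRank_eq_zero (h ▸ le_top)]
        rw [Nat.cast_zero, add_zero]
        refine ih.trans ?_
        split_ifs with h1 h2 h2
        · exact le_rfl
        · exact zero_le_one
        · exact absurd (eq_bot_iff.2 (hle.trans h2.le)) h1
        · exact le_rfl
  rcases Nat.eq_zero_or_pos l with rfl | hl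
  · simp
  · rw [Int.sign_eq_one_of_pos (by exact_mod_cast hl)]
    refine key.trans ?_
    split_ifs <;> norm_num

end

end GroupAlgebra

/-- Below a proper subgroup `R` of a finite `p`-group there is an element, central and of order `p`
modulo the normal core of `R`, which enlarges `R` by a factor `p`. -/
theorem exists_central_modulo_normalCore {P : Type*} [Group P] [Finite P] {p : ℕ} [Fact p.Prime]
    (hP : IsPGroup p P) {R : Subgroup P} {m : ℕ} (hR : R.index = p ^ (m + 1)) :
    ∃ z : P, (R ⊔ Subgroup.zpowers z).index = p ^ m ∧ z ^ p ∈ R.normalCore ∧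
      ∀ g, g * z * g⁻¹ * z⁻¹ ∈ R.normalCore := by
  have hp : p.Prime := Fact.out
  set N := R.normalCore with hN
  have hNR : N ≤ R := R.normalCore_le
  have hQ : IsPGroup p (P ⧸ N) := hP.to_quotient N
  have : Nontrivial (P ⧸ N) := by
    rw [← Finite.one_lt_card_iff_nontrivial]
    have h1 : R.index ∣ N.index := Subgroup.index_dvd_of_le hNR
    have h2 : p ∣ N.index := (dvd_pow_self p (by omega)).trans (hR ▸ h1)
    have h3 : N.index ≠ 0 := Subgroup.index_ne_zero_of_finite
    exact hp.one_lt.trans_le (Nat.le_of_dvd (Nat.pos_of_ne_zero h3) h2)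
  have hnt : Nontrivial (Subgroup.center (P ⧸ N)) := hQ.center_nontrivial
  have hdvd : p ∣ Nat.card (Subgroup.center (P ⧸ N)) := by
    obtain ⟨k, hk, hk'⟩ := (hQ.to_subgroup (Subgroup.center (P ⧸ N))).nontrivial_iff_card.1 hnt
    rw [hk']
    exact dvd_pow_self p hk.ne'
  obtain ⟨⟨y, hy⟩, hyord⟩ := exists_prime_orderOf_dvd_card' p hdvd
  obtain ⟨z, rfl⟩ := QuotientGroup.mk_surjective y
  have hord : orderOf (z : P ⧸ N) = p := by rwa [Subgroup.orderOf_mk] at hyord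
  have hcomm : ∀ g, g * z * g⁻¹ * z⁻¹ ∈ N := by
    intro g
    have := Subgroup.mem_center_iff.1 hy (g : P ⧸ N)
    rw [← QuotientGroup.eq_one_iff]
    rw [QuotientGroup.mk_mul, QuotientGroup.mk_mul, QuotientGroup.mk_mul, this,
      QuotientGroup.mk_inv, QuotientGroup.mk_inv]
    group
  have hzp : z ^ p ∈ N := by
    rw [← QuotientGroup.eq_one_iff, QuotientGroup.mk_pow, ← hord, pow_orderOf_eq_one]
  have hzN : z ∉ N := by
    intro h
    rw [← QuotientGroup.eq_one_iff] at h
    rw [h, orderOf_one] at hord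
    exact hp.one_lt.ne hord
  have hzR : z ∉ R := by
    intro h
    refine hzN fun g => ?_
    have := R.mul_mem (hNR (hcomm g)) h
    simpa using this
  have hcen : (Subgroup.zpowers (z : P ⧸ N)).Normal := by
    refine ⟨fun x hx g => ?_⟩
    have hx' : x ∈ Subgroup.center (P ⧸ N) :=
      (Subgroup.zpowers_le (H := Subgroup.center (P ⧸ N))).2 hy hx
    rw [Subgroup.mem_center_iff.1 hx' g, mul_inv_cancel_right]
    exact hx
  set K := (Subgroup.zpowers (z : P ⧸ N)).comap (QuotientGroup.mk' N) with hK
  have hKn : K.Normal := hcen.comap _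
  have hNK : N ≤ K := by
    intro x hx
    rw [hK, Subgroup.mem_comap, QuotientGroup.mk'_apply, (QuotientGroup.eq_one_iff x).2 hx]
    exact one_mem _
  have hzK : z ∈ K := Subgroup.mem_zpowers _
  have hNKp : N.relIndex K = p := by
    have hbot : N = (⊥ : Subgroup (P ⧸ N)).comap (QuotientGroup.mk' N) := by
      rw [MonoidHom.comap_bot, QuotientGroup.ker_mk']
    conv_lhs => rw [hbot]
    rw [Subgroup.relIndex_comap, hK,
      Subgroup.map_comap_eq_self_of_surjective (QuotientGroup.mk'_surjective N),
      Subgroup.relIndex_bot_left, Nat.card_zpowers, hord]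
  have hRK : R ⊓ K = N := by
    have h1 := Subgroup.relIndex_mul_relIndex N (R ⊓ K) K (le_inf hNR hNK) inf_le_right
    rw [hNKp] at h1
    rcases (Nat.dvd_prime hp).1 ⟨_, h1.symm⟩ with h | h
    · exact le_antisymm (Subgroup.relIndex_eq_one.1 h) (le_inf hNR hNK)
    · rw [h] at h1
      have h2 : (R ⊓ K).relIndex K = 1 := by
        have := hp.pos
        exact Nat.eq_of_mul_eq_mul_left this (h1.trans (mul_one p).symm)
      exact absurd (Subgroup.relIndex_eq_one.1 h2 hzK).1 hzR
  have hsup : R ⊔ Subgroup.zpowers z = R ⊔ K := by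
    refine le_antisymm (sup_le_sup_left (Subgroup.zpowers_le.2 hzK) _) (sup_le le_sup_left ?_)
    intro x hx
    obtain ⟨k, hk⟩ := Subgroup.mem_zpowers_iff.1 hx
    rw [QuotientGroup.mk'_apply, ← QuotientGroup.mk_zpow, QuotientGroup.eq] at hk
    rw [← mul_inv_cancel_left (z ^ k) x]
    exact mul_mem (Subgroup.mem_sup_right (Subgroup.zpow_mem_zpowers z k))
      (Subgroup.mem_sup_left (hNR hk))
  have hrel : R.relIndex (R ⊔ K) = p := by
    have h1 := Subgroup.relIndex_mul_relIndex N K (R ⊔ K) hNK le_sup_right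
    have h2 := Subgroup.relIndex_mul_relIndex N R (R ⊔ K) hNR le_sup_left
    rw [hNKp, Subgroup.relIndex_sup_right, ← Subgroup.inf_relIndex_left, hRK, ← h2, mul_comm] at h1
    have h3 : N.relIndex R ≠ 0 := Subgroup.index_ne_zero_of_finite
    exact (Nat.eq_of_mul_eq_mul_left (Nat.pos_of_ne_zero h3) h1).symm
  refine ⟨z, ?_, hzp, hcomm⟩
  have := Subgroup.relIndex_mul_index (le_sup_left : R ≤ R ⊔ K)
  rw [hrel, hR, pow_succ'] at this
  rw [hsup]
  exact Nat.eq_of_mul_eq_mul_left hp.pos this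

section GroupAlgebra

variable {F P : Type*} [Field F] [Group P]

/-- The main estimate for cyclic modules over a finite `p`-group in characteristic `p`: it bounds
the total number of generators of the steps of a chain of submodules. -/
theorem two_pow_mul_sum_genRank_le [Finite P] {p : ℕ} [Fact p.Prime] [CharP F p]
    (hP : IsPGroup p P) {M : Type*} [AddCommGroup M] [Module (MonoidAlgebra F P) M] {v : M}
    (hv : Submodule.span (MonoidAlgebra F P) {v} = ⊤) {R : Subgroup P} (hfix : R ≤ fixer F P v)
    {m : ℕ} (hR : R.index = p ^ m) {Y : ℕ → Submodule (MonoidAlgebra F P) M} (hY : Monotone Y)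
    (l : ℕ) : 2 ^ (m * (p - 1)) * ∑ i ∈ Finset.range l, (genRank (Y i) (Y (i + 1)) : ℤ) ≤
      p ^ m * walkSum (m * (p - 1)) l := by
  have hp : p.Prime := Fact.out
  induction m generalizing M R l with
  | zero =>
    have hR' : R = ⊤ := Subgroup.index_eq_one.1 (by simpa using hR)
    simpa [walkSum] using sum_genRank_le_sign hv (top_le_iff.1 (hR' ▸ hfix)) hY l
  | succ m ih =>
    have := MonoidAlgebra.isNoetherianRing_of_finite F P
    have : Module.Finite (MonoidAlgebra F P) M := ⟨⟨{v}, by simpa using hv⟩⟩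
    obtain ⟨z, hind, hzp, hcomm⟩ := exists_central_modulo_normalCore hP hR
    set c : MonoidAlgebra F P := MonoidAlgebra.of F P z - 1 with hc
    have htriv := fun {g : P} hg x => of_smul_eq_of_mem_normalCore (F := F) (g := g) hv hfix hg x
    have hcen : ∀ d : MonoidAlgebra F P, ∀ x : M, d • c • x = c • d • x := by
      refine smul_eq_smul_of_smul_of fun g x => ?_
      rw [hc, sub_smul, sub_smul, smul_sub, one_smul, one_smul, ← mul_smul, ← mul_smul,
        ← map_mul, ← map_mul]
      congr 1
      rw [show g * z = (g * z * g⁻¹ * z⁻¹) * (z * g) by group, map_mul, mul_smul,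
        htriv (hcomm g)]
    let ζ : Module.End (MonoidAlgebra F P) M :=
      { toFun := fun x => c • x
        map_add' := fun x y => smul_add c x y
        map_smul' := fun d x => (hcen d x).symm }
    have hζ : ∀ x, ζ x = c • x := fun _ => rfl
    have hζk : ∀ k x, (ζ ^ k) x = c ^ k • x := by
      intro k x
      induction k with
      | zero => simp
      | succ k ih => rw [pow_succ', Module.End.mul_apply, ih, hζ, pow_succ', mul_smul]
    have hζp : ζ ^ p = 0 := by
      have : CharP (MonoidAlgebra F P) p :=
        charP_of_injective_algebraMap (algebraMap F (MonoidAlgebra F P)).injective p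
      ext x
      rw [hζk, hc, sub_pow_char_of_commute _ (Commute.one_right _), one_pow, ← map_pow, sub_smul,
        htriv hzp, one_smul, sub_self, LinearMap.zero_apply]
    have hv' : Submodule.span (MonoidAlgebra F P) {(LinearMap.range ζ).mkQ v} = ⊤ := by
      rw [← Set.image_singleton, ← Submodule.map_span, hv, Submodule.map_top,
        Submodule.range_mkQ]
    have hfix' : R ⊔ Subgroup.zpowers z ≤ fixer F P ((LinearMap.range ζ).mkQ v) := by
      refine sup_le (fun g hg => ?_) (Subgroup.zpowers_le.2 ?_)
      · rw [mem_fixer, ← map_smul, mem_fixer.1 (hfix hg)]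
      · rw [mem_fixer, ← map_smul, ← sub_eq_zero, ← map_sub]
        refine (Submodule.Quotient.mk_eq_zero _).2 ⟨v, ?_⟩
        rw [hζ, hc, sub_smul, one_smul]
    have hlayer : ∀ i, (genRank (Y i) (Y (i + 1)) : ℤ) ≤ ∑ j ∈ Finset.range p,
        (genRank (layerChain ζ (Y i) (j + 1) ⊔ layerChain ζ (Y (i + 1)) j)
          (layerChain ζ (Y (i + 1)) (j + 1)) : ℤ) := by
      intro i
      exact_mod_cast genRank_le_sum_layerChain c hζ hζp (hY (Nat.le_succ i))
    have hgrid := sum_grid_le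
      (fun A B : Submodule (MonoidAlgebra F P) (M ⧸ LinearMap.range ζ) =>
        2 ^ (m * (p - 1)) * (genRank A B : ℤ))
      (fun A A' B h => by
        have := genRank_anti B h
        gcongr)
      (fun x => p ^ m * walkSum (m * (p - 1)) x)
      (fun x => by rw [walkSum_neg]; ring)
      (fun Y hY l => by
        rw [← Finset.mul_sum]
        exact ih hv' hfix' hind hY l)
      l p (fun i j => layerChain ζ (Y i) j)
      (fun j a b hab => layerChain_mono_left ζ (hY hab) j)
      (fun i => layerChain_monotone c hζ (Y i))
    simp only [← Finset.mul_sum] at hgrid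
    have hwalk := two_pow_mul_sum_walkSum_le (m * (p - 1)) (p - 1) (x := l) (by positivity)
    obtain ⟨q, rfl⟩ : ∃ q, p = q + 1 := ⟨p - 1, by have := hp.pos; omega⟩
    rw [Nat.add_sub_cancel] at *
    have e : ∑ k ∈ Finset.range (q + 1), walkSum (m * q) ((l : ℤ) + ((q + 1 : ℕ) : ℤ) - 1 - 2 * k) =
        ∑ k ∈ Finset.range (q + 1), walkSum (m * q) ((l : ℤ) + q - 2 * k) :=
      Finset.sum_congr rfl fun k _ => by congr 1; push_cast; ring
    rw [e] at hgrid
    rw [Nat.succ_mul m q, pow_add, pow_succ]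
    have hpos : (0 : ℤ) ≤ ((q + 1 : ℕ) : ℤ) ^ m := by positivity
    calc (2 : ℤ) ^ (m * q) * 2 ^ q * ∑ i ∈ Finset.range l, (genRank (Y i) (Y (i + 1)) : ℤ)
        = 2 ^ q * (2 ^ (m * q) * ∑ i ∈ Finset.range l, (genRank (Y i) (Y (i + 1)) : ℤ)) := by ring
      _ ≤ 2 ^ q * (2 ^ (m * q) * ∑ i ∈ Finset.range l, ∑ j ∈ Finset.range (q + 1),
          (genRank (layerChain ζ (Y i) (j + 1) ⊔ layerChain ζ (Y (i + 1)) j)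
            (layerChain ζ (Y (i + 1)) (j + 1)) : ℤ)) := by
          gcongr with i _
          exact hlayer i
      _ ≤ 2 ^ q * (((q + 1 : ℕ) : ℤ) ^ m *
          ∑ k ∈ Finset.range (q + 1), walkSum (m * q) ((l : ℤ) + q - 2 * k)) := by
          gcongr
      _ = ((q + 1 : ℕ) : ℤ) ^ m * (2 ^ q *
          ∑ k ∈ Finset.range (q + 1), walkSum (m * q) ((l : ℤ) + q - 2 * k)) := by ring
      _ ≤ ((q + 1 : ℕ) : ℤ) ^ m * ((q + 1) * walkSum (m * q + q) l) := by gcongr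
      _ = ((q + 1 : ℕ) : ℤ) ^ m * ((q + 1 : ℕ) : ℤ) * walkSum (m * q + q) l := by
          push_cast; ring

/-- The number of generators of a submodule of a cyclic module. -/
theorem genRank_le_of_fixer [Finite P] {p : ℕ} [Fact p.Prime] [CharP F p]
    (hP : IsPGroup p P) {M : Type*} [AddCommGroup M] [Module (MonoidAlgebra F P) M] {v : M}
    {R : Subgroup P} (hfix : R ≤ fixer F P v) {m : ℕ} (hm : m ≠ 0) (hR : R.index = p ^ m)
    {S : Submodule (MonoidAlgebra F P) M} (hS : S ≤ Submodule.span (MonoidAlgebra F P) {v}) :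
    genRank ⊥ S ≤ ⌊Real.sqrt (2 / Real.pi) * (p ^ m : ℕ) / Real.sqrt (((p : ℝ) - 1) * m)⌋₊ := by
  have hp : p.Prime := Fact.out
  have := MonoidAlgebra.isNoetherianRing_of_finite F P
  set C := Submodule.span (MonoidAlgebra F P) {v} with hC
  let w : C := ⟨v, Submodule.mem_span_singleton_self v⟩
  have hw : Submodule.span (MonoidAlgebra F P) {w} = ⊤ := by
    apply Submodule.map_injective_of_injective C.injective_subtype
    rw [Submodule.map_span, Set.image_singleton, Submodule.map_top, Submodule.range_subtype]
    rfl
  have : Module.Finite (MonoidAlgebra F P) C := ⟨⟨{w}, by simpa using hw⟩⟩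
  have hfixw : R ≤ fixer F P w := fun g hg => by
    rw [mem_fixer]
    exact Subtype.ext (mem_fixer.1 (hfix hg))
  have hmain := two_pow_mul_sum_genRank_le hP hw hfixw hR
    (Y := fun i => if i = 0 then ⊥ else S.comap C.subtype) (by
      refine monotone_nat_of_le_succ fun i => ?_
      split_ifs <;> simp_all) 1
  have hle : genRank ⊥ S ≤ genRank ⊥ (S.comap C.subtype) := by
    have := genRank_map_le C.subtype ⊥ (S.comap C.subtype)
    rwa [Submodule.map_bot, Submodule.map_comap_subtype, inf_eq_right.2 hS] at this
  refine hle.trans (Nat.le_floor ?_)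
  simp only [Finset.range_one, Finset.sum_singleton, if_true, zero_add, one_ne_zero, if_false,
    Nat.cast_one, walkSum_one] at hmain
  set r := genRank ⊥ (S.comap C.subtype)
  have hp1 : p - 1 ≠ 0 := by have := hp.one_lt; omega
  have hch := choose_half_le_s16 (Nat.mul_ne_zero hm hp1)
  have hmainR : (2 : ℝ) ^ (m * (p - 1)) * r ≤
      p ^ m * ((m * (p - 1)).choose (m * (p - 1) / 2) : ℕ) := by exact_mod_cast hmain
  have h2 : (2 : ℝ) ^ (m * (p - 1)) * r ≤ 2 ^ (m * (p - 1)) * (p ^ m *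
      (Real.sqrt (2 / Real.pi) / Real.sqrt ((m * (p - 1) : ℕ) : ℝ))) := by
    refine hmainR.trans ?_
    calc _ ≤ (p : ℝ) ^ m * (2 ^ (m * (p - 1)) *
          (Real.sqrt (2 / Real.pi) / Real.sqrt ((m * (p - 1) : ℕ) : ℝ))) := by gcongr
      _ = _ := by ring
  have h3 := le_of_mul_le_mul_left h2 (by positivity)
  refine h3.trans (le_of_eq ?_)
  rw [Nat.cast_mul, Nat.cast_sub hp.one_le, Nat.cast_one, mul_comm (m : ℝ)]
  push_cast
  ring

end GroupAlgebra

section Blocks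

variable {F P : Type*} [Field F] [Group P]

theorem exists_mem_fixer_of_isPGroup [Finite P] {p : ℕ} [Fact p.Prime] [CharP F p]
    (hP : IsPGroup p P) {M : Type*} [AddCommGroup M] [Module (MonoidAlgebra F P) M]
    {R : Subgroup P} {U : AddSubgroup M}
    (hU : ∀ g ∈ R, ∀ u ∈ U, MonoidAlgebra.of F P g • u ∈ U) {u : M} (hu : u ∈ U) (hu0 : u ≠ 0) :
    ∃ w ∈ U, w ≠ 0 ∧ R ≤ fixer F P w := by
  have hp : p.Prime := Fact.out
  have hchar : ∀ x : M, p • x = 0 := by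
    intro x
    have : CharP (MonoidAlgebra F P) p :=
      charP_of_injective_algebraMap (algebraMap F (MonoidAlgebra F P)).injective p
    rw [← Nat.cast_smul_eq_nsmul (MonoidAlgebra F P), CharP.cast_eq_zero, zero_smul]
  set X : Set M := Set.range fun g : R => MonoidAlgebra.of F P (g : P) • u with hX
  set D := AddSubgroup.closure X with hD
  have hDU : D ≤ U := by
    rw [hD, AddSubgroup.closure_le]
    rintro _ ⟨g, rfl⟩
    exact hU g g.2 u hu
  have hDR : ∀ g ∈ R, ∀ x ∈ D, MonoidAlgebra.of F P g • x ∈ D := by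
    intro g hg x hx
    induction hx using AddSubgroup.closure_induction with
    | mem x hx =>
      obtain ⟨h, rfl⟩ := hx
      refine AddSubgroup.subset_closure ⟨⟨g, hg⟩ * h, ?_⟩
      simp only [Subgroup.coe_mul, map_mul, mul_smul]
    | zero => rw [smul_zero]; exact zero_mem _
    | add x y _ _ hx hy => rw [smul_add]; exact add_mem hx hy
    | neg x _ hx => rw [smul_neg]; exact neg_mem hx
  have : AddGroup.FG D := by
    rw [AddGroup.fg_iff_addSubgroup_fg, AddSubgroup.fg_iff]
    exact ⟨X, hD.symm, Set.finite_range _⟩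
  have hDp : ∀ x : D, p • x = 0 := fun x => Subtype.ext (hchar x)
  have hfin : Finite D := AddCommGroup.finite_of_fg_isAddTorsion D fun x =>
    isOfFinAddOrder_iff_nsmul_eq_zero.2 ⟨p, hp.pos, hDp x⟩
  have huD : u ∈ D := AddSubgroup.subset_closure ⟨1, by
    simp only [Subgroup.coe_one, map_one, one_smul]⟩
  have hdvd : p ∣ Nat.card D := by
    rw [← addOrderOf_eq_prime (hDp ⟨u, huD⟩) fun h => hu0 (congrArg Subtype.val h)]
    exact addOrderOf_dvd_natCard _
  let act : MulAction R D :=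
    { smul := fun g x => ⟨MonoidAlgebra.of F P (g : P) • (x : M), hDR g g.2 x x.2⟩
      one_smul := fun x => Subtype.ext (by
        change MonoidAlgebra.of F P ((1 : R) : P) • (x : M) = x
        rw [Subgroup.coe_one, map_one, one_smul])
      mul_smul := fun g h x => Subtype.ext (by
        change MonoidAlgebra.of F P ((g * h : R) : P) • (x : M) = _
        rw [Subgroup.coe_mul, map_mul, mul_smul]
        rfl) }
  have hact : ∀ (g : R) (x : D), ((g • x : D) : M) = MonoidAlgebra.of F P (g : P) • (x : M) :=
    fun _ _ => rfl
  obtain ⟨w, hw, hw0⟩ := (hP.to_subgroup R).exists_fixed_point_of_prime_dvd_card_of_fixed_point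
    D hdvd (a := 0) (fun g => Subtype.ext (by
      rw [hact, AddSubgroup.coe_zero, smul_zero]))
  refine ⟨w, hDU w.2, fun h => hw0 (Subtype.ext h.symm), fun g hg => ?_⟩
  rw [mem_fixer]
  exact (hact ⟨g, hg⟩ w).symm.trans (congrArg Subtype.val (hw ⟨g, hg⟩))

/-- The number of generators of a submodule of a module generated by an `R`-stable subspace. -/
theorem genRank_le_finrank_mul [Finite P] {p : ℕ} [Fact p.Prime] [CharP F p]
    (hP : IsPGroup p P) {R : Subgroup P} {m : ℕ} (hm : m ≠ 0) (hR : R.index = p ^ m)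
    {M : Type*} [AddCommGroup M] [Module F M]
    [Module (MonoidAlgebra F P) M] [IsScalarTower F (MonoidAlgebra F P) M]
    [IsNoetherian (MonoidAlgebra F P) M] {U : Submodule F M} [FiniteDimensional F U]
    (hU : ∀ g ∈ R, ∀ u ∈ U, MonoidAlgebra.of F P g • u ∈ U)
    {k : ℕ} (hk : Module.finrank F U ≤ k) {S : Submodule (MonoidAlgebra F P) M}
    (hS : S ≤ Submodule.span (MonoidAlgebra F P) (U : Set M)) :
    genRank ⊥ S ≤
      k * ⌊Real.sqrt (2 / Real.pi) * (p ^ m : ℕ) / Real.sqrt (((p : ℝ) - 1) * m)⌋₊ := by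
  induction k generalizing M with
  | zero =>
    rw [genRank_eq_zero, zero_mul]
    rw [Nat.le_zero, Submodule.finrank_eq_zero] at hk
    rw [hk] at hS
    simpa using hS
  | succ k ih =>
    by_cases hU0 : U = ⊥
    · rw [genRank_eq_zero]
      · exact Nat.zero_le _
      · rw [hU0] at hS
        simpa using hS
    obtain ⟨u₀, hu₀, hu₀0⟩ := Submodule.exists_mem_ne_zero_of_ne_bot hU0
    obtain ⟨u, hu, hu0, hfix⟩ := exists_mem_fixer_of_isPGroup hP (U := U.toAddSubgroup) hU
      hu₀ hu₀0
    set C := Submodule.span (MonoidAlgebra F P) {u} with hC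
    let π : M →ₗ[F] M ⧸ C := C.mkQ.restrictScalars F
    have hπ : ∀ x, π x = C.mkQ x := fun _ => rfl
    have hfr : Module.finrank F (U.map π) ≤ k := by
      have h1 := LinearMap.finrank_range_add_finrank_ker (π.domRestrict U)
      rw [LinearMap.range_domRestrict] at h1
      have h2 : 0 < Module.finrank F (LinearMap.ker (π.domRestrict U)) := by
        refine Module.finrank_pos_iff_exists_ne_zero.2 ⟨⟨⟨u, hu⟩, ?_⟩, ?_⟩
        · rw [LinearMap.mem_ker, LinearMap.domRestrict_apply, hπ]
          exact (Submodule.Quotient.mk_eq_zero C).2 (Submodule.mem_span_singleton_self u)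
        · intro h
          exact hu0 (congrArg Subtype.val (congrArg Subtype.val h))
      omega
    have h1 := ih (M := M ⧸ C) (U := U.map π) (S := S.map C.mkQ) (by
        rintro g hg _ ⟨x, hx, rfl⟩
        refine ⟨_, hU g hg x hx, ?_⟩
        rw [hπ, map_smul, hπ]) hfr (by
        have := Submodule.map_mono (f := C.mkQ) hS
        rw [Submodule.map_span] at this
        exact this)
    have h2 := genRank_le_of_fixer hP hfix hm hR (S := S ⊓ C) inf_le_right
    refine (genRank_bot_le_add C S).trans ?_
    rw [Nat.succ_mul]
    omega

end Blocks

section Orbits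

variable {F P W Ω : Type*} [Field F] [Group P] [AddCommGroup W] [Module F W]
  [Module (MonoidAlgebra F P) W] [IsScalarTower F (MonoidAlgebra F P) W] [MulAction P Ω]

theorem iSup_span_out_eq_top {φ : Ω → Submodule F W}
    (hφ : ∀ (g : P) (x : Ω), ∀ w ∈ φ x, MonoidAlgebra.of F P g • w ∈ φ (g • x))
    (htop : iSup φ = ⊤) :
    ⨆ O : MulAction.orbitRel.Quotient P Ω,
      Submodule.span (MonoidAlgebra F P) (φ (Quotient.out O) : Set W) = ⊤ := by
  rw [← Submodule.restrictScalars_eq_top_iff F, eq_top_iff, ← htop, iSup_le_iff]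
  intro x w hw
  rw [Submodule.restrictScalars_mem]
  refine Submodule.mem_iSup_of_mem (⟦x⟧ : MulAction.orbitRel.Quotient P Ω) ?_
  obtain ⟨g, hg⟩ := MulAction.orbitRel_apply.1 (Quotient.mk_out (s := MulAction.orbitRel P Ω) x)
  have h := hφ g x w hw
  rw [show g • x = Quotient.out (⟦x⟧ : MulAction.orbitRel.Quotient P Ω) from hg] at h
  have h' := Submodule.smul_mem _ (MonoidAlgebra.of F P g⁻¹)
    (Submodule.subset_span (R := MonoidAlgebra F P) h)
  rwa [← mul_smul, ← map_mul, inv_mul_cancel, map_one, one_smul] at h'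

theorem sum_card_orbit_out [Finite Ω] [Fintype (MulAction.orbitRel.Quotient P Ω)] :
    ∑ O : MulAction.orbitRel.Quotient P Ω, Nat.card (MulAction.orbit P (Quotient.out O)) =
      Nat.card Ω := by
  rw [Nat.card_congr (MulAction.selfEquivSigmaOrbits P Ω), Nat.card_sigma]

/-- The bound coming from a `p`-group acting on the blocks in characteristic `p`. -/
theorem genRank_le_of_isPGroup [Finite P] [Finite Ω] {p : ℕ} [Fact p.Prime] [CharP F p]
    (hP : IsPGroup p P) [IsNoetherian (MonoidAlgebra F P) W] {φ : Ω → Submodule F W}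
    (hφ : ∀ (g : P) (x : Ω), ∀ w ∈ φ x, MonoidAlgebra.of F P g • w ∈ φ (g • x))
    (htop : iSup φ = ⊤) [∀ x, FiniteDimensional F (φ x)] {a : ℕ}
    (ha : ∀ x, Module.finrank F (φ x) ≤ a) {k : ℕ} (hk : k ≠ 0)
    (horb : ∀ x : Ω, p ^ k ∣ Nat.card (MulAction.orbit P x))
    (S : Submodule (MonoidAlgebra F P) W) :
    genRank ⊥ S ≤
      a * ⌊Real.sqrt (2 / Real.pi) * Nat.card Ω / Real.sqrt (((p : ℝ) - 1) * k)⌋₊ := by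
  classical
  have hp : p.Prime := Fact.out
  have hp1 : (0 : ℝ) < (p : ℝ) - 1 := by
    have : (1 : ℝ) < p := by exact_mod_cast hp.one_lt
    linarith
  have : Fintype (MulAction.orbitRel.Quotient P Ω) := Fintype.ofFinite _
  set b : MulAction.orbitRel.Quotient P Ω → ℕ := fun O =>
    ⌊Real.sqrt (2 / Real.pi) * Nat.card (MulAction.orbit P (Quotient.out O)) /
      Real.sqrt (((p : ℝ) - 1) * k)⌋₊ with hb
  have key : ∀ I : Finset (MulAction.orbitRel.Quotient P Ω),
      ∀ S : Submodule (MonoidAlgebra F P) W,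
      S ≤ ⨆ O ∈ I, Submodule.span (MonoidAlgebra F P) (φ (Quotient.out O) : Set W) →
      genRank ⊥ S ≤ ∑ O ∈ I, a * b O := by
    intro I
    induction I using Finset.induction_on with
    | empty =>
      intro S hS
      rw [genRank_eq_zero]
      · exact Nat.zero_le _
      · simpa using hS
    | insert O I hO ih =>
      intro S hS
      rw [Finset.iSup_insert] at hS
      set A := ⨆ O ∈ I, Submodule.span (MonoidAlgebra F P) (φ (Quotient.out O) : Set W) with hA
      rw [Finset.sum_insert hO, add_comm]
      refine (genRank_bot_le_add A S).trans (add_le_add (ih _ inf_le_right) ?_)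
      set x : Ω := Quotient.out O with hx
      obtain ⟨m, hm⟩ := hP.index (MulAction.stabilizer P x)
      have hcard : Nat.card (MulAction.orbit P x) = p ^ m := by
        rw [← hm, MulAction.index_stabilizer]
        rfl
      have hkm : k ≤ m := by
        have := horb x
        rw [hcard] at this
        exact (Nat.pow_dvd_pow_iff_le_right hp.one_lt).1 this
      let π : W →ₗ[F] W ⧸ A := A.mkQ.restrictScalars F
      have hπ : ∀ x, π x = A.mkQ x := fun _ => rfl
      have hbound := genRank_le_finrank_mul hP (show m ≠ 0 by omega) hm
        (U := (φ x).map π) (S := S.map A.mkQ) (by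
          rintro g hg _ ⟨w, hw, rfl⟩
          refine ⟨MonoidAlgebra.of F P g • w, ?_, ?_⟩
          · have := hφ g x w hw
            rwa [MulAction.mem_stabilizer_iff.1 hg] at this
          · rw [hπ, map_smul, hπ])
        ((Submodule.finrank_map_le π (φ x)).trans (ha x)) (by
          have := Submodule.map_mono (f := A.mkQ) hS
          have hA0 : A.map A.mkQ = ⊥ := by
            rw [eq_bot_iff, Submodule.map_le_iff_le_comap]
            intro w hw
            exact (Submodule.Quotient.mk_eq_zero A).2 hw
          rw [Submodule.map_sup, Submodule.map_span, hA0, sup_bot_eq] at this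
          exact this)
      refine hbound.trans (Nat.mul_le_mul_left a ?_)
      simp only [hb]
      rw [← hx, hcard]
      apply Nat.floor_mono
      have : (0 : ℝ) < k := by positivity
      gcongr
  have hall := key Finset.univ S (by
    have h := iSup_span_out_eq_top hφ htop
    simp only [Finset.mem_univ, iSup_pos, h]
    exact le_top)
  rw [← Finset.mul_sum] at hall
  refine hall.trans (Nat.mul_le_mul_left a (Nat.le_floor ?_))
  rw [← sum_card_orbit_out (P := P) (Ω := Ω)]
  push_cast
  rw [Finset.mul_sum, Finset.sum_div]
  exact Finset.sum_le_sum fun O _ => Nat.floor_le (by positivity)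

/-- The bound coming from a group of invertible order acting on the blocks. -/
theorem genRank_le_of_neZero_card [Finite P] [Finite Ω] [NeZero (Nat.card P : F)]
    [IsNoetherian (MonoidAlgebra F P) W] {φ : Ω → Submodule F W}
    (hφ : ∀ (g : P) (x : Ω), ∀ w ∈ φ x, MonoidAlgebra.of F P g • w ∈ φ (g • x))
    (htop : iSup φ = ⊤) [∀ x, FiniteDimensional F (φ x)] {a : ℕ}
    (ha : ∀ x, Module.finrank F (φ x) ≤ a) {d : ℕ} (hd : 0 < d)
    (horb : ∀ x : Ω, d ≤ Nat.card (MulAction.orbit P x))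
    (S : Submodule (MonoidAlgebra F P) W) :
    genRank ⊥ S ≤ a * (Nat.card Ω / d) := by
  classical
  have : Fintype (MulAction.orbitRel.Quotient P Ω) := Fintype.ofFinite _
  obtain ⟨C, hC⟩ := MonoidAlgebra.Submodule.exists_isCompl S
  have h1 : genRank ⊥ S ≤ genRank (⊥ : Submodule (MonoidAlgebra F P) W) ⊤ := by
    have := genRank_map_le (S.projection C hC) ⊥ ⊤
    rwa [Submodule.map_bot, Submodule.map_top, Submodule.range_projection] at this
  have hspan : ∀ x, ∃ T : Finset W, T.card ≤ a ∧ Submodule.span F (T : Set W) = φ x := by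
    intro x
    let e := Module.finBasis F (φ x)
    refine ⟨Finset.univ.image fun i => (e i : W), ?_, ?_⟩
    · refine Finset.card_image_le.trans ?_
      rw [Finset.card_univ, Fintype.card_fin]
      exact ha x
    · have : ((Finset.univ.image fun i => (e i : W) : Finset W) : Set W) =
          (φ x).subtype '' Set.range e := by
        ext w
        simp
      rw [this, ← Submodule.map_span, e.span_eq, Submodule.map_top, Submodule.range_subtype]
  choose T hTa hT using hspan
  set D : Finset W := Finset.univ.biUnion fun O : MulAction.orbitRel.Quotient P Ω =>
    T (Quotient.out O) with hD
  have h2 : genRank (⊥ : Submodule (MonoidAlgebra F P) W) ⊤ ≤ D.card := by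
    refine genRank_le D (fun _ _ => Submodule.mem_top) ?_
    rw [bot_sup_eq, ← iSup_span_out_eq_top hφ htop, iSup_le_iff]
    intro O
    rw [Submodule.span_le, ← hT]
    refine fun w hw => Submodule.span_mono ?_
      (Submodule.span_subset_span F (MonoidAlgebra F P) _ hw)
    intro w hw
    rw [hD, Finset.coe_biUnion]
    exact Set.mem_biUnion (by simp) hw
  have h3 : D.card ≤ Fintype.card (MulAction.orbitRel.Quotient P Ω) * a := by
    refine Finset.card_biUnion_le.trans ((Finset.sum_le_sum fun O _ => hTa _).trans ?_)
    rw [Finset.sum_const, Finset.card_univ, smul_eq_mul]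
  have h4 : Fintype.card (MulAction.orbitRel.Quotient P Ω) ≤ Nat.card Ω / d := by
    rw [Nat.le_div_iff_mul_le hd, ← sum_card_orbit_out (P := P) (Ω := Ω), ← smul_eq_mul,
      ← Finset.card_univ, ← Finset.sum_const]
    exact Finset.sum_le_sum fun O _ => horb _
  calc genRank ⊥ S ≤ Fintype.card (MulAction.orbitRel.Quotient P Ω) * a := (h1.trans h2).trans h3
    _ ≤ Nat.card Ω / d * a := Nat.mul_le_mul_right a h4
    _ = a * (Nat.card Ω / d) := mul_comm _ _

end Orbits

section Induced

theorem pow_factorization_dvd_card_orbit {G : Type*} [Group G] [Finite G] (H : Subgroup G)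
    {q : ℕ} [Fact q.Prime] (Q : Sylow q G) (x : G ⧸ H) :
    q ^ H.index.factorization q ∣ Nat.card (MulAction.orbit Q x) := by
  have hq : q.Prime := Fact.out
  set K := MulAction.stabilizer G x with hK
  have hKi : K.index = H.index := MulAction.index_stabilizer_of_transitive G x
  have horb : Nat.card (MulAction.orbit Q x) = K.relIndex (Q : Subgroup G) := by
    have : MulAction.stabilizer Q x = K.subgroupOf Q := rfl
    rw [Subgroup.relIndex, ← this, MulAction.index_stabilizer]
    rfl
  have h1 := Subgroup.relIndex_mul_index (inf_le_right : K ⊓ (Q : Subgroup G) ≤ Q)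
  rw [Subgroup.inf_relIndex_right, ← horb] at h1
  have h2 : K.index ∣ (K ⊓ (Q : Subgroup G)).index := Subgroup.index_dvd_of_le inf_le_left
  rw [← h1, hKi] at h2
  have hcop : Nat.Coprime (q ^ H.index.factorization q) (Q : Subgroup G).index :=
    Nat.Coprime.pow_left _ ((Nat.Prime.coprime_iff_not_dvd hq).2 Q.not_dvd_index)
  exact hcop.dvd_of_dvd_mul_right ((Nat.ordProj_dvd _ _).trans h2)

variable {F W : Type*} [Field F] [AddCommGroup W] [Module F W]

/-- The module over the group algebra given by a linear action. -/
noncomputable abbrev groupAlgebraModule (F P W : Type*) [Field F] [AddCommGroup W] [Module F W]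
    [Group P] [DistribMulAction P W] [SMulCommClass P F W] : Module (MonoidAlgebra F P) W :=
  Module.compHom W
    (MonoidAlgebra.lift F (Module.End F W) P (DistribMulAction.toModuleEnd F W)).toRingHom

/-- A subspace stable under the group, as a submodule over the group algebra. -/
def stableSubmodule {P : Type*} [Group P] [Module (MonoidAlgebra F P) W]
    [IsScalarTower F (MonoidAlgebra F P) W] (E : Submodule F W)
    (hE : ∀ g : P, ∀ w ∈ E, MonoidAlgebra.of F P g • w ∈ E) :
    Submodule (MonoidAlgebra F P) W where
  carrier := E
  add_mem' := E.add_mem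
  zero_mem' := E.zero_mem
  smul_mem' := by
    intro c w hw
    induction c using MonoidAlgebra.induction_on with
    | of g => exact hE g w hw
    | add a b ha hb => rw [add_smul]; exact E.add_mem ha hb
    | smul r a ha => rw [smul_assoc]; exact E.smul_mem r ha

variable {G : Type*} [Group G] [DistribMulAction G W] [SMulCommClass G F W]

/-- A bound for the number of generators over the group algebra of a subgroup bounds the number
of generators over the whole group. -/
theorem dMod_le_of_genRank_le (Q : Subgroup G) [FiniteDimensional F W] {S : Submodule F W}
    (hS : ∀ g : G, ∀ w ∈ S, g • w ∈ S) {N : ℕ}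
    (h : ∀ [Module (MonoidAlgebra F Q) W] [IsScalarTower F (MonoidAlgebra F Q) W],
      (∀ (g : Q) (w : W), MonoidAlgebra.of F Q g • w = g • w) →
      IsNoetherian (MonoidAlgebra F Q) W →
      ∀ S : Submodule (MonoidAlgebra F Q) W, genRank ⊥ S ≤ N) :
    dMod G S ≤ N := by
  let inst : Module (MonoidAlgebra F Q) W := groupAlgebraModule F Q W
  have hsmul : ∀ (c : MonoidAlgebra F Q) (w : W), c • w =
      MonoidAlgebra.lift F (Module.End F W) Q (DistribMulAction.toModuleEnd F W) c w :=
    fun _ _ => rfl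
  have hof : ∀ (g : Q) (w : W), MonoidAlgebra.of F Q g • w = g • w := by
    intro g w
    rw [hsmul, MonoidAlgebra.lift_of]
    rfl
  have htower : IsScalarTower F (MonoidAlgebra F Q) W :=
    ⟨fun r c w => by rw [hsmul, hsmul, map_smul, LinearMap.smul_apply]⟩
  have hnoeth : IsNoetherian (MonoidAlgebra F Q) W := isNoetherian_of_tower F inferInstance
  obtain ⟨T, hcard, hTS, hT⟩ := exists_card_eq_genRank ⊥ (stableSubmodule S fun g w hw => by
    rw [hof]
    exact hS g w hw : Submodule (MonoidAlgebra F Q) W)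
  rw [bot_sup_eq] at hT
  refine le_trans ?_ (hcard.le.trans (h hof hnoeth _))
  refine Nat.sInf_le ⟨T, rfl, hTS, le_antisymm ?_ ?_⟩
  · rw [Submodule.span_le]
    rintro _ ⟨g, t, ht, rfl⟩
    exact hS g t (hTS ht)
  · set E := Submodule.span F {w : W | ∃ g : G, ∃ t ∈ T, w = g • t} with hE
    have hEG : ∀ g : G, ∀ w ∈ E, g • w ∈ E := by
      intro g w hw
      induction hw using Submodule.span_induction with
      | mem w hw =>
        obtain ⟨g', t, ht, rfl⟩ := hw
        exact Submodule.subset_span ⟨g * g', t, ht, (mul_smul g g' t).symm⟩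
      | zero => rw [smul_zero]; exact zero_mem _
      | add x y _ _ hx hy => rw [smul_add]; exact add_mem hx hy
      | smul r x _ hx => rw [smul_comm]; exact E.smul_mem r hx
    intro w hw
    have hle : Submodule.span (MonoidAlgebra F Q) (T : Set W) ≤
        stableSubmodule E fun g w hw => by
          rw [hof]
          exact hEG g w hw := by
      rw [Submodule.span_le]
      intro t ht
      exact Submodule.subset_span ⟨1, t, ht, (one_smul G t).symm⟩
    exact hle (hT hw)

/-- The number of generators of a submodule of an induced module. -/
theorem dMod_le_mul_Efun [Finite G] {H : Subgroup G} {p : ℕ} [Fact p.Prime] [CharP F p]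
    {V : Submodule F W} [FiniteDimensional F V] {φ : G ⧸ H → Submodule F W}
    (hφ : ∀ g : G, φ (g : G ⧸ H) = V.map (DistribMulAction.toLinearMap F W g))
    (htop : iSup φ = ⊤) {S : Submodule F W} (hS : ∀ g : G, ∀ w ∈ S, g • w ∈ S) :
    dMod G S ≤ Module.finrank F V * Efun H.index p := by
  have hp : p.Prime := Fact.out
  set n := H.index with hn
  have hn0 : n ≠ 0 := Subgroup.index_ne_zero_of_finite
  have hfd : ∀ x, FiniteDimensional F (φ x) := by
    intro x
    obtain ⟨g, rfl⟩ := QuotientGroup.mk_surjective x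
    rw [hφ]
    infer_instance
  have ha : ∀ x, Module.finrank F (φ x) ≤ Module.finrank F V := by
    intro x
    obtain ⟨g, rfl⟩ := QuotientGroup.mk_surjective x
    rw [hφ]
    exact Submodule.finrank_map_le _ _
  have hW : FiniteDimensional F W := by
    have : FiniteDimensional F (iSup φ : Submodule F W) := Submodule.finite_iSup φ
    rw [htop] at this
    exact Module.Finite.of_surjective (⊤ : Submodule F W).subtype fun w => ⟨⟨w, trivial⟩, rfl⟩
  have hact : ∀ (g : G) (x : G ⧸ H), ∀ w ∈ φ x, g • w ∈ φ (g • x) := by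
    intro g x w hw
    obtain ⟨h, rfl⟩ := QuotientGroup.mk_surjective x
    rw [hφ] at hw
    obtain ⟨v, hv, rfl⟩ := hw
    rw [MulAction.Quotient.smul_coe, hφ]
    exact ⟨v, hv, mul_smul g h v⟩
  have horb_pos : ∀ (Q : Subgroup G) (x : G ⧸ H), 0 < Nat.card (MulAction.orbit Q x) := by
    intro Q x
    have : Nonempty (MulAction.orbit Q x) := ⟨⟨x, MulAction.mem_orbit_self x⟩⟩
    exact Nat.card_pos
  have hcop : dMod G S ≤ Module.finrank F V * (n / lpp (n / p ^ n.factorization p)) := by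
    suffices ∃ Q : Subgroup G, (Nat.card Q : F) ≠ 0 ∧
        ∀ x : G ⧸ H, lpp (n / p ^ n.factorization p) ≤ Nat.card (MulAction.orbit Q x) by
      obtain ⟨Q, hQ, horb⟩ := this
      refine dMod_le_of_genRank_le (F := F) Q hS fun hof _ S => ?_
      have : NeZero (Nat.card Q : F) := ⟨hQ⟩
      refine genRank_le_of_neZero_card (φ := φ) (fun g x w hw => ?_) htop ha (lpp_pos _) horb S
      rw [hof]
      exact hact g x w hw
    rcases (n / p ^ n.factorization p).primeFactors.eq_empty_or_nonempty with hempty | hne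
    · refine ⟨⊥, by simp, fun x => ?_⟩
      rw [lpp, hempty, Finset.sup_empty]
      exact max_le (horb_pos _ x) (Nat.zero_le _)
    · obtain ⟨q, hq, hsup⟩ := Finset.exists_mem_eq_sup _ hne fun q =>
        q ^ (n / p ^ n.factorization p).factorization q
      have hqp : q.Prime := Nat.prime_of_mem_primeFactors hq
      have hne : q ≠ p := by
        rintro rfl
        exact Nat.not_dvd_ordCompl hqp hn0 (Nat.dvd_of_mem_primeFactors hq)
      have : Fact q.Prime := ⟨hqp⟩
      obtain ⟨Q⟩ : Nonempty (Sylow q G) := inferInstance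
      refine ⟨Q, ?_, fun x => ?_⟩
      · obtain ⟨k, hk⟩ := IsPGroup.iff_card.1 Q.isPGroup'
        rw [hk, Ne, CharP.cast_eq_zero_iff F p]
        intro hdvd
        exact hne ((Nat.prime_dvd_prime_iff_eq hp hqp).1 (hp.dvd_of_dvd_pow hdvd)).symm
      · have h1 := Nat.le_of_dvd (horb_pos Q x) (pow_factorization_dvd_card_orbit H Q x)
        rw [lpp, hsup, Nat.factorization_ordCompl, Finsupp.erase_ne hne]
        exact max_le (horb_pos Q x) h1
  rw [Efun]
  split_ifs with hk
  · exact hcop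
  · rw [mul_min_of_nonneg _ _ (Nat.zero_le _)]
    refine le_min ?_ hcop
    obtain ⟨P⟩ : Nonempty (Sylow p G) := inferInstance
    refine dMod_le_of_genRank_le (F := F) P hS fun hof _ S => ?_
    rw [logb_self_pow hp.two_le]
    refine genRank_le_of_isPGroup (φ := φ) P.isPGroup' (fun g x w hw => ?_) htop ha hk
      (fun x => pow_factorization_dvd_card_orbit H P x) S
    rw [hof]
    exact hact g x w hw

end Induced

/-- Let `G` be a finite group, `H ≤ G` of index `n ≥ 2`, `F` a field of characteristic
`p > 0`, `V` an `H`-module of finite dimension `a` over `F`, and `S` a submodule of the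
induced module `V↑G` (presented internally: `W` is a `G`-module containing an `H`-stable
subspace `V` of dimension `a` such that `W` is the direct sum of the translates `g • V` over
the cosets `g H ∈ G ⧸ H`).  Then: (i) if `n_p ≥ √n` then
`d_G(S) ≤ a·E(n,p) ≤ a·⌊b₁·n/√(log n)⌋` with `b₁ = 2/√π`; (ii) if `n_p ≤ √n` then
`d_G(S) ≤ a·E(n,p) ≤ ⌊2an/(c'·log n)⌋` with `c' = ln 2/1.25506`.  In particular,
`d_G(S) ≤ a·E(n,p) ≤ ⌊2an/(c'·log n)⌋` if `2 ≤ n ≤ 1260`, and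
`d_G(S) ≤ a·E(n,p) ≤ ⌊a·b₁·n/√(log n)⌋` if `n ≥ 1261`. -/
theorem stmt_16 (G : Type*) [Group G] [Fintype G]
    (H : Subgroup G) (n : ℕ) (hn : 2 ≤ n) (hidx : H.index = n)
    (F W : Type*) [Field F] (p : ℕ) [Fact p.Prime] (hchar : CharP F p)
    [AddCommGroup W] [Module F W] [DistribMulAction G W] [SMulCommClass G F W]
    (V : Submodule F W) [FiniteDimensional F V] (a : ℕ) (ha : Module.finrank F V = a)
    (hVstable : ∀ g ∈ H, ∀ v ∈ V, g • v ∈ V)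
    (hinduced : ∃ φ : G ⧸ H → Submodule F W,
      (∀ g : G, φ (g : G ⧸ H) = V.map (DistribMulAction.toLinearMap F W g)) ∧
        iSupIndep φ ∧ iSup φ = ⊤)
    (S : Submodule F W) (hSstable : ∀ g : G, ∀ w ∈ S, g • w ∈ S) :
    (Real.sqrt n ≤ (p ^ n.factorization p : ℕ) →
      dMod G S ≤ a * Efun n p ∧
      (a * Efun n p : ℝ) ≤
        a * ⌊(2 / Real.sqrt Real.pi) * n / Real.sqrt (Real.logb 2 n)⌋₊) ∧
    ((p ^ n.factorization p : ℕ) ≤ Real.sqrt n →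
      dMod G S ≤ a * Efun n p ∧
      (a * Efun n p : ℝ) ≤
        ⌊2 * a * n / (Real.log 2 / 1.25506 * Real.logb 2 n)⌋₊) ∧
    (n ≤ 1260 →
      dMod G S ≤ a * Efun n p ∧
      (a * Efun n p : ℝ) ≤
        ⌊2 * a * n / (Real.log 2 / 1.25506 * Real.logb 2 n)⌋₊) ∧
    (1261 ≤ n →
      dMod G S ≤ a * Efun n p ∧
      (a * Efun n p : ℝ) ≤
        ⌊a * (2 / Real.sqrt Real.pi) * n / Real.sqrt (Real.logb 2 n)⌋₊) := by
  obtain ⟨φ, hφ, -, htop⟩ := hinduced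
  have hd : dMod G S ≤ a * Efun n p := by
    rw [← ha, ← hidx]
    exact dMod_le_mul_Efun hφ htop hSstable
  have hp : p.Prime := Fact.out
  refine ⟨fun h => ⟨hd, ?_⟩, fun h => ⟨hd, ?_⟩, fun h => ⟨hd, ?_⟩, fun h => ⟨hd, ?_⟩⟩
  · exact_mod_cast Nat.mul_le_mul_left a (Efun_le_of_sqrt_le hn hp h)
  all_goals
    rw [← Nat.cast_mul, Nat.cast_le]
    apply Nat.le_floor
    rw [Nat.cast_mul]
  · refine (mul_le_mul_of_nonneg_left (Efun_le_of_le_sqrt hn h) (Nat.cast_nonneg a)).trans_eq ?_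
    ring
  · refine (mul_le_mul_of_nonneg_left (Efun_le_of_le_1260 hn hp h) (Nat.cast_nonneg a)).trans_eq ?_
    ring
  · refine (mul_le_mul_of_nonneg_left (Efun_le_of_1261_le hp h) (Nat.cast_nonneg a)).trans_eq ?_
    ring
end
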